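/- arXiv:1805.00340 — 7 statements merged into one kernel-verified Lean document; each statement's English description precedes it below -/
import Mathlib

section
/- For every integer r ≥ 3, every 3-valid pair (𝒜, ℬ) with |ℬ| = b ≥ 1 and |𝒜| = a satisfies a ≤ b·(−3 + √(8b+1))/6. -/
/-- A pair `(𝒜, ℬ)` of families, where `𝒜` consists of `r`-element subsets of `ℕ` and
`ℬ` of `(r-1)`-element subsets of `ℕ`, is `k`-valid if every `A ∈ 𝒜` has at least `k`
subsets of cardinality `r - 1` belonging to `ℬ`. -/
def ValidPair (r k : ℕ) (𝒜 ℬ : Finset (Finset ℕ)) : Prop :=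
  (∀ A ∈ 𝒜, A.card = r) ∧ (∀ B ∈ ℬ, B.card = r - 1) ∧
    ∀ A ∈ 𝒜, k ≤ (ℬ.filter (fun B => B ⊆ A)).card

/-- `f r k b` is the maximum of `|𝒜|` over all `k`-valid pairs `(𝒜, ℬ)` with `|ℬ| = b`. -/
noncomputable def f (r k b : ℕ) : ℕ :=
  sSup {a : ℕ | ∃ 𝒜 ℬ : Finset (Finset ℕ), ValidPair r k 𝒜 ℬ ∧ ℬ.card = b ∧ 𝒜.card = a}

/-!
Choose exactly `k` members of `ℬ` below each `A ∈ 𝒜` and join `B ∈ ℬ` to `A` when `B` is chosen for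
`A`. Starting at a fixed `B`, paths of length two reach `k - 1` new members of `ℬ` for each
neighbour of `B`, all distinct because two sets have at most one common lower cover. A path
`B - A - C - A'` extends to at least `k - 2` sets `B'` with `|B' \ B| = |B \ B'| = 2`, and such a
`B'` is reached at most four times, since `C` arises from `B` by swapping one element of `B \ B'`
for one of `B' \ B`. As all these sets lie in `ℬ`, this bounds the number of such paths from `B`;
summing over `B` and applying Cauchy-Schwarz to the degrees gives a quadratic inequality for `|𝒜|`.
-/

open Finset
open scoped FinsetFamily

section Exchange

variable {α : Type*} [DecidableEq α] {A A' B B' C : Finset α}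

lemma card_sdiff_le_one_of_covBy (hBA : B ⋖ A) (hCA : C ⋖ A) : #(C \ B) ≤ 1 :=
  (card_le_card (sdiff_subset_sdiff hCA.le le_rfl)).trans
    (covBy_iff_card_sdiff_eq_one.1 hBA).2.le

lemma exists_swap_of_covBy (hBA : B ⋖ A) (hCA : C ⋖ A) (hCB : C ≠ B) :
    ∃ w ∉ B, ∃ y ∈ B, A = insert w B ∧ C = (insert w B).erase y := by
  obtain ⟨w, hw, rfl⟩ := covBy_iff_exists_insert.1 hBA
  obtain ⟨y, hy, rfl⟩ := covBy_iff_exists_erase.1 hCA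
  have hyw : y ≠ w := by
    rintro rfl
    exact hCB (erase_insert hw)
  exact ⟨w, hw, y, mem_of_mem_insert_of_ne hy hyw, rfl, rfl⟩

/-- Among the lower covers of `A'`, only `C` and `A' \ (A \ B)` arise from `B` by swapping a single
element. -/
lemma card_sdiff_eq_two_of_covBy (hBA : B ⋖ A) (hCA : C ⋖ A) (hCB : C ≠ B) (hCA' : C ⋖ A')
    (hAA' : A ≠ A') (hBA' : B' ⋖ A') (hBC : B' ≠ C) (hB' : B' ≠ A' \ (A \ B)) :
    #(B' \ B) = 2 ∧ #(B \ B') = 2 := by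
  obtain ⟨w, hwB, y, hyB, rfl, rfl⟩ := exists_swap_of_covBy hBA hCA hCB
  obtain ⟨v, hvC, z, hzC, rfl, rfl⟩ := exists_swap_of_covBy hCA' hBA' hBC
  have hvy : v ≠ y := by
    rintro rfl
    exact hAA' (insert_erase (mem_insert_of_mem hyB)).symm
  have hzw : z ≠ w := by
    rintro rfl
    rw [insert_sdiff_cancel hwB, sdiff_singleton_eq_erase] at hB'
    exact hB' rfl
  have hnew : (insert v ((insert w B).erase y)).erase z \ B = {w, v} := by grind
  have hold : B \ (insert v ((insert w B).erase y)).erase z = {y, z} := by grind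
  rw [hnew, hold, card_pair (by grind), card_pair (by grind)]
  exact ⟨rfl, rfl⟩

lemma exists_swap_of_card_sdiff_eq_two (hBA : B ⋖ A) (hCA : C ⋖ A) (hCB : C ≠ B) (hCA' : C ⋖ A')
    (hBA' : B' ⋖ A') (h : #(B' \ B) = 2) :
    ∃ w ∈ B' \ B, ∃ y ∈ B \ B', C = (insert w B).erase y := by
  obtain ⟨w, -, y, hyB, rfl, rfl⟩ := exists_swap_of_covBy hBA hCA hCB
  obtain ⟨v, -, rfl⟩ := covBy_iff_exists_insert.1 hCA'
  have hsub : B' \ B ⊆ {w, v} := by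
    have := hBA'.le
    grind
  have heq : B' \ B = {w, v} := eq_of_subset_of_card_le hsub (h ▸ card_le_two)
  have hv : v ∈ B' \ B := heq ▸ mem_insert_of_mem (mem_singleton_self v)
  have hw : w ∈ B' \ B := heq ▸ mem_insert_self w _
  have hyB' : y ∉ B' := fun hy => by
    have := hBA'.le hy
    grind
  exact ⟨w, hw, y, mem_sdiff.2 ⟨hyB, hyB'⟩, rfl⟩

end Exchange

/-- `T` selects, for each `A ∈ 𝒜`, exactly `k` members of `ℬ` that arise from `A` by deleting one
element. The values of `T` outside `𝒜` are irrelevant. -/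
structure IsFacetChoice {α : Type*} (k : ℕ) (𝒜 ℬ : Finset (Finset α))
    (T : Finset α → Finset (Finset α)) : Prop where
  subset : ∀ A ∈ 𝒜, T A ⊆ ℬ
  card : ∀ A ∈ 𝒜, #(T A) = k
  covBy : ∀ A ∈ 𝒜, ∀ B ∈ T A, B ⋖ A

section Counting

variable {α : Type*} [DecidableEq α] {k : ℕ} {𝒜 ℬ : Finset (Finset α)}
  {T : Finset α → Finset (Finset α)} {B : Finset α}

lemma exists_isFacetChoice (h : ∀ A ∈ 𝒜, k ≤ #(ℬ ∩ ∂ {A})) : ∃ T, IsFacetChoice k 𝒜 ℬ T := by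
  choose! T hsub hcard using fun A hA => exists_subset_card_eq (h A hA)
  refine ⟨T, fun A hA B hB => (mem_inter.1 (hsub A hA hB)).1, hcard, fun A hA B hB => ?_⟩
  have hB : B ∈ ∂ {A} := (mem_inter.1 (hsub A hA hB)).2
  simpa only [mem_shadow_iff, mem_singleton, exists_eq_left, covBy_iff_exists_erase] using hB

/-- The neighbours of `B` in the bipartite graph on `ℬ` and `𝒜` given by the facet choice `T`. -/
def cofaces (𝒜 : Finset (Finset α)) (T : Finset α → Finset (Finset α)) (B : Finset α) :
    Finset (Finset α) :=
  {A ∈ 𝒜 | B ∈ T A}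

/-- The paths `A - C - A'` of length two with midpoint `C ∈ ℬ` in the bipartite graph given by the
facet choice `T`, encoded as `⟨C, (A, A')⟩`. -/
def midPaths (𝒜 ℬ : Finset (Finset α)) (T : Finset α → Finset (Finset α)) :
    Finset (Σ _ : Finset α, Finset α × Finset α) :=
  ℬ.sigma fun C => (cofaces 𝒜 T C).offDiag

/-- The paths `B - A - C - A'` of length three starting at `B` in the bipartite graph given by the
facet choice `T`, encoded as `⟨C, (A, A')⟩`. -/
def pathsFrom (𝒜 ℬ : Finset (Finset α)) (T : Finset α → Finset (Finset α)) (B : Finset α) :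
    Finset (Σ _ : Finset α, Finset α × Finset α) :=
  {p ∈ midPaths 𝒜 ℬ T | B ∈ (T p.2.1).erase p.1}

/-- The members of `ℬ` obtained from `B` by exchanging two elements, i.e. those at distance two
from `B` in the Johnson graph. -/
def twoSwaps (ℬ : Finset (Finset α)) (B : Finset α) : Finset (Finset α) :=
  {B' ∈ ℬ | #(B' \ B) = 2 ∧ #(B \ B') = 2}

/-- The members of `ℬ` other than `B` that are chosen for some `A` for which `B` is also chosen. -/
def siblings (𝒜 : Finset (Finset α)) (T : Finset α → Finset (Finset α)) (B : Finset α) :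
    Finset (Finset α) :=
  (cofaces 𝒜 T B).biUnion fun A => (T A).erase B

lemma mem_cofaces {A : Finset α} : A ∈ cofaces 𝒜 T B ↔ A ∈ 𝒜 ∧ B ∈ T A := mem_filter

lemma mem_midPaths {A A' C : Finset α} :
    ⟨C, (A, A')⟩ ∈ midPaths 𝒜 ℬ T ↔
      C ∈ ℬ ∧ (A ∈ 𝒜 ∧ C ∈ T A) ∧ (A' ∈ 𝒜 ∧ C ∈ T A') ∧ A ≠ A' := by
  simp only [midPaths, mem_sigma, mem_offDiag, mem_cofaces]

lemma mem_pathsFrom {A A' C : Finset α} :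
    ⟨C, (A, A')⟩ ∈ pathsFrom 𝒜 ℬ T B ↔ ⟨C, (A, A')⟩ ∈ midPaths 𝒜 ℬ T ∧ B ≠ C ∧ B ∈ T A := by
  simp only [pathsFrom, mem_filter, mem_erase]

namespace IsFacetChoice

variable (hT : IsFacetChoice k 𝒜 ℬ T)
include hT

lemma sum_card_cofaces : ∑ B ∈ ℬ, #(cofaces 𝒜 T B) = #𝒜 * k := by
  have hdouble := sum_card_bipartiteAbove_eq_sum_card_bipartiteBelow (s := ℬ) (t := 𝒜)
    fun B A => B ∈ T A
  refine hdouble.trans (sum_const_nat fun A hA => ?_)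
  rw [bipartiteBelow, filter_mem_eq_inter, inter_eq_right.2 (hT.subset A hA), hT.card A hA]

lemma sum_card_pathsFrom : ∑ B ∈ ℬ, #(pathsFrom 𝒜 ℬ T B) = #(midPaths 𝒜 ℬ T) * (k - 1) := by
  have hdouble := sum_card_bipartiteAbove_eq_sum_card_bipartiteBelow (s := ℬ)
    (t := midPaths 𝒜 ℬ T) fun B p => B ∈ (T p.2.1).erase p.1
  refine hdouble.trans (sum_const_nat fun ⟨C, A, A'⟩ hp => ?_)
  obtain ⟨-, ⟨hA, hCA⟩, -, -⟩ := mem_midPaths.1 hp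
  rw [bipartiteBelow, filter_mem_eq_inter,
    inter_eq_right.2 ((erase_subset _ _).trans (hT.subset A hA)), card_erase_of_mem hCA,
    hT.card A hA]

lemma sq_card_mul_le : (#𝒜 * k) ^ 2 ≤ #ℬ * (#(midPaths 𝒜 ℬ T) + #𝒜 * k) := by
  have hsq : ∑ B ∈ ℬ, #(cofaces 𝒜 T B) ^ 2 = #(midPaths 𝒜 ℬ T) + #𝒜 * k := by
    rw [midPaths, card_sigma, ← hT.sum_card_cofaces, ← sum_add_distrib]
    refine sum_congr rfl fun B _ => ?_
    rw [offDiag_card, Nat.sub_add_cancel (Nat.le_mul_self _), sq]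
  rw [← hsq, ← hT.sum_card_cofaces]
  exact sq_sum_le_card_mul_sum_sq

lemma card_siblings : #(siblings 𝒜 T B) = #(cofaces 𝒜 T B) * (k - 1) := by
  rw [siblings, card_biUnion]
  · refine sum_const_nat fun A hA => ?_
    obtain ⟨hA, hBA⟩ := mem_cofaces.1 hA
    rw [card_erase_of_mem hBA, hT.card A hA]
  · intro A hA A' hA' hne
    obtain ⟨hA, hBA⟩ := mem_cofaces.1 hA
    obtain ⟨hA', hBA'⟩ := mem_cofaces.1 hA'
    refine disjoint_left.2 fun X hX hX' => ?_
    obtain ⟨hXB, hXA⟩ := mem_erase.1 hX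
    have hX_eq : A ⊓ A' = X :=
      (hT.covBy A hA X hXA).wcovBy.inf_eq (hT.covBy A' hA' X (mem_of_mem_erase hX')).wcovBy hne
    have hB_eq : A ⊓ A' = B :=
      (hT.covBy A hA B hBA).wcovBy.inf_eq (hT.covBy A' hA' B hBA').wcovBy hne
    exact hXB (hX_eq.symm.trans hB_eq)

lemma siblings_subset : siblings 𝒜 T B ⊆ ℬ :=
  biUnion_subset.2 fun A hA => (erase_subset _ _).trans (hT.subset A (mem_cofaces.1 hA).1)

lemma disjoint_siblings_twoSwaps : Disjoint (siblings 𝒜 T B) (twoSwaps ℬ B) := by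
  refine disjoint_left.2 fun X hX hX2 => ?_
  obtain ⟨A, hA, hXA⟩ := mem_biUnion.1 hX
  obtain ⟨hA, hBA⟩ := mem_cofaces.1 hA
  have hle : #(X \ B) ≤ 1 :=
    card_sdiff_le_one_of_covBy (hT.covBy A hA B hBA) (hT.covBy A hA X (mem_of_mem_erase hXA))
  have htwo : #(X \ B) = 2 := (mem_filter.1 hX2).2.1
  omega

lemma card_siblings_add_card_twoSwaps_lt (hB : B ∈ ℬ) :
    #(cofaces 𝒜 T B) * (k - 1) + #(twoSwaps ℬ B) < #ℬ := by
  rw [← hT.card_siblings, ← card_union_of_disjoint hT.disjoint_siblings_twoSwaps]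
  refine card_lt_card ((ssubset_iff_of_subset ?_).2 ⟨B, hB, ?_⟩)
  · exact union_subset hT.siblings_subset (filter_subset _ _)
  · simp [siblings, twoSwaps]

lemma le_card_filter_twoSwaps {A A' C : Finset α} (hp : ⟨C, (A, A')⟩ ∈ pathsFrom 𝒜 ℬ T B) :
    k - 2 ≤ #{B' ∈ twoSwaps ℬ B | B' ∈ T A'} := by
  obtain ⟨hp, hBC, hBA⟩ := mem_pathsFrom.1 hp
  obtain ⟨-, ⟨hA, hCA⟩, ⟨hA', hCA'⟩, hne⟩ := mem_midPaths.1 hp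
  calc k - 2 ≤ #(T A') - #{C, A' \ (A \ B)} := by
        rw [hT.card A' hA']
        exact Nat.sub_le_sub_left card_le_two k
    _ ≤ #(T A' \ {C, A' \ (A \ B)}) := le_card_sdiff _ _
    _ ≤ #{B' ∈ twoSwaps ℬ B | B' ∈ T A'} := card_le_card fun B' hB' => by
        simp only [mem_sdiff, mem_insert, mem_singleton, not_or] at hB'
        obtain ⟨hBA', hB'C, hB'⟩ := hB'
        exact mem_filter.2 ⟨mem_filter.2 ⟨hT.subset A' hA' hBA',
          card_sdiff_eq_two_of_covBy (hT.covBy A hA B hBA) (hT.covBy A hA C hCA) hBC.symm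
            (hT.covBy A' hA' C hCA') hne (hT.covBy A' hA' B' hBA') hB'C hB'⟩, hBA'⟩

/-- The midpoint `C` determines the path, because `A = B ∪ C` and `A' = C ∪ B'`. -/
lemma card_pathsFrom_le_four {B' : Finset α} (hB' : B' ∈ twoSwaps ℬ B) :
    #{p ∈ pathsFrom 𝒜 ℬ T B | B' ∈ T p.2.2} ≤ 4 := by
  obtain ⟨-, hnew, hold⟩ := mem_filter.1 hB'
  let path (wy : α × α) : Σ _ : Finset α, Finset α × Finset α :=
    let C := (insert wy.1 B).erase wy.2
    ⟨C, (B ∪ C, C ∪ B')⟩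
  have hsub : {p ∈ pathsFrom 𝒜 ℬ T B | B' ∈ T p.2.2} ⊆ ((B' \ B) ×ˢ (B \ B')).image path := by
    rintro ⟨C, A, A'⟩ hp
    obtain ⟨hp, hBA'⟩ := mem_filter.1 hp
    obtain ⟨hp, hBC, hBA⟩ := mem_pathsFrom.1 hp
    obtain ⟨-, ⟨hA, hCA⟩, ⟨hA', hCA'⟩, -⟩ := mem_midPaths.1 hp
    replace hBA := hT.covBy A hA B hBA
    replace hCA := hT.covBy A hA C hCA
    replace hCA' := hT.covBy A' hA' C hCA'
    replace hBA' := hT.covBy A' hA' B' hBA'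
    obtain ⟨w, hw, y, hy, hC⟩ := exists_swap_of_card_sdiff_eq_two hBA hCA hBC.symm hCA' hBA' hnew
    have hCB' : C ≠ B' := by
      rintro rfl
      have hle := card_sdiff_le_one_of_covBy hBA hCA
      omega
    have hA_eq : B ∪ C = A := hBA.wcovBy.sup_eq hCA.wcovBy hBC
    have hA'_eq : C ∪ B' = A' := hCA'.wcovBy.sup_eq hBA'.wcovBy hCB'
    exact mem_image.2 ⟨(w, y), mem_product.2 ⟨hw, hy⟩, by simp only [path, ← hC, hA_eq, hA'_eq]⟩
  calc #{p ∈ pathsFrom 𝒜 ℬ T B | B' ∈ T p.2.2}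
      ≤ #((B' \ B) ×ˢ (B \ B')) := (card_le_card hsub).trans card_image_le
    _ = 4 := by rw [card_product, hnew, hold]

lemma card_pathsFrom_mul_le : #(pathsFrom 𝒜 ℬ T B) * (k - 2) ≤ #(twoSwaps ℬ B) * 4 :=
  card_mul_le_card_mul (fun (p : Σ _ : Finset α, Finset α × Finset α) B' => B' ∈ T p.2.2)
    (fun _ hp => hT.le_card_filter_twoSwaps hp) fun _ hB' => hT.card_pathsFrom_le_four hB'

lemma card_add_card_midPaths_le :
    4 * #ℬ + 4 * (#𝒜 * k) * (k - 1) + #(midPaths 𝒜 ℬ T) * (k - 1) * (k - 2) ≤ 4 * #ℬ ^ 2 := by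
  have hlocal : ∀ B ∈ ℬ,
      4 + 4 * (#(cofaces 𝒜 T B) * (k - 1)) + #(pathsFrom 𝒜 ℬ T B) * (k - 2) ≤ 4 * #ℬ := by
    intro B hB
    have hlt := hT.card_siblings_add_card_twoSwaps_lt hB
    have hpaths := hT.card_pathsFrom_mul_le (B := B)
    omega
  have hsum := sum_le_sum hlocal
  simp only [sum_add_distrib, ← mul_sum, ← sum_mul, sum_const, smul_eq_mul, hT.sum_card_cofaces,
    hT.sum_card_pathsFrom] at hsum
  linarith

omit [DecidableEq α] in
lemma quadratic_card_le (hk : 2 ≤ k) :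
    (k * #𝒜 : ℝ) ^ 2 * ((k - 1) * (k - 2)) - k * #𝒜 * #ℬ * ((k - 1) * (k - 6)) + 4 * #ℬ ^ 2 ≤
      4 * (#ℬ : ℝ) ^ 3 := by
  classical
  obtain ⟨m, rfl⟩ := Nat.exists_eq_add_of_le' hk
  have hcount := hT.card_add_card_midPaths_le
  have hcs := hT.sq_card_mul_le
  simp only [Nat.add_sub_cancel, Nat.reduceSubDiff] at hcount
  rify at hcount hcs
  push_cast
  linear_combination (#ℬ : ℝ) * hcount + (m + 1 : ℝ) * m * hcs

end IsFacetChoice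

end Counting

theorem stmt_6_general {α : Type*} [DecidableEq α] {k : ℕ} (hk : 3 ≤ k)
    {𝒜 ℬ : Finset (Finset α)} (h : ∀ A ∈ 𝒜, k ≤ #(ℬ ∩ ∂ {A})) :
    (#𝒜 : ℝ) ≤ #ℬ * ((k - 1) * (k - 6) +
      √(((k - 1) * (k - 6)) ^ 2 + 16 * ((k - 1) * (k - 2)) * (#ℬ - 1))) /
        (2 * k * ((k - 1) * (k - 2))) := by
  obtain ⟨T, hT⟩ := exists_isFacetChoice h
  have hquad := hT.quadratic_card_le (by omega)
  have hk' : (3 : ℝ) ≤ k := mod_cast hk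
  have hpos : 0 < ((k : ℝ) - 1) * (k - 2) := mul_pos (by linarith) (by linarith)
  set p : ℝ := (k - 1) * (k - 6)
  set q : ℝ := (k - 1) * (k - 2)
  have hroot : 2 * k * q * #𝒜 - #ℬ * p ≤ #ℬ * √(p ^ 2 + 16 * q * (#ℬ - 1)) := by
    have hmul (x : ℝ) : #ℬ * √x = √((#ℬ : ℝ) ^ 2 * x) := by
      rw [Real.sqrt_mul (sq_nonneg _), Real.sqrt_sq (Nat.cast_nonneg _)]
    rw [hmul]
    apply Real.le_sqrt_of_sq_le
    linear_combination 4 * q * hquad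
  rw [le_div_iff₀ (by positivity)]
  linear_combination hroot

lemma ValidPair.le_card_inter_shadow {r k : ℕ} (hr : 1 ≤ r) {𝒜 ℬ : Finset (Finset ℕ)}
    (h : ValidPair r k 𝒜 ℬ) : ∀ A ∈ 𝒜, k ≤ #(ℬ ∩ ∂ {A}) := by
  obtain ⟨h𝒜, hℬ, hk⟩ := h
  refine fun A hA => (hk A hA).trans (card_le_card fun B hB => ?_)
  obtain ⟨hB, hBA⟩ := mem_filter.1 hB
  have hcard : #(A \ B) = 1 := by
    rw [card_sdiff_of_subset hBA, h𝒜 A hA, hℬ B hB]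
    omega
  exact mem_inter.2 ⟨hB, mem_shadow_iff_exists_sdiff.2 ⟨A, mem_singleton_self A, hBA, hcard⟩⟩

theorem stmt_6 (r : ℕ) (hr : 3 ≤ r) (𝒜 ℬ : Finset (Finset ℕ))
    (hvalid : ValidPair r 3 𝒜 ℬ) (hb : 1 ≤ ℬ.card) :
    (𝒜.card : ℝ) ≤ (ℬ.card : ℝ) * (-3 + Real.sqrt (8 * ℬ.card + 1)) / 6 := by
  have hgeneral := stmt_6_general le_rfl (hvalid.le_card_inter_shadow (by omega))
  have hdisc : (((3 : ℕ) - 1) * ((3 : ℕ) - 6) : ℝ) ^ 2 +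
      16 * (((3 : ℕ) - 1) * ((3 : ℕ) - 2)) * (#ℬ - 1) = 2 ^ 2 * (8 * #ℬ + 1) := by
    push_cast
    ring
  rw [hdisc, Real.sqrt_mul (by norm_num), Real.sqrt_sq (by norm_num)] at hgeneral
  push_cast at hgeneral
  linear_combination hgeneral
end

section
/- Let x ≥ 2 be a real number such that x(x−1)/2 is an integer. Then for every integer r ≥ 3, every 3-valid pair (𝒜, ℬ) with |ℬ| = x(x−1)/2 satisfies |𝒜| ≤ x(x−1)(x−2)/6. (This is the weak Bollobás–Eccles conjecture f(r,3,C(x,2)) ≤ C(x,3) for real x.) -/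
/-!
Choose three marked facets in `ℬ` of every `A ∈ 𝒜`, and count ordered pairs of members of `ℬ` by
their distance in the Johnson graph (the number of elements to exchange). There are `|ℬ|` pairs at
distance zero. Two facets of `A` are at distance one and their union is `A`, so at least `6 |𝒜|`
pairs are at distance one. If `C` is marked in both `A₁ ≠ A₂`, then at least two of the four pairs
formed by a further marked facet of `A₁` and one of `A₂` are at distance two, with `C` halfway
between; as at most four sets lie halfway between two given ones, this bounds the pairs at distance
two from below in terms of the degrees `d C = |{A ∈ 𝒜 | C is marked in A}|`. The degrees add up to
`3 |𝒜|`, so by Cauchy–Schwarz their average `y` satisfies `(y + 1) (y + 2) ≤ 2 |ℬ| = x (x - 1)`,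
that is, `y ≤ x - 2`.
-/

namespace BollobasEccles

open Finset
open scoped FinsetFamily

section Counting

variable {ι κ γ : Type*} [DecidableEq γ]

lemma card_mul_le_card_of_le_card_fiber {s : Finset ι} {t : Finset γ} {g : ι → γ} {n : ℕ}
    (h : ∀ c ∈ t, n ≤ #{i ∈ s | g i = c}) : #t * n ≤ #s :=
  calc
    #t * n ≤ ∑ c ∈ t, #{i ∈ s | g i = c} := card_nsmul_le_sum t _ n h
    _ = #{i ∈ s | g i ∈ t} := sum_card_fiberwise_eq_card_filter s t g
    _ ≤ #s := card_filter_le _ _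

lemma card_mul_card_sub_one_le_card_filter_ne (s : Finset ι) {t : Finset κ} (u : ι → γ)
    {v : κ → γ} (hv : Set.InjOn v t) :
    #s * (#t - 1) ≤ #{p ∈ s ×ˢ t | u p.1 ≠ v p.2} := by
  have fiber (i : ι) : #t - 1 ≤ #{j ∈ t | u i ≠ v j} := by
    have : #{j ∈ t | u i = v j} ≤ 1 := by
      simp only [card_le_one, mem_filter]
      rintro j ⟨hj, hij⟩ j' ⟨hj', hij'⟩
      exact hv hj hj' (hij.symm.trans hij')
    have split : #{j ∈ t | u i = v j} + #{j ∈ t | u i ≠ v j} = #t :=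
      card_filter_add_card_filter_not _
    omega
  calc
    #s * (#t - 1) ≤ ∑ i ∈ s, #{j ∈ t | u i ≠ v j} := card_nsmul_le_sum s _ _ fun i _ ↦ fiber i
    _ = #{p ∈ s ×ˢ t | u p.1 ≠ v p.2} := by simp only [card_filter, sum_product]

end Counting

variable {α : Type*} [DecidableEq α] {A A₁ A₂ B C E : Finset α} {𝒜 ℬ : Finset (Finset α)}
  {M : Finset α → Finset (Finset α)} {k m n : ℕ}

/-- `B` and `C` are at distance `n` in a Johnson graph: `C` arises from `B` by exchanging exactly
`n` elements. -/
abbrev IsJohnsonDist (n : ℕ) (B C : Finset α) : Prop :=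
  #(B \ C) = n ∧ #(C \ B) = n

lemma sdiff_eq_union_of_card_add_card_le (h : #(B \ C) + #(C \ E) ≤ #(B \ E)) :
    B \ E = B \ C ∪ C \ E := by
  have triangle : B \ E ⊆ B \ C ∪ C \ E := by grind
  exact eq_of_subset_of_card_le triangle ((card_union_le _ _).trans h)

-- A set `C` between `B` and `E` is determined by `B \ C ⊆ B \ E` and `C \ B ⊆ E \ B`.
lemma card_between_le (hBE : IsJohnsonDist (m + n) B E)
    (h : ∀ C ∈ ℬ, IsJohnsonDist m B C ∧ IsJohnsonDist n C E) :
    #ℬ ≤ (m + n).choose m ^ 2 := by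
  have maps : ∀ C ∈ ℬ, (B \ C, C \ B) ∈ powersetCard m (B \ E) ×ˢ powersetCard m (E \ B) := by
    intro C hC
    obtain ⟨⟨hBC, hCB⟩, hCE, hEC⟩ := h C hC
    have hout : B \ E = B \ C ∪ C \ E := sdiff_eq_union_of_card_add_card_le (by omega)
    have hin : E \ B = E \ C ∪ C \ B := sdiff_eq_union_of_card_add_card_le (by omega)
    simp only [mem_product, mem_powersetCard]
    exact ⟨⟨hout ▸ subset_union_left, hBC⟩, hin ▸ subset_union_right, hCB⟩
  have inj : Set.InjOn (fun C ↦ (B \ C, C \ B)) ℬ := by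
    intro C _ C' _ heq
    obtain ⟨h₁, h₂⟩ := Prod.mk.inj heq
    have recover (C : Finset α) : B \ (B \ C) ∪ C \ B = C := by
      rw [sdiff_sdiff_self_left, inter_comm, union_comm, sdiff_union_inter]
    rw [← recover C, h₁, h₂, recover C']
  calc
    #ℬ ≤ #(powersetCard m (B \ E) ×ˢ powersetCard m (E \ B)) := card_le_card_of_injOn _ maps inj
    _ = (m + n).choose m ^ 2 := by
      rw [card_product, card_powersetCard, card_powersetCard, hBE.1, hBE.2, sq]

lemma card_sdiff_eq_add_of_inter_subset (h : B ∩ E ⊆ C) :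
    #(B \ E) = #(B \ C) + #((B ∩ C) \ (E ∩ C)) := by
  rw [← card_union_of_disjoint (by grind [disjoint_left])]
  congr 1
  grind

lemma isJohnsonDist_one_of_covBy (hB : B ⋖ A) (hC : C ⋖ A) (hBC : B ≠ C) :
    IsJohnsonDist 1 B C := by
  have hA : B ∪ C = A := hB.wcovBy.sup_eq hC.wcovBy hBC
  constructor
  · rw [← union_sdiff_right, hA, (covBy_iff_card_sdiff_eq_one.1 hC).2]
  · rw [← union_sdiff_left, hA, (covBy_iff_card_sdiff_eq_one.1 hB).2]

lemma inter_covBy_of_covBy (hB : B ⋖ A) (hC : C ⋖ A) (hBC : B ≠ C) : B ∩ C ⋖ C := by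
  rw [← hB.wcovBy.sup_eq hC.wcovBy hBC] at hB
  exact inf_covBy_of_covBy_sup_left hB

lemma injOn_inter_of_covBy (hC : C ⋖ A) : Set.InjOn (· ∩ C) {B | B ⋖ A ∧ B ≠ C} := by
  rintro B ⟨hB, hBC⟩ E ⟨hE, hEC⟩ h
  exact eq_of_inf_eq_sup_eq h
    ((hB.wcovBy.sup_eq hC.wcovBy hBC).trans (hE.wcovBy.sup_eq hC.wcovBy hEC).symm)

lemma isJohnsonDist_two_of_covBy (hBA : B ⋖ A₁) (hCA₁ : C ⋖ A₁) (hCA₂ : C ⋖ A₂) (hEA : E ⋖ A₂)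
    (hA : A₁ ≠ A₂) (hBC : B ≠ C) (hEC : E ≠ C) (hne : B ∩ C ≠ E ∩ C) : IsJohnsonDist 2 B E := by
  have hinter : A₁ ∩ A₂ = C := hCA₁.wcovBy.inf_eq hCA₂.wcovBy hA
  have hBE : B ∩ E ⊆ C := hinter ▸ inter_subset_inter hBA.le hEA.le
  have htraces : IsJohnsonDist 1 (B ∩ C) (E ∩ C) :=
    isJohnsonDist_one_of_covBy (inter_covBy_of_covBy hBA hCA₁ hBC)
      (inter_covBy_of_covBy hEA hCA₂ hEC) hne
  constructor
  · rw [card_sdiff_eq_add_of_inter_subset hBE, htraces.1,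
      (isJohnsonDist_one_of_covBy hBA hCA₁ hBC).1]
  · rw [card_sdiff_eq_add_of_inter_subset (inter_comm B E ▸ hBE), htraces.2,
      (isJohnsonDist_one_of_covBy hEA hCA₂ hEC).1]

/-- The ordered pairs of members of `ℬ` at distance `n` in a Johnson graph. -/
def johnsonPairs (ℬ : Finset (Finset α)) (n : ℕ) : Finset (Finset α × Finset α) :=
  {p ∈ ℬ ×ˢ ℬ | IsJohnsonDist n p.1 p.2}

lemma mem_johnsonPairs {p : Finset α × Finset α} :
    p ∈ johnsonPairs ℬ n ↔ (p.1 ∈ ℬ ∧ p.2 ∈ ℬ) ∧ IsJohnsonDist n p.1 p.2 := by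
  rw [johnsonPairs, mem_filter, mem_product]

lemma johnsonPairs_zero : johnsonPairs ℬ 0 = ℬ.diag := by
  ext ⟨B, C⟩
  simp only [mem_johnsonPairs, mem_diag, IsJohnsonDist, card_eq_zero, sdiff_eq_empty_iff_subset]
  grind

lemma sum_card_johnsonPairs_le (ℬ : Finset (Finset α)) (n : ℕ) :
    ∑ i ∈ range n, #(johnsonPairs ℬ i) ≤ #ℬ ^ 2 := by
  have disjoint : (range n : Set ℕ).PairwiseDisjoint (johnsonPairs ℬ) := by
    intro i _ j _ hij
    refine disjoint_left.2 fun p hi hj ↦ hij ?_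
    exact (mem_johnsonPairs.1 hi).2.1.symm.trans (mem_johnsonPairs.1 hj).2.1
  calc
    ∑ i ∈ range n, #(johnsonPairs ℬ i) = #((range n).biUnion (johnsonPairs ℬ)) :=
      (card_biUnion disjoint).symm
    _ ≤ #(ℬ ×ˢ ℬ) := card_le_card (biUnion_subset.2 fun _ _ ↦ filter_subset _ _)
    _ = #ℬ ^ 2 := by rw [card_product, sq]

/-- `M` marks, for every `A ∈ 𝒜`, exactly `k` facets (subsets with one element less) of `A` that
belong to `ℬ`. -/
structure IsFacetMarking (k : ℕ) (𝒜 ℬ : Finset (Finset α)) (M : Finset α → Finset (Finset α)) :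
    Prop where
  subset : ∀ A ∈ 𝒜, M A ⊆ ℬ
  covBy : ∀ A ∈ 𝒜, ∀ B ∈ M A, B ⋖ A
  card_eq : ∀ A ∈ 𝒜, #(M A) = k

lemma exists_isFacetMarking (h : ∀ A ∈ 𝒜, k ≤ #(ℬ ∩ ∂ {A})) : ∃ M, IsFacetMarking k 𝒜 ℬ M := by
  choose! M hM hcard using fun A hA ↦ exists_subset_card_eq (h A hA)
  refine ⟨M, fun A hA ↦ (hM A hA).trans inter_subset_left, fun A hA B hB ↦ ?_, hcard⟩
  simpa [mem_shadow_iff, covBy_iff_exists_erase] using (mem_inter.1 (hM A hA hB)).2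

/-- The members of `𝒜` in which `C` is marked. -/
def star (𝒜 : Finset (Finset α)) (M : Finset α → Finset (Finset α)) (C : Finset α) :
    Finset (Finset α) :=
  {A ∈ 𝒜 | C ∈ M A}

/-- The ordered pairs at distance two in `ℬ` that have `C` halfway between them. -/
def pairsAround (ℬ : Finset (Finset α)) (C : Finset α) : Finset (Finset α × Finset α) :=
  {p ∈ johnsonPairs ℬ 2 | IsJohnsonDist 1 p.1 C ∧ IsJohnsonDist 1 C p.2}

lemma sum_card_pairsAround_le (ℬ : Finset (Finset α)) :
    ∑ C ∈ ℬ, #(pairsAround ℬ C) ≤ 4 * #(johnsonPairs ℬ 2) :=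
  calc
    ∑ C ∈ ℬ, #(pairsAround ℬ C) =
        ∑ p ∈ johnsonPairs ℬ 2, #{C ∈ ℬ | IsJohnsonDist 1 p.1 C ∧ IsJohnsonDist 1 C p.2} := by
      simp only [pairsAround, card_filter]
      exact sum_comm
    _ ≤ #(johnsonPairs ℬ 2) * 4 := sum_le_card_nsmul _ _ _ fun p hp ↦ by
      have hdist : IsJohnsonDist (1 + 1) p.1 p.2 := (mem_johnsonPairs.1 hp).2
      simpa using card_between_le hdist fun C hC ↦ (mem_filter.1 hC).2
    _ = 4 * #(johnsonPairs ℬ 2) := mul_comm _ _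

namespace IsFacetMarking

lemma sum_card_star (h : IsFacetMarking k 𝒜 ℬ M) : ∑ C ∈ ℬ, #(star 𝒜 M C) = k * #𝒜 :=
  calc
    ∑ C ∈ ℬ, #(star 𝒜 M C) = ∑ A ∈ 𝒜, #{C ∈ ℬ | C ∈ M A} :=
      (sum_card_bipartiteAbove_eq_sum_card_bipartiteBelow fun A C ↦ C ∈ M A).symm
    _ = ∑ _ ∈ 𝒜, k := sum_congr rfl fun A hA ↦ by
      rw [filter_mem_eq_inter, inter_eq_right.2 (h.subset A hA), h.card_eq A hA]
    _ = k * #𝒜 := by rw [sum_const, smul_eq_mul, mul_comm]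

lemma card_mul_le_card_johnsonPairs_one (h : IsFacetMarking k 𝒜 ℬ M) :
    #𝒜 * (k * (k - 1)) ≤ #(johnsonPairs ℬ 1) := by
  refine card_mul_le_card_of_le_card_fiber (g := fun p ↦ p.1 ∪ p.2) fun A hA ↦ ?_
  have hcard : #(M A).offDiag = k * (k - 1) := by
    rw [offDiag_card, h.card_eq A hA, Nat.mul_sub_one]
  rw [← hcard]
  refine card_le_card fun p hp ↦ ?_
  obtain ⟨hB, hC, hne⟩ := mem_offDiag.1 hp
  have hBA := h.covBy A hA _ hB
  have hCA := h.covBy A hA _ hC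
  exact mem_filter.2 ⟨mem_johnsonPairs.2 ⟨⟨h.subset A hA hB, h.subset A hA hC⟩,
    isJohnsonDist_one_of_covBy hBA hCA hne⟩, hBA.wcovBy.sup_eq hCA.wcovBy hne⟩

lemma mul_le_card_pairsAround_fiber (h : IsFacetMarking k 𝒜 ℬ M) (hA₁ : A₁ ∈ 𝒜) (hA₂ : A₂ ∈ 𝒜)
    (hA : A₁ ≠ A₂) (hC₁ : C ∈ M A₁) (hC₂ : C ∈ M A₂) :
    (k - 1) * (k - 2) ≤ #{p ∈ pairsAround ℬ C | (p.1 ∪ C, p.2 ∪ C) = (A₁, A₂)} := by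
  have hcard {A : Finset α} (hA : A ∈ 𝒜) (hC : C ∈ M A) : #((M A).erase C) = k - 1 := by
    rw [card_erase_of_mem hC, h.card_eq A hA]
  have hCA₁ := h.covBy A₁ hA₁ C hC₁
  have hCA₂ := h.covBy A₂ hA₂ C hC₂
  have hinj : Set.InjOn (fun E ↦ E ∩ C) ((M A₂).erase C : Finset (Finset α)) := by
    refine (injOn_inter_of_covBy hCA₂).mono fun E hE ↦ ?_
    obtain ⟨hEC, hE⟩ := mem_erase.1 (mem_coe.1 hE)
    exact ⟨h.covBy A₂ hA₂ E hE, hEC⟩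
  calc
    (k - 1) * (k - 2) = #((M A₁).erase C) * (#((M A₂).erase C) - 1) := by
      rw [hcard hA₁ hC₁, hcard hA₂ hC₂, Nat.sub_sub]
    _ ≤ #{p ∈ (M A₁).erase C ×ˢ (M A₂).erase C | p.1 ∩ C ≠ p.2 ∩ C} :=
      card_mul_card_sub_one_le_card_filter_ne _ (fun B ↦ B ∩ C) hinj
    _ ≤ _ := card_le_card fun ⟨B, E⟩ hp ↦ by
      simp only [mem_filter, mem_product, mem_erase] at hp
      obtain ⟨⟨⟨hBC, hB⟩, hEC, hE⟩, hne⟩ := hp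
      have hBA := h.covBy A₁ hA₁ B hB
      have hEA := h.covBy A₂ hA₂ E hE
      simp only [pairsAround, mem_filter, mem_johnsonPairs, Prod.mk.injEq]
      exact ⟨⟨⟨⟨h.subset A₁ hA₁ hB, h.subset A₂ hA₂ hE⟩,
        isJohnsonDist_two_of_covBy hBA hCA₁ hCA₂ hEA hA hBC hEC hne⟩,
        isJohnsonDist_one_of_covBy hBA hCA₁ hBC, isJohnsonDist_one_of_covBy hCA₂ hEA hEC.symm⟩,
        hBA.wcovBy.sup_eq hCA₁.wcovBy hBC, hEA.wcovBy.sup_eq hCA₂.wcovBy hEC⟩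

lemma card_offDiag_star_mul_le_card_pairsAround (h : IsFacetMarking k 𝒜 ℬ M) (C : Finset α) :
    #(star 𝒜 M C).offDiag * ((k - 1) * (k - 2)) ≤ #(pairsAround ℬ C) := by
  refine card_mul_le_card_of_le_card_fiber (g := fun p ↦ (p.1 ∪ C, p.2 ∪ C)) ?_
  rintro ⟨A₁, A₂⟩ hA
  simp only [mem_offDiag, star, mem_filter] at hA
  obtain ⟨⟨hA₁, hC₁⟩, ⟨hA₂, hC₂⟩, hne⟩ := hA
  exact h.mul_le_card_pairsAround_fiber hA₁ hA₂ hne hC₁ hC₂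

lemma sum_card_offDiag_star_mul_le (h : IsFacetMarking k 𝒜 ℬ M) :
    (∑ C ∈ ℬ, #(star 𝒜 M C).offDiag) * ((k - 1) * (k - 2)) ≤ 4 * #(johnsonPairs ℬ 2) :=
  calc
    _ = ∑ C ∈ ℬ, #(star 𝒜 M C).offDiag * ((k - 1) * (k - 2)) := sum_mul _ _ _
    _ ≤ ∑ C ∈ ℬ, #(pairsAround ℬ C) :=
      sum_le_sum fun C _ ↦ h.card_offDiag_star_mul_le_card_pairsAround C
    _ ≤ 4 * #(johnsonPairs ℬ 2) := sum_card_pairsAround_le ℬ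

lemma sum_card_offDiag_star_add (h : IsFacetMarking k 𝒜 ℬ M) :
    ∑ C ∈ ℬ, #(star 𝒜 M C).offDiag + k * #𝒜 = ∑ C ∈ ℬ, #(star 𝒜 M C) ^ 2 := by
  rw [← h.sum_card_star, ← sum_add_distrib]
  refine sum_congr rfl fun C _ ↦ ?_
  rw [offDiag_card, sq, Nat.sub_add_cancel (Nat.le_mul_self _)]

omit [DecidableEq α] in
-- With `y = 3 |𝒜| / |ℬ|` the average degree, this reads `(y + 1) (y + 2) ≤ 2 |ℬ|`.
lemma mul_le_two_mul_card_pow_three (h : IsFacetMarking 3 𝒜 ℬ M) :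
    (3 * #𝒜 + #ℬ) * (3 * #𝒜 + 2 * #ℬ) ≤ 2 * #ℬ ^ 3 := by
  classical
  have htotal := sum_card_johnsonPairs_le ℬ 3
  simp only [sum_range_succ, sum_range_zero, johnsonPairs_zero, diag_card, zero_add] at htotal
  have hone := h.card_mul_le_card_johnsonPairs_one
  have htwo := h.sum_card_offDiag_star_mul_le
  have hsq := h.sum_card_offDiag_star_add
  have hcauchy : (3 * #𝒜) ^ 2 ≤ #ℬ * ∑ C ∈ ℬ, #(star 𝒜 M C) ^ 2 :=
    h.sum_card_star ▸ sq_sum_le_card_mul_sum_sq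
  have hquad : 2 * #ℬ + 9 * #𝒜 + ∑ C ∈ ℬ, #(star 𝒜 M C) ^ 2 ≤ 2 * #ℬ ^ 2 := by omega
  calc
    (3 * #𝒜 + #ℬ) * (3 * #𝒜 + 2 * #ℬ) = #ℬ * (2 * #ℬ + 9 * #𝒜) + (3 * #𝒜) ^ 2 := by ring
    _ ≤ #ℬ * (2 * #ℬ + 9 * #𝒜) + #ℬ * ∑ C ∈ ℬ, #(star 𝒜 M C) ^ 2 := by gcongr
    _ = #ℬ * (2 * #ℬ + 9 * #𝒜 + ∑ C ∈ ℬ, #(star 𝒜 M C) ^ 2) := by ring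
    _ ≤ #ℬ * (2 * #ℬ ^ 2) := by gcongr
    _ = 2 * #ℬ ^ 3 := by ring

end IsFacetMarking

lemma le_of_mul_le_two_mul_pow_three {a b x : ℝ} (hx : 2 ≤ x) (hb : b = x * (x - 1) / 2)
    (h : (3 * a + b) * (3 * a + 2 * b) ≤ 2 * b ^ 3) : a ≤ x * (x - 1) * (x - 2) / 6 := by
  have hb_pos : 0 < b := by rw [hb]; nlinarith
  have hcube : 2 * b ^ 3 = (x - 1) * b * (x * b) := by rw [hb]; ring
  have hdegree : 3 * a ≤ (x - 2) * b := by
    by_contra! hlt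
    have hfirst : (x - 1) * b < 3 * a + b := by linarith
    have hsecond : x * b < 3 * a + 2 * b := by linarith
    have := mul_lt_mul'' hfirst hsecond (by nlinarith) (by nlinarith)
    linarith
  calc
    a ≤ (x - 2) * b / 3 := by linarith
    _ = x * (x - 1) * (x - 2) / 6 := by rw [hb]; ring

lemma le_card_inter_shadow {r : ℕ} (hr : 1 ≤ r) {𝒜 ℬ : Finset (Finset ℕ)}
    (h : ValidPair r k 𝒜 ℬ) : ∀ A ∈ 𝒜, k ≤ #(ℬ ∩ ∂ {A}) := by
  obtain ⟨h𝒜, hℬ, hk⟩ := h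
  refine fun A hA ↦ (hk A hA).trans (card_le_card fun B hB ↦ ?_)
  obtain ⟨hB, hBA⟩ := mem_filter.1 hB
  have hdiff : #(A \ B) = 1 := by rw [card_sdiff_of_subset hBA, h𝒜 A hA, hℬ B hB]; omega
  exact mem_inter.2 ⟨hB, mem_shadow_iff_exists_sdiff.2 ⟨A, mem_singleton_self A, hBA, hdiff⟩⟩

end BollobasEccles

open scoped FinsetFamily in
theorem stmt_7_general {α : Type*} [DecidableEq α] (x : ℝ) (hx : 2 ≤ x)
    (𝒜 ℬ : Finset (Finset α)) (hvalid : ∀ A ∈ 𝒜, 3 ≤ (ℬ ∩ ∂ {A}).card)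
    (hb : (ℬ.card : ℝ) = x * (x - 1) / 2) :
    (𝒜.card : ℝ) ≤ x * (x - 1) * (x - 2) / 6 := by
  obtain ⟨M, hM⟩ := BollobasEccles.exists_isFacetMarking hvalid
  exact BollobasEccles.le_of_mul_le_two_mul_pow_three hx hb
    (mod_cast hM.mul_le_two_mul_card_pow_three)

theorem stmt_7 (x : ℝ) (hx : 2 ≤ x) (r : ℕ) (hr : 3 ≤ r)
    (𝒜 ℬ : Finset (Finset ℕ)) (hvalid : ValidPair r 3 𝒜 ℬ)
    (hb : (ℬ.card : ℝ) = x * (x - 1) / 2) :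
    (𝒜.card : ℝ) ≤ x * (x - 1) * (x - 2) / 6 := by
  exact stmt_7_general x hx 𝒜 ℬ (BollobasEccles.le_card_inter_shadow (by omega) hvalid) hb
end

section
/- For all integers r ≥ 3 and c ≥ 2, one has f(r, 3, C(c,2)) = C(c,3); that is, every 3-valid pair (𝒜, ℬ) with |ℬ| = C(c,2) satisfies |𝒜| ≤ C(c,3), and this bound is attained. -/
/-!
Fix an element `v`, and let `m` be the number of members of `ℬ` avoiding `v` (the deletion) and
`d` the number of those containing it (the link). The members of `𝒜` avoiding `v` have all their
facets in the deletion. Among those containing `v`, remove `v`: some number `g` of them keep three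
facets in the link, and the other `t` have only two there, which forces them to lie in the deletion
themselves, so `t ≤ m`. As two facets determine the set they belong to, counting pairs of members
of the link gives `t + 3 g ≤ C(d,2)`.

Let `φ(b)` be the maximum over integers `c ≥ 1` of the lines `chord c b`, so that
`φ(C(c,2)) = C(c,3)`. By induction the theorem reduces to `φ(m) + t + g ≤ φ(m + d)` whenever
`g ≤ φ(d)`. If `φ(m)` and `φ(d)` are attained by the lines of index `p` and `q`, then on the right
the line of index `p` suffices for `d ≤ p`, that of index `p + 1` for `p < d ≤ 2p`, and beyond that
the one of index `p + 2` or `q`, according as `q ≤ p + 1` or not.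
-/

section Chord

/-- The line through `(C(c,2), C(c,3))` and `(C(c+1,2), C(c+1,3))`, evaluated at `b`. For natural
numbers `c` these are the lines supporting the convex polygonal curve with vertices
`(C(n,2), C(n,3))`. -/
def chord (c b : ℚ) : ℚ := (c - 1) / 2 * b - (c ^ 3 - c) / 12

lemma chord_add (c b b' : ℚ) : chord c (b + b') = chord c b + (c - 1) / 2 * b' := by
  unfold chord
  ring

lemma cast_choose_three (n : ℕ) : (n.choose 3 : ℚ) = n * (n - 1) * (n - 2) / 6 := by
  rw [Nat.cast_choose_eq_descPochhammer_div]
  simp [descPochhammer_succ_eval, Nat.factorial]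

lemma cast_succ_choose_two (n : ℕ) : ((n + 1).choose 2 : ℚ) = (n + 1) * n / 2 := by
  rw [Nat.cast_choose_two, Nat.cast_succ, add_sub_cancel_right]

lemma chord_choose_two (n : ℕ) : chord n (n.choose 2) = n.choose 3 := by
  rw [chord, Nat.cast_choose_two, cast_choose_three]
  ring

lemma exists_choose_two_le_and_le (b : ℕ) :
    ∃ p : ℕ, 0 < p ∧ p.choose 2 ≤ b ∧ b ≤ (p + 1).choose 2 := by
  induction b with
  | zero => exact ⟨1, by simp⟩
  | succ b ih =>
    obtain ⟨p, hp, hlower, hupper⟩ := ih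
    obtain hlt | rfl := hupper.lt_or_eq
    · exact ⟨p, hp, by omega, hlt⟩
    · have hsucc : (p + 1 + 1).choose 2 = (p + 1) + (p + 1).choose 2 := by
        rw [Nat.choose_succ_succ' (p + 1) 1, Nat.choose_one_right]
      exact ⟨p + 1, by omega⟩

lemma chord_le_chord {p b : ℕ} (hlower : p.choose 2 ≤ b) (hupper : b ≤ (p + 1).choose 2) (c : ℕ) :
    chord c b ≤ chord p b := by
  have hlower' : (p * (p - 1) / 2 : ℚ) ≤ b := by
    rw [← Nat.cast_choose_two]
    exact_mod_cast hlower
  have hupper' : (b : ℚ) ≤ (p + 1) * p / 2 := by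
    rw [← cast_succ_choose_two]
    exact_mod_cast hupper
  have hp : (0 : ℚ) ≤ p := p.cast_nonneg
  have hdiff : chord p b - chord c b =
      (p - c) * (6 * b - (p ^ 2 + p * c + c ^ 2 - 1)) / 12 := by
    unfold chord
    ring
  suffices 0 ≤ ((p : ℚ) - c) * (6 * b - (p ^ 2 + p * c + c ^ 2 - 1)) by linarith
  have hc : (0 : ℚ) ≤ c := c.cast_nonneg
  rcases lt_trichotomy c p with h | rfl | h
  · have h' : (c : ℚ) + 1 ≤ p := by exact_mod_cast h
    exact mul_nonneg (by linarith) (by nlinarith [hc])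
  · simp
  · have h' : (p : ℚ) + 1 ≤ c := by exact_mod_cast h
    exact mul_nonneg_of_nonpos_of_nonpos (by linarith) (by nlinarith [hp])

variable {m d t g p q : ℚ}

lemma chord_add_le_chord_of_le (hd : 0 ≤ d) (hdp : d ≤ p) (hg : 0 ≤ g)
    (hpairs : t + 3 * g ≤ d * (d - 1) / 2) : chord p m + t + g ≤ chord p (m + d) := by
  have hslope : 0 ≤ (p - d) * d := mul_nonneg (by linarith) hd
  rw [chord_add]
  linarith

lemma chord_add_le_chord_add_one (hdp : p + 1 ≤ d) (hdp' : d ≤ 2 * p) (hm : m ≤ (p + 1) * p / 2)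
    (htm : t ≤ m) (hpairs : t + 3 * g ≤ d * (d - 1) / 2) :
    chord p m + t + g ≤ chord (p + 1) (m + d) := by
  have hbetween : 0 ≤ (2 * p - d) * (d - (p + 1)) := mul_nonneg (by linarith) (by linarith)
  unfold chord
  linarith

lemma chord_add_le_chord_of_add_two_le (hp : 1 ≤ p) (hpq : p + 2 ≤ q) (hm : 0 ≤ m) (htm : t ≤ m)
    (hg : g ≤ chord q d) : chord p m + t + g ≤ chord q (m + d) := by
  have hslope : 0 ≤ (q - (p + 2)) * m := mul_nonneg (by linarith) hm
  have hcubic : 0 ≤ p * (p - 1) * (p + 1) := by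
    refine mul_nonneg (mul_nonneg ?_ ?_) ?_ <;> linarith
  rw [add_comm m d, chord_add]
  unfold chord at *
  linarith

lemma chord_add_le_chord_add_two (hqp : q ≤ p + 1) (hpd : 2 * p + 1 ≤ d)
    (hq : 0 ≤ (q - 1) * (q - 2) * (q - 3)) (htm : t ≤ m) (hg : g ≤ chord q d) :
    chord p m + t + g ≤ chord (p + 2) (m + d) := by
  have hslope : 0 ≤ (p + 2 - q) * (d - (2 * p + 1)) := mul_nonneg (by linarith) (by linarith)
  have hgap : 0 ≤ (p + 1 - q) * (p + 2 - q) := mul_nonneg (by linarith) (by linarith)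
  unfold chord at *
  linarith

lemma exists_chord_add_le_chord {m d t g p q : ℕ} (hp : 0 < p) (hq : 0 < q)
    (hm : m ≤ (p + 1).choose 2) (htm : t ≤ m) (hpairs : t + 3 * g ≤ d.choose 2)
    (hg : (g : ℚ) ≤ chord q d) :
    ∃ c : ℕ, 0 < c ∧ chord p m + t + g ≤ chord c (m + d) := by
  have htm' : (t : ℚ) ≤ m := by exact_mod_cast htm
  have hpairs' : (t : ℚ) + 3 * g ≤ d * (d - 1) / 2 := by
    rw [← Nat.cast_choose_two]
    exact_mod_cast hpairs
  rcases le_or_gt d p with hdp | hdp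
  · exact ⟨p, hp, chord_add_le_chord_of_le d.cast_nonneg (by exact_mod_cast hdp) g.cast_nonneg
      hpairs'⟩
  rcases le_or_gt d (2 * p) with hdp' | hdp'
  · have hm' : (m : ℚ) ≤ (p + 1) * p / 2 := by
      rw [← cast_succ_choose_two]
      exact_mod_cast hm
    refine ⟨p + 1, p.succ_pos, ?_⟩
    push_cast
    exact chord_add_le_chord_add_one (by exact_mod_cast hdp) (by exact_mod_cast hdp') hm'
      htm' hpairs'
  rcases le_or_gt q (p + 1) with hqp | hqp
  · have hq' : 0 ≤ ((q : ℚ) - 1) * (q - 2) * (q - 3) := by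
      have hchoose := cast_choose_three (q - 1)
      rw [Nat.cast_pred hq] at hchoose
      linarith [((q - 1).choose 3).cast_nonneg (α := ℚ)]
    refine ⟨p + 2, by omega, ?_⟩
    push_cast
    exact chord_add_le_chord_add_two (by exact_mod_cast hqp) (by exact_mod_cast hdp') hq'
      htm' hg
  · exact ⟨q, hq, chord_add_le_chord_of_add_two_le (by exact_mod_cast hp) (by exact_mod_cast hqp)
      m.cast_nonneg htm' hg⟩

end Chord

section Facets

open Finset

variable {α : Type*} [DecidableEq α] {𝒜 ℬ : Finset (Finset α)} {A B : Finset α} {v : α}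

/-- The members of `ℬ` that are facets of `A`, regarded as a simplex: those obtained from `A` by
deleting one element. -/
def facets (ℬ : Finset (Finset α)) (A : Finset α) : Finset (Finset α) :=
  {B ∈ ℬ | B ⊆ A ∧ #B + 1 = #A}

lemma mem_facets : B ∈ facets ℬ A ↔ B ∈ ℬ ∧ B ⊆ A ∧ #B + 1 = #A := mem_filter

lemma facets_nonMemberSubfamily (hv : v ∉ A) : facets (ℬ.nonMemberSubfamily v) A = facets ℬ A := by
  ext B
  simp only [mem_facets, mem_nonMemberSubfamily]
  grind

lemma memberSubfamily_facets_insert (hv : v ∉ A) :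
    (facets ℬ (insert v A)).memberSubfamily v = facets (ℬ.memberSubfamily v) A := by
  ext B
  by_cases hvB : v ∈ B
  · simp only [mem_facets, mem_memberSubfamily, hvB, not_true_eq_false, and_false, false_and]
  · simp only [mem_facets, mem_memberSubfamily, hvB, not_false_eq_true, and_true,
      insert_subset_insert_iff hvB, card_insert_of_notMem hv, card_insert_of_notMem hvB,
      Nat.add_right_cancel_iff]

lemma nonMemberSubfamily_facets_insert (hv : v ∉ A) :
    (facets ℬ (insert v A)).nonMemberSubfamily v = {B ∈ ℬ | B = A} := by
  ext B
  simp only [mem_facets, mem_nonMemberSubfamily, mem_filter, card_insert_of_notMem hv,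
    Nat.add_right_cancel_iff]
  constructor
  · rintro ⟨⟨hB, hsub, hcard⟩, hvB⟩
    exact ⟨hB, eq_of_subset_of_card_le ((subset_insert_iff_of_notMem hvB).1 hsub) hcard.ge⟩
  · rintro ⟨hB, rfl⟩
    exact ⟨⟨hB, subset_insert v B, rfl⟩, hv⟩

lemma card_facets_insert (hv : v ∉ A) :
    #(facets ℬ (insert v A)) = #(facets (ℬ.memberSubfamily v) A) + if A ∈ ℬ then 1 else 0 := by
  rw [← card_memberSubfamily_add_card_nonMemberSubfamily v, memberSubfamily_facets_insert hv,
    nonMemberSubfamily_facets_insert hv, filter_eq']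
  split_ifs <;> simp

lemma sup_eq_of_mem_powersetCard_two_facets {s : Finset (Finset α)}
    (hs : s ∈ (facets ℬ A).powersetCard 2) : s.sup id = A := by
  obtain ⟨hsub, hcard⟩ := mem_powersetCard.1 hs
  obtain ⟨B, B', hne, rfl⟩ := card_eq_two.1 hcard
  obtain ⟨-, hB, hBcard⟩ := mem_facets.1 (hsub (mem_insert_self B {B'}))
  obtain ⟨-, hB', hBcard'⟩ := mem_facets.1 (hsub (mem_insert_of_mem (mem_singleton_self B')))
  have hlt : #B < #(B ∪ B') := by
    refine card_lt_card (subset_union_left.ssubset_of_ne fun h => hne ?_)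
    exact (eq_of_subset_of_card_le (h ▸ subset_union_right) (by omega)).symm
  simpa using eq_of_subset_of_card_le (union_subset hB hB') (by omega)

lemma sum_card_facets_choose_two_le (𝒜 ℬ : Finset (Finset α)) :
    ∑ A ∈ 𝒜, (#(facets ℬ A)).choose 2 ≤ (#ℬ).choose 2 := by
  have hdisjoint : (𝒜 : Set (Finset α)).PairwiseDisjoint fun A => (facets ℬ A).powersetCard 2 := by
    intro A _ A' _ hne
    refine disjoint_left.2 fun s hs hs' => hne ?_
    rw [← sup_eq_of_mem_powersetCard_two_facets hs, sup_eq_of_mem_powersetCard_two_facets hs']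
  calc ∑ A ∈ 𝒜, (#(facets ℬ A)).choose 2
      = #(𝒜.biUnion fun A => (facets ℬ A).powersetCard 2) := by
        simp only [card_biUnion hdisjoint, card_powersetCard]
    _ ≤ #(ℬ.powersetCard 2) :=
        card_le_card (biUnion_subset.2 fun A _ => powersetCard_mono (filter_subset _ _))
    _ = (#ℬ).choose 2 := card_powersetCard 2 ℬ

lemma card_add_three_mul_card_le_choose_two (h : ∀ A ∈ 𝒜, 2 ≤ #(facets ℬ A)) :
    #{A ∈ 𝒜 | ¬ 3 ≤ #(facets ℬ A)} + 3 * #{A ∈ 𝒜 | 3 ≤ #(facets ℬ A)} ≤ (#ℬ).choose 2 := by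
  calc #{A ∈ 𝒜 | ¬ 3 ≤ #(facets ℬ A)} + 3 * #{A ∈ 𝒜 | 3 ≤ #(facets ℬ A)}
      = ∑ A ∈ 𝒜, if 3 ≤ #(facets ℬ A) then 3 else 1 := by
        rw [sum_ite, sum_const, sum_const, smul_eq_mul, smul_eq_mul]
        ring
    _ ≤ ∑ A ∈ 𝒜, (#(facets ℬ A)).choose 2 := by
        refine sum_le_sum fun A hA => ?_
        split_ifs with hA₃
        · exact Nat.choose_le_choose 2 hA₃
        · exact Nat.choose_le_choose 2 (h A hA)
    _ ≤ (#ℬ).choose 2 := sum_card_facets_choose_two_le 𝒜 ℬ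

lemma eq_empty_of_card_lt_of_le_card_facets {k : ℕ} (hℬ : #ℬ < k) (h : ∀ A ∈ 𝒜, k ≤ #(facets ℬ A)) :
    𝒜 = ∅ :=
  eq_empty_of_forall_notMem fun A hA =>
    ((h A hA).trans (card_le_card (filter_subset _ _))).not_gt hℬ

lemma exists_card_le_chord_of_subfamilies (v : α) {p q : ℕ} (h : ∀ A ∈ 𝒜, 3 ≤ #(facets ℬ A))
    (hp : 0 < p) (hm : #(ℬ.nonMemberSubfamily v) ≤ (p + 1).choose 2)
    (hdeletion : #(𝒜.nonMemberSubfamily v) ≤ chord p #(ℬ.nonMemberSubfamily v))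
    (hq : 0 < q) (hlink : #{A ∈ 𝒜.memberSubfamily v | 3 ≤ #(facets (ℬ.memberSubfamily v) A)} ≤
      chord q #(ℬ.memberSubfamily v)) :
    ∃ c : ℕ, 0 < c ∧ #𝒜 ≤ chord c #ℬ := by
  set G := {A ∈ 𝒜.memberSubfamily v | 3 ≤ #(facets (ℬ.memberSubfamily v) A)}
  set T := {A ∈ 𝒜.memberSubfamily v | ¬ 3 ≤ #(facets (ℬ.memberSubfamily v) A)}
  have hfacets : ∀ A ∈ 𝒜.memberSubfamily v,
      3 ≤ #(facets (ℬ.memberSubfamily v) A) + if A ∈ ℬ then 1 else 0 := by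
    intro A hA
    obtain ⟨hA, hvA⟩ := mem_memberSubfamily.1 hA
    exact card_facets_insert hvA ▸ h _ hA
  have hTm : #T ≤ #(ℬ.nonMemberSubfamily v) := by
    refine card_le_card fun A hA => ?_
    obtain ⟨hAlink, hA⟩ := mem_filter.1 hA
    refine mem_nonMemberSubfamily.2 ⟨?_, (mem_memberSubfamily.1 hAlink).2⟩
    by_contra hAℬ
    exact hA (by simpa [hAℬ] using hfacets A hAlink)
  have hpairs : #T + 3 * #G ≤ (#(ℬ.memberSubfamily v)).choose 2 := by
    refine card_add_three_mul_card_le_choose_two fun A hA => ?_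
    have := hfacets A hA
    split_ifs at this <;> omega
  obtain ⟨c, hc, hle⟩ := exists_chord_add_le_chord hp hq hm hTm hpairs hlink
  refine ⟨c, hc, ?_⟩
  have h𝒜 : #𝒜 = #(𝒜.nonMemberSubfamily v) + #T + #G := by
    have := card_memberSubfamily_add_card_nonMemberSubfamily v 𝒜
    have : #G + #T = #(𝒜.memberSubfamily v) := card_filter_add_card_filter_not _
    omega
  rw [h𝒜, ← card_memberSubfamily_add_card_nonMemberSubfamily v ℬ, add_comm #(memberSubfamily v ℬ)]
  push_cast
  linarith

lemma exists_card_le_chord (ℬ : Finset (Finset α)) : ∀ {𝒜 : Finset (Finset α)},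
    (∀ A ∈ 𝒜, 3 ≤ #(facets ℬ A)) → ∃ c : ℕ, 0 < c ∧ #𝒜 ≤ chord c #ℬ := by
  induction ℬ using memberFamily_induction_on with
  | empty =>
    intro 𝒜 h
    exact ⟨1, one_pos, by simp [eq_empty_of_card_lt_of_le_card_facets (by simp) h, chord]⟩
  | singleton_empty =>
    intro 𝒜 h
    exact ⟨1, one_pos, by simp [eq_empty_of_card_lt_of_le_card_facets (by simp) h, chord]⟩
  | @subfamily v ℬ ihdeletion ihlink =>
    intro 𝒜 h
    obtain ⟨c, -, hc⟩ := ihdeletion (𝒜 := 𝒜.nonMemberSubfamily v) fun A hA => by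
      obtain ⟨hA, hvA⟩ := mem_nonMemberSubfamily.1 hA
      rw [facets_nonMemberSubfamily hvA]
      exact h A hA
    obtain ⟨p, hp, hlower, hupper⟩ := exists_choose_two_le_and_le (#(ℬ.nonMemberSubfamily v))
    obtain ⟨q, hq, hlink⟩ := ihlink (𝒜 := {A ∈ 𝒜.memberSubfamily v |
      3 ≤ #(facets (ℬ.memberSubfamily v) A)}) fun A hA => (mem_filter.1 hA).2
    exact exists_card_le_chord_of_subfamilies v h hp hupper
      (hc.trans (chord_le_chord hlower hupper c)) hq hlink

theorem card_le_choose_three_of_facets {c : ℕ} (h : ∀ A ∈ 𝒜, 3 ≤ #(facets ℬ A))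
    (hℬ : #ℬ = c.choose 2) : #𝒜 ≤ c.choose 3 := by
  obtain ⟨c', -, hle⟩ := exists_card_le_chord ℬ h
  have hmax := chord_le_chord hℬ.ge (hℬ.trans_le (Nat.choose_le_choose 2 c.le_succ)) c'
  rw [hℬ] at hle hmax
  exact_mod_cast (hle.trans hmax).trans_eq (chord_choose_two c)

lemma ValidPair.le_card_facets {r k : ℕ} {𝒜 ℬ : Finset (Finset ℕ)} {A : Finset ℕ}
    (h : ValidPair r k 𝒜 ℬ) (hr : 0 < r) (hA : A ∈ 𝒜) : k ≤ #(facets ℬ A) := by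
  obtain ⟨h𝒜, hℬ, hk⟩ := h
  refine (hk A hA).trans (card_le_card fun B hB => ?_)
  obtain ⟨hB, hBA⟩ := mem_filter.1 hB
  refine mem_facets.2 ⟨hB, hBA, ?_⟩
  rw [hℬ B hB, h𝒜 A hA, Nat.sub_add_cancel hr]

end Facets

section Construction

open Finset

variable {α : Type*} [DecidableEq α] {S V : Finset α}

/-- The family of all `T ∪ S` with `T` a `k`-element subset of `V`: the complete `k`-uniform
family on `V`, enlarged by a common core `S`. -/
def completeWithCore (S V : Finset α) (k : ℕ) : Finset (Finset α) :=
  (V.powersetCard k).image (· ∪ S)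

lemma mem_completeWithCore {k : ℕ} {A : Finset α} :
    A ∈ completeWithCore S V k ↔ ∃ T ⊆ V, #T = k ∧ T ∪ S = A := by
  simp [completeWithCore, and_assoc]

lemma card_completeWithCore (h : Disjoint V S) (k : ℕ) :
    #(completeWithCore S V k) = (#V).choose k := by
  rw [completeWithCore, card_image_of_injOn, card_powersetCard]
  intro T hT T' hT' heq
  rw [mem_coe, mem_powersetCard] at hT hT'
  change T ∪ S = T' ∪ S at heq
  rw [← union_sdiff_cancel_right (h.mono_left hT.1), heq,
    union_sdiff_cancel_right (h.mono_left hT'.1)]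

lemma card_of_mem_completeWithCore (h : Disjoint V S) {k : ℕ} {A : Finset α}
    (hA : A ∈ completeWithCore S V k) : #A = k + #S := by
  obtain ⟨T, hT, rfl, rfl⟩ := mem_completeWithCore.1 hA
  exact card_union_of_disjoint (h.mono_left hT)

lemma succ_le_card_filter_subset_completeWithCore (h : Disjoint V S) {k : ℕ} {A : Finset α}
    (hA : A ∈ completeWithCore S V (k + 1)) :
    k + 1 ≤ #{B ∈ completeWithCore S V k | B ⊆ A} := by
  obtain ⟨T, hT, hcard, rfl⟩ := mem_completeWithCore.1 hA
  have hsub : completeWithCore S T k ⊆ {B ∈ completeWithCore S V k | B ⊆ T ∪ S} := by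
    intro B hB
    obtain ⟨R, hR, hRcard, rfl⟩ := mem_completeWithCore.1 hB
    exact mem_filter.2 ⟨mem_completeWithCore.2 ⟨R, hR.trans hT, hRcard, rfl⟩,
      union_subset_union_left hR⟩
  calc k + 1 = #(completeWithCore S T k) := by
        rw [card_completeWithCore (h.mono_left hT), hcard, Nat.choose_succ_self_right]
    _ ≤ _ := card_le_card hsub

lemma validPair_completeWithCore {S V : Finset ℕ} (h : Disjoint V S) (k : ℕ) :
    ValidPair (k + 1 + #S) (k + 1) (completeWithCore S V (k + 1)) (completeWithCore S V k) := by
  refine ⟨fun A hA => card_of_mem_completeWithCore h hA, fun B hB => ?_,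
    fun A hA => succ_le_card_filter_subset_completeWithCore h hA⟩
  rw [card_of_mem_completeWithCore h hB]
  omega

lemma exists_validPair_card_eq_choose {r k : ℕ} (hk : k + 1 ≤ r) (c : ℕ) :
    ∃ 𝒜 ℬ : Finset (Finset ℕ), ValidPair r (k + 1) 𝒜 ℬ ∧ #ℬ = c.choose k ∧
      #𝒜 = c.choose (k + 1) := by
  have hdisjoint : Disjoint (range c) (Ico c (c + (r - (k + 1)))) := by
    rw [range_eq_Ico]
    exact Ico_disjoint_Ico_consecutive 0 c _
  have hvalid := validPair_completeWithCore hdisjoint k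
  rw [Nat.card_Ico, Nat.add_sub_cancel_left, Nat.add_sub_cancel' hk] at hvalid
  refine ⟨_, _, hvalid, ?_, ?_⟩ <;> rw [card_completeWithCore hdisjoint, card_range]

end Construction

theorem stmt_8 (r c : ℕ) (hr : 3 ≤ r) (hc : 2 ≤ c) :
    f r 3 (c.choose 2) = c.choose 3 ∧
    (∀ 𝒜 ℬ : Finset (Finset ℕ), ValidPair r 3 𝒜 ℬ → ℬ.card = c.choose 2 →
      𝒜.card ≤ c.choose 3) ∧
    (∃ 𝒜 ℬ : Finset (Finset ℕ), ValidPair r 3 𝒜 ℬ ∧ ℬ.card = c.choose 2 ∧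
      𝒜.card = c.choose 3) := by
  have upper : ∀ 𝒜 ℬ : Finset (Finset ℕ), ValidPair r 3 𝒜 ℬ → ℬ.card = c.choose 2 →
      𝒜.card ≤ c.choose 3 := fun 𝒜 ℬ h hℬ =>
    card_le_choose_three_of_facets (fun A hA => h.le_card_facets (by omega) hA) hℬ
  have attained := exists_validPair_card_eq_choose (k := 2) hr c
  refine ⟨IsGreatest.csSup_eq ⟨attained, ?_⟩, upper, attained⟩
  rintro _ ⟨𝒜, ℬ, h, hℬ, rfl⟩
  exact upper 𝒜 ℬ h hℬ
end

section
/- Let r ≥ 3 and c ≥ 29 be integers. If (𝒜, ℬ) is a 3-valid pair with |ℬ| = C(c,2) and |𝒜| = C(c,3), then there exist an (r−3)-element set S ⊆ ℕ and c distinct elements x_1, ..., x_c of ℕ \ S such that ℬ = {S ∪ T : T a 2-element subset of {x_1,...,x_c}} and 𝒜 = {S ∪ T : T a 3-element subset of {x_1,...,x_c}}. -/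
/-!
Call two members of `ℬ` adjacent if their union lies in `𝒜`, write `D B` for the number of members
of `𝒜` containing `B`, and `N B` for the set of neighbours of `B`. Validity gives `2 D B ≤ |N B|`.
A set `A ∈ 𝒜` through a neighbour of `B` but not through `B` has exactly two elements outside `B`,
so it contains at most two neighbours of `B` and at least one of the sets `X ∈ ℬ` with
`|X \ B| = 2`; and each such `X` lies in at most two such `A`. As the neighbours, these `X`, and
`B` itself are distinct members of `ℬ`, this yields
`∑_{X ∈ N B} D X + 3 |N B| + 4 ≤ 4 |ℬ|`. Summing over `B` gives
`∑_B (D B + 1) (D B + 2) ≤ 2 |ℬ|²`, whereas `∑_B D B ≥ 3 |𝒜|`. When `|ℬ| = C(d + 2, 2)` and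
`|𝒜| = C(d + 2, 3)`, convexity forces `D B = d` for all `B`, and every inequality above is tight.

Tightness says that `ℬ` is closed under swapping elements between two of its members, and that
adjoining to a member of `ℬ` an element of another member gives a set in `𝒜`. If `q ∈ A ∈ 𝒜` is
missing from some `B ∈ ℬ`, swaps turn `B` into `A \ {q}`, so `q` is one of exactly three such
elements of `A`; the other elements of `A` form the common core `S`. The supersets of `B` in `𝒜`
correspond to the elements of `(⋃ ℬ) \ B`, so `(⋃ ℬ) \ S` has `d + 2` elements, and comparing
cardinalities identifies `ℬ` and `𝒜`.
-/

section Finset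

open Finset

variable {ι α : Type*} [DecidableEq α]

theorem eq_of_mul_card_le_sum_of_sum_le {s : Finset ι} {f : ι → ℕ} {d : ℕ}
    (hsum : #s * d ≤ ∑ i ∈ s, f i)
    (hsq : ∑ i ∈ s, (f i + 1) * (f i + 2) ≤ #s * ((d + 1) * (d + 2))) {i : ι} (hi : i ∈ s) :
    f i = d := by
  have hsum' : (#s * d : ℤ) ≤ ∑ i ∈ s, (f i : ℤ) := by exact_mod_cast hsum
  have hsq' : ∑ i ∈ s, ((f i + 1) * (f i + 2) : ℤ) ≤ #s * ((d + 1) * (d + 2)) := by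
    exact_mod_cast hsq
  have hexpand : ∑ i ∈ s, ((f i : ℤ) - d) ^ 2 =
      ∑ i ∈ s, ((f i + 1) * (f i + 2) : ℤ) - (2 * d + 3) * ∑ i ∈ s, (f i : ℤ)
        + #s * (d ^ 2 - 2) := by
    rw [mul_sum, ← sum_sub_distrib, ← nsmul_eq_mul, ← sum_const, ← sum_add_distrib]
    exact sum_congr rfl fun i _ ↦ by ring
  have hvariance : ∑ i ∈ s, ((f i : ℤ) - d) ^ 2 = 0 := by
    refine le_antisymm ?_ (sum_nonneg fun i _ ↦ sq_nonneg _)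
    rw [hexpand]
    linarith [hsq', mul_le_mul_of_nonneg_left hsum' (by positivity : (0 : ℤ) ≤ 2 * d + 3)]
  have hzero := (sum_eq_zero_iff_of_nonneg fun i _ ↦ sq_nonneg _).1 hvariance i hi
  have := pow_eq_zero_iff two_ne_zero |>.1 hzero
  lia

theorem two_mul_choose_two (d : ℕ) : 2 * (d + 2).choose 2 = (d + 1) * (d + 2) := by
  have := Nat.choose_succ_right_eq (d + 2) 1
  rw [Nat.choose_one_right] at this
  lia

theorem three_mul_choose_three (d : ℕ) : 3 * (d + 2).choose 3 = (d + 2).choose 2 * d := by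
  have := Nat.choose_succ_right_eq (d + 2) 2
  lia

theorem union_eq_of_subset_of_ne {A X Y : Finset α} {r : ℕ} (hA : #A = r + 1) (hX : #X = r)
    (hY : #Y = r) (hXA : X ⊆ A) (hYA : Y ⊆ A) (hne : X ≠ Y) : X ∪ Y = A := by
  refine eq_of_subset_of_card_le (union_subset hXA hYA) ?_
  have hYX : ¬ Y ⊆ X := fun h ↦ hne (eq_of_subset_of_card_le h (by lia)).symm
  have := card_lt_card (subset_union_left.ssubset_of_ne (mt left_eq_union.1 hYX))
  lia

theorem eq_image_union_powersetCard {𝒞 : Finset (Finset α)} {S T : Finset α} {k : ℕ}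
    (hS : ∀ C ∈ 𝒞, S ⊆ C) (hT : ∀ C ∈ 𝒞, C \ S ⊆ T)
    (hsized : (𝒞 : Set (Finset α)).Sized (#S + k)) (hcard : #𝒞 = (#T).choose k) :
    𝒞 = (T.powersetCard k).image (S ∪ ·) := by
  refine eq_of_subset_of_card_le (fun C hC ↦ mem_image.2 ⟨C \ S, ?_, ?_⟩) ?_
  · refine mem_powersetCard.2 ⟨hT C hC, ?_⟩
    have := hsized hC
    rw [card_sdiff_of_subset (hS C hC)]
    lia
  · exact union_sdiff_of_subset (hS C hC)
  · exact card_image_le.trans (by rw [card_powersetCard, hcard])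

end Finset

section Families

open Finset

variable {α : Type*} [DecidableEq α] {r d : ℕ} {𝒜 ℬ : Finset (Finset α)} {A B X : Finset α}

/-- The analogue of `ValidPair (r + 1) 3` for families of subsets of an arbitrary type; the sizes
are `r + 1` and `r` rather than `r` and `r - 1` to avoid truncated subtraction. -/
structure ThreeValid (r : ℕ) (𝒜 ℬ : Finset (Finset α)) : Prop where
  sized_upper : (𝒜 : Set (Finset α)).Sized (r + 1)
  sized_lower : (ℬ : Set (Finset α)).Sized r
  three_le_card_filter_subset : ∀ A ∈ 𝒜, 3 ≤ #{B ∈ ℬ | B ⊆ A}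

namespace ThreeValid

/-- The number of members of `𝒜` that contain `B`. -/
def upDegree (𝒜 : Finset (Finset α)) (B : Finset α) : ℕ := #{A ∈ 𝒜 | B ⊆ A}

/-- The elements of `A` whose removal leaves a member of `ℬ`. For `A` one larger than the members
of `ℬ`, they are in bijection with the members of `ℬ` contained in `A`. -/
def removable (ℬ : Finset (Finset α)) (A : Finset α) : Finset α := {x ∈ A | A.erase x ∈ ℬ}

/-- The neighbours of `B` in the graph on `ℬ` that joins two sets whose union lies in `𝒜`. -/
def neighbors (𝒜 ℬ : Finset (Finset α)) (B : Finset α) : Finset (Finset α) :=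
  {X ∈ ℬ | X ≠ B ∧ B ∪ X ∈ 𝒜}

/-- The members of `𝒞` with exactly two elements outside `B`. It is used both with `𝒞 = ℬ`, for
the sets at distance two from `B`, and with `𝒞 = 𝒜`, for the sets between these and the neighbours
of `B`. -/
def far (𝒞 : Finset (Finset α)) (B : Finset α) : Finset (Finset α) := {X ∈ 𝒞 | #(X \ B) = 2}

/-- Closure of `(𝒜, ℬ)` under adjoining to a member of `ℬ` an element covered by `ℬ`, and of `ℬ`
under swapping elements between two of its members. This is the rigidity that equality in the
counting argument forces. -/
structure ExchangeClosed (𝒜 ℬ : Finset (Finset α)) : Prop where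
  insert_mem : ∀ X ∈ ℬ, ∀ Y ∈ ℬ, ∀ z ∈ Y \ X, insert z X ∈ 𝒜
  erase_insert_mem : ∀ X ∈ ℬ, ∀ Y ∈ ℬ, ∀ z ∈ Y \ X, ∀ w ∈ X \ Y, (insert z X).erase w ∈ ℬ

theorem mem_removable {x : α} : x ∈ removable ℬ A ↔ x ∈ A ∧ A.erase x ∈ ℬ := mem_filter

theorem mem_neighbors : X ∈ neighbors 𝒜 ℬ B ↔ X ∈ ℬ ∧ X ≠ B ∧ B ∪ X ∈ 𝒜 := mem_filter

theorem mem_far : X ∈ far ℬ B ↔ X ∈ ℬ ∧ #(X \ B) = 2 := mem_filter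

theorem removable_subset : removable ℬ A ⊆ A := filter_subset _ _

theorem exists_mem_removable_erase_eq (hX : X ∈ ℬ) (hXA : X ⊆ A) (hcard : #X + 1 = #A) :
    ∃ x ∈ removable ℬ A, A.erase x = X := by
  obtain ⟨x, hxX, rfl⟩ := exists_eq_insert_iff.2 ⟨hXA, hcard⟩
  have herase : (insert x X).erase x = X := erase_insert hxX
  exact ⟨x, mem_removable.2 ⟨mem_insert_self x X, by rwa [herase]⟩, herase⟩

theorem card_removable (hℬ : (ℬ : Set (Finset α)).Sized r) (hA : #A = r + 1) :
    #(removable ℬ A) = #{X ∈ ℬ | X ⊆ A} := by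
  rw [← card_image_of_injOn ((erase_injOn A).mono (coe_subset.2 removable_subset))]
  congr 1
  ext X
  simp only [mem_image, mem_filter]
  constructor
  · rintro ⟨x, hx, rfl⟩
    exact ⟨(mem_removable.1 hx).2, erase_subset x A⟩
  · rintro ⟨hX, hXA⟩
    exact exists_mem_removable_erase_eq hX hXA (by rw [hℬ hX, hA])

theorem mem_neighbors_comm (hB : B ∈ ℬ) (hX : X ∈ ℬ) :
    X ∈ neighbors 𝒜 ℬ B ↔ B ∈ neighbors 𝒜 ℬ X := by
  simp only [mem_neighbors, hB, hX, true_and, ne_comm (a := X), union_comm X]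

theorem sum_sum_neighbors (g : Finset α → ℕ) :
    ∑ B ∈ ℬ, ∑ X ∈ neighbors 𝒜 ℬ B, g X = ∑ B ∈ ℬ, #(neighbors 𝒜 ℬ B) * g B := by
  simp only [← smul_eq_mul, ← sum_const]
  refine sum_comm' fun B X ↦ ?_
  have hmem {X Y : Finset α} (h : X ∈ neighbors 𝒜 ℬ Y) : X ∈ ℬ := (mem_neighbors.1 h).1
  exact ⟨fun ⟨hB, hX⟩ ↦ ⟨(mem_neighbors_comm hB (hmem hX)).1 hX, hmem hX⟩,
    fun ⟨hB, hX⟩ ↦ ⟨hmem hB, (mem_neighbors_comm hX (hmem hB)).1 hB⟩⟩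

theorem sum_upDegree : ∑ B ∈ ℬ, upDegree 𝒜 B = ∑ A ∈ 𝒜, #{B ∈ ℬ | B ⊆ A} :=
  sum_card_bipartiteAbove_eq_sum_card_bipartiteBelow fun B A : Finset α ↦ B ⊆ A

theorem sum_upDegree_neighbors (hdeg : ∀ B ∈ ℬ, upDegree 𝒜 B = d) :
    ∑ X ∈ neighbors 𝒜 ℬ B, upDegree 𝒜 X = #(neighbors 𝒜 ℬ B) * d :=
  sum_const_nat fun X hX ↦ hdeg X (mem_neighbors.1 hX).1

theorem far_union_insert_neighbors_subset (hB : B ∈ ℬ) :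
    far ℬ B ∪ insert B (neighbors 𝒜 ℬ B) ⊆ ℬ :=
  union_subset (filter_subset _ _) (insert_subset hB (filter_subset _ _))

theorem card_removable_sdiff_le_two (hA : A ∈ far 𝒜 B) : #(removable ℬ A \ B) ≤ 2 :=
  (card_le_card (sdiff_subset_sdiff removable_subset Subset.rfl)).trans_eq (mem_far.1 hA).2

theorem three_le_card_removable (h : ThreeValid r 𝒜 ℬ) (hA : A ∈ 𝒜) : 3 ≤ #(removable ℬ A) :=
  (h.three_le_card_filter_subset A hA).trans_eq
    (card_removable h.sized_lower (h.sized_upper hA)).symm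

theorem card_sdiff_of_mem_neighbors (h : ThreeValid r 𝒜 ℬ) (hB : B ∈ ℬ)
    (hX : X ∈ neighbors 𝒜 ℬ B) : #(X \ B) = 1 := by
  have hunion := h.sized_upper (mem_neighbors.1 hX).2.2
  have hcard := card_sdiff_add_card X B
  rw [union_comm, hunion, h.sized_lower hB] at hcard
  lia

theorem two_mul_upDegree_le (h : ThreeValid r 𝒜 ℬ) (hB : B ∈ ℬ) :
    2 * upDegree 𝒜 B ≤ #(neighbors 𝒜 ℬ B) := by
  have hunion {A X : Finset α} (hA : A ∈ 𝒜) (hBA : B ⊆ A) (hX : X ∈ ℬ) (hXA : X ⊆ A)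
      (hne : X ≠ B) : B ∪ X = A :=
    union_eq_of_subset_of_ne (h.sized_upper hA) (h.sized_lower hB) (h.sized_lower hX) hBA hXA
      hne.symm
  have habove : ∀ A ∈ ({A ∈ 𝒜 | B ⊆ A} : Finset _),
      2 ≤ #((neighbors 𝒜 ℬ B).bipartiteAbove (fun A X ↦ X ⊆ A) A) := by
    intro A hA
    obtain ⟨hA, hBA⟩ := mem_filter.1 hA
    have hsub : ({X ∈ ℬ | X ⊆ A} : Finset _).erase B ⊆ {X ∈ neighbors 𝒜 ℬ B | X ⊆ A} := by
      intro X hX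
      obtain ⟨hne, hX, hXA⟩ := by simpa only [mem_erase, mem_filter] using hX
      exact mem_filter.2 ⟨mem_neighbors.2 ⟨hX, hne, hunion hA hBA hX hXA hne ▸ hA⟩, hXA⟩
    have := h.three_le_card_filter_subset A hA
    exact (Nat.le_sub_one_of_lt this).trans (pred_card_le_card_erase.trans (card_le_card hsub))
  have hbelow : ∀ X ∈ neighbors 𝒜 ℬ B,
      #(({A ∈ 𝒜 | B ⊆ A} : Finset _).bipartiteBelow (fun A X ↦ X ⊆ A) X) ≤ 1 := by
    intro X hX
    obtain ⟨hX, hne, -⟩ := mem_neighbors.1 hX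
    refine card_le_one_iff_subset_singleton.2 ⟨B ∪ X, fun A hA ↦ ?_⟩
    obtain ⟨⟨hA, hBA⟩, hXA⟩ := by simpa only [bipartiteBelow, mem_filter] using hA
    exact mem_singleton.2 (hunion hA hBA hX hXA hne).symm
  have := card_mul_le_card_mul _ habove hbelow
  rwa [mul_comm, mul_one] at this

theorem disjoint_far_insert_neighbors (h : ThreeValid r 𝒜 ℬ) (hB : B ∈ ℬ) :
    Disjoint (far ℬ B) (insert B (neighbors 𝒜 ℬ B)) := by
  refine disjoint_left.2 fun X hfar hX ↦ ?_
  have htwo := (mem_far.1 hfar).2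
  rcases mem_insert.1 hX with rfl | hX
  · simp at htwo
  · have := h.card_sdiff_of_mem_neighbors hB hX
    lia

theorem card_far_union_insert_neighbors (h : ThreeValid r 𝒜 ℬ) (hB : B ∈ ℬ) :
    #(far ℬ B ∪ insert B (neighbors 𝒜 ℬ B)) = #(far ℬ B) + #(neighbors 𝒜 ℬ B) + 1 := by
  rw [card_union_of_disjoint (h.disjoint_far_insert_neighbors hB),
    card_insert_of_notMem fun hmem ↦ (mem_neighbors.1 hmem).2.1 rfl, add_assoc]

theorem mem_far_of_mem_neighbors (h : ThreeValid r 𝒜 ℬ) (hB : B ∈ ℬ) (hX : X ∈ neighbors 𝒜 ℬ B)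
    (hA : A ∈ 𝒜) (hXA : X ⊆ A) (hBA : ¬ B ⊆ A) : A ∈ far 𝒜 B := by
  have hcardA := h.sized_upper hA
  have hcardB := h.sized_lower hB
  have hcardX := h.sized_lower (mem_neighbors.1 hX).1
  have hle : #(A \ B) ≤ #(A \ X) + #(X \ B) :=
    (card_le_card (sdiff_triangle A X B)).trans (card_union_le _ _)
  have hAX : #(A \ X) = 1 := by rw [card_sdiff_of_subset hXA]; lia
  have hXB := h.card_sdiff_of_mem_neighbors hB hX
  have hpos : 0 < #(B \ A) := card_pos.2 (sdiff_nonempty.2 hBA)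
  have hAB := card_sdiff_add_card_inter A B
  have hBA' := card_sdiff_add_card_inter B A
  rw [inter_comm] at hBA'
  exact mem_far.2 ⟨hA, by lia⟩

theorem sum_upDegree_neighbors_le (h : ThreeValid r 𝒜 ℬ) (hB : B ∈ ℬ) :
    ∑ X ∈ neighbors 𝒜 ℬ B, upDegree 𝒜 X ≤
      #(neighbors 𝒜 ℬ B) + ∑ A ∈ far 𝒜 B, #{X ∈ neighbors 𝒜 ℬ B | X ⊆ A} := by
  have hdeg : ∀ X ∈ neighbors 𝒜 ℬ B, upDegree 𝒜 X ≤ #{A ∈ far 𝒜 B | X ⊆ A} + 1 := by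
    intro X hX
    obtain ⟨hXℬ, hne, -⟩ := mem_neighbors.1 hX
    refine (card_le_card fun A hA ↦ ?_).trans (card_insert_le (B ∪ X) _)
    obtain ⟨hA, hXA⟩ := mem_filter.1 hA
    by_cases hBA : B ⊆ A
    · have : B ∪ X = A := union_eq_of_subset_of_ne (h.sized_upper hA) (h.sized_lower hB)
        (h.sized_lower hXℬ) hBA hXA hne.symm
      exact mem_insert.2 (.inl this.symm)
    · exact mem_insert_of_mem
        (mem_filter.2 ⟨h.mem_far_of_mem_neighbors hB hX hA hXA hBA, hXA⟩)
  calc ∑ X ∈ neighbors 𝒜 ℬ B, upDegree 𝒜 X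
      ≤ ∑ X ∈ neighbors 𝒜 ℬ B, (#{A ∈ far 𝒜 B | X ⊆ A} + 1) := sum_le_sum hdeg
    _ = #(neighbors 𝒜 ℬ B) + ∑ X ∈ neighbors 𝒜 ℬ B, #{A ∈ far 𝒜 B | X ⊆ A} := by
      rw [sum_add_distrib, ← card_eq_sum_ones, add_comm]
    _ = _ := congrArg _
      (sum_card_bipartiteAbove_eq_sum_card_bipartiteBelow fun X A : Finset α ↦ X ⊆ A)

theorem card_neighbors_filter_subset_le (h : ThreeValid r 𝒜 ℬ) (hB : B ∈ ℬ) (hA : A ∈ far 𝒜 B) :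
    #{X ∈ neighbors 𝒜 ℬ B | X ⊆ A} ≤ #(removable ℬ A \ B) := by
  obtain ⟨hA, htwo⟩ := mem_far.1 hA
  refine (card_le_card fun X hX ↦ ?_).trans (card_image_le (f := A.erase))
  obtain ⟨hX, hXA⟩ := mem_filter.1 hX
  have hXℬ := (mem_neighbors.1 hX).1
  obtain ⟨x, hx, rfl⟩ := exists_mem_removable_erase_eq hXℬ hXA
    (by rw [h.sized_lower hXℬ, h.sized_upper hA])
  refine mem_image_of_mem _ (mem_sdiff.2 ⟨hx, fun hxB ↦ ?_⟩)
  have hone := h.card_sdiff_of_mem_neighbors hB hX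
  rw [erase_sdiff_comm, erase_eq_of_notMem fun hmem ↦ (mem_sdiff.1 hmem).2 hxB] at hone
  lia

theorem one_le_card_far_filter_subset (h : ThreeValid r 𝒜 ℬ) (hA : A ∈ far 𝒜 B) :
    1 ≤ #{X ∈ far ℬ B | X ⊆ A} := by
  obtain ⟨hA, htwo⟩ := mem_far.1 hA
  obtain ⟨x, hx, hxAB⟩ : ∃ x ∈ removable ℬ A, x ∉ A \ B :=
    exists_mem_notMem_of_card_lt_card (by have := h.three_le_card_removable hA; lia)
  obtain ⟨-, herase⟩ := mem_removable.1 hx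
  refine card_pos.2 ⟨A.erase x, mem_filter.2 ⟨mem_far.2 ⟨herase, ?_⟩, erase_subset x A⟩⟩
  rw [erase_sdiff_comm, erase_eq_of_notMem hxAB, htwo]

theorem card_far_upper_filter_subset_le (h : ThreeValid r 𝒜 ℬ) (hX : X ∈ far ℬ B) :
    #{A ∈ far 𝒜 B | X ⊆ A} ≤ #{z ∈ B \ X | insert z X ∈ 𝒜} := by
  obtain ⟨hX, htwo⟩ := mem_far.1 hX
  refine (card_le_card fun A hA ↦ ?_).trans (card_image_le (f := (insert · X)))
  obtain ⟨hA, hXA⟩ := mem_filter.1 hA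
  obtain ⟨hA, hAB⟩ := mem_far.1 hA
  obtain ⟨z, hzX, rfl⟩ := exists_eq_insert_iff.2
    ⟨hXA, by rw [h.sized_lower hX, h.sized_upper hA]⟩
  refine mem_image_of_mem _ (mem_filter.2 ⟨mem_sdiff.2 ⟨?_, hzX⟩, hA⟩)
  by_contra hzB
  rw [insert_sdiff_of_notMem _ hzB, card_insert_of_notMem (by simp [hzX])] at hAB
  lia

theorem card_far_upper_le (h : ThreeValid r 𝒜 ℬ) (B : Finset α) :
    #(far 𝒜 B) ≤ ∑ X ∈ far ℬ B, #{z ∈ B \ X | insert z X ∈ 𝒜} :=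
  calc #(far 𝒜 B) ≤ ∑ A ∈ far 𝒜 B, #{X ∈ far ℬ B | X ⊆ A} := by
        rw [card_eq_sum_ones]
        exact sum_le_sum fun A hA ↦ h.one_le_card_far_filter_subset hA
    _ = ∑ X ∈ far ℬ B, #{A ∈ far 𝒜 B | X ⊆ A} :=
      (sum_card_bipartiteAbove_eq_sum_card_bipartiteBelow fun X A : Finset α ↦ X ⊆ A).symm
    _ ≤ _ := sum_le_sum fun X hX ↦ h.card_far_upper_filter_subset_le hX

theorem card_filter_insert_mem_le_two (h : ThreeValid r 𝒜 ℬ) (hB : B ∈ ℬ) (hX : X ∈ far ℬ B) :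
    #{z ∈ B \ X | insert z X ∈ 𝒜} ≤ 2 := by
  obtain ⟨hX, htwo⟩ := mem_far.1 hX
  rw [card_sdiff_comm ((h.sized_lower hX).trans (h.sized_lower hB).symm)] at htwo
  exact (card_filter_le _ _).trans_eq htwo

theorem card_far_upper_le_two_mul (h : ThreeValid r 𝒜 ℬ) (hB : B ∈ ℬ) :
    #(far 𝒜 B) ≤ 2 * #(far ℬ B) :=
  (h.card_far_upper_le B).trans <| (sum_le_card_nsmul _ _ _ fun _ hX ↦
    h.card_filter_insert_mem_le_two hB hX).trans_eq (mul_comm _ _)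

theorem sum_upDegree_neighbors_le_sum_removable (h : ThreeValid r 𝒜 ℬ) (hB : B ∈ ℬ) :
    ∑ X ∈ neighbors 𝒜 ℬ B, upDegree 𝒜 X ≤
      #(neighbors 𝒜 ℬ B) + ∑ A ∈ far 𝒜 B, #(removable ℬ A \ B) :=
  (h.sum_upDegree_neighbors_le hB).trans <| Nat.add_le_add_left
    (sum_le_sum fun _ hA ↦ h.card_neighbors_filter_subset_le hB hA) _

theorem sum_upDegree_neighbors_le_add_four_mul (h : ThreeValid r 𝒜 ℬ) (hB : B ∈ ℬ) :
    ∑ X ∈ neighbors 𝒜 ℬ B, upDegree 𝒜 X ≤ #(neighbors 𝒜 ℬ B) + 4 * #(far ℬ B) := by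
  have hpaths := h.sum_upDegree_neighbors_le_sum_removable hB
  have hremovable : ∑ A ∈ far 𝒜 B, #(removable ℬ A \ B) ≤ #(far 𝒜 B) * 2 :=
    sum_le_card_nsmul _ _ _ fun _ ↦ card_removable_sdiff_le_two
  have hfar := h.card_far_upper_le_two_mul hB
  lia

theorem sum_upDegree_neighbors_add_le (h : ThreeValid r 𝒜 ℬ) (hB : B ∈ ℬ) :
    ∑ X ∈ neighbors 𝒜 ℬ B, upDegree 𝒜 X + 3 * #(neighbors 𝒜 ℬ B) + 4 ≤ 4 * #ℬ := by
  have hupper := h.sum_upDegree_neighbors_le_add_four_mul hB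
  have hpartition := card_le_card (far_union_insert_neighbors_subset (𝒜 := 𝒜) hB)
  rw [h.card_far_union_insert_neighbors hB] at hpartition
  lia

theorem sum_upDegree_add_one_mul_add_two_le (h : ThreeValid r 𝒜 ℬ) :
    ∑ B ∈ ℬ, (upDegree 𝒜 B + 1) * (upDegree 𝒜 B + 2) ≤ #ℬ * (2 * #ℬ) := by
  have hlocal : ∑ B ∈ ℬ, (#(neighbors 𝒜 ℬ B) * upDegree 𝒜 B + 3 * #(neighbors 𝒜 ℬ B) + 4) ≤
      #ℬ * (4 * #ℬ) := by
    simp only [sum_add_distrib, ← sum_sum_neighbors (upDegree 𝒜)]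
    simp only [← sum_add_distrib]
    exact sum_le_card_nsmul _ _ _ fun B hB ↦ h.sum_upDegree_neighbors_add_le hB
  have hdeg : ∑ B ∈ ℬ, 2 * ((upDegree 𝒜 B + 1) * (upDegree 𝒜 B + 2)) ≤
      ∑ B ∈ ℬ, (#(neighbors 𝒜 ℬ B) * upDegree 𝒜 B + 3 * #(neighbors 𝒜 ℬ B) + 4) :=
    sum_le_sum fun B hB ↦ by nlinarith [h.two_mul_upDegree_le hB]
  rw [← mul_sum] at hdeg
  lia

theorem upDegree_eq (h : ThreeValid r 𝒜 ℬ) (hℬ : 2 * #ℬ = (d + 1) * (d + 2))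
    (h𝒜 : 3 * #𝒜 = #ℬ * d) (hB : B ∈ ℬ) : upDegree 𝒜 B = d := by
  refine eq_of_mul_card_le_sum_of_sum_le ?_ (hℬ ▸ h.sum_upDegree_add_one_mul_add_two_le) hB
  rw [← h𝒜, sum_upDegree, mul_comm]
  exact card_nsmul_le_sum _ _ _ h.three_le_card_filter_subset

theorem card_removable_eq_three (h : ThreeValid r 𝒜 ℬ) (hdeg : ∀ B ∈ ℬ, upDegree 𝒜 B = d)
    (h𝒜 : 3 * #𝒜 = #ℬ * d) (hA : A ∈ 𝒜) : #(removable ℬ A) = 3 := by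
  have hsum : ∑ _A ∈ 𝒜, 3 = ∑ A ∈ 𝒜, #{B ∈ ℬ | B ⊆ A} := by
    rw [← sum_upDegree, sum_congr rfl hdeg, sum_const, sum_const, smul_eq_mul, smul_eq_mul, ← h𝒜,
      mul_comm]
  rw [card_removable h.sized_lower (h.sized_upper hA)]
  exact ((sum_eq_sum_iff_of_le h.three_le_card_filter_subset).1 hsum A hA).symm

theorem card_neighbors_eq (h : ThreeValid r 𝒜 ℬ) (hℬ : 2 * #ℬ = (d + 1) * (d + 2))
    (hdeg : ∀ B ∈ ℬ, upDegree 𝒜 B = d) (hB : B ∈ ℬ) : #(neighbors 𝒜 ℬ B) = 2 * d := by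
  have hlocal := h.sum_upDegree_neighbors_add_le hB
  rw [sum_upDegree_neighbors hdeg] at hlocal
  have hlower := h.two_mul_upDegree_le hB
  rw [hdeg B hB] at hlower
  nlinarith

theorem insert_mem_and_erase_mem_of_tight (h : ThreeValid r 𝒜 ℬ) (hB : B ∈ ℬ)
    (htight : #(neighbors 𝒜 ℬ B) + 4 * #(far ℬ B) ≤ ∑ X ∈ neighbors 𝒜 ℬ B, upDegree 𝒜 X)
    (hX : X ∈ far ℬ B) {z : α} (hz : z ∈ B \ X) :
    insert z X ∈ 𝒜 ∧ ∀ w ∈ X \ B, (insert z X).erase w ∈ ℬ := by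
  have hpaths := h.sum_upDegree_neighbors_le_sum_removable hB
  have hremovable : ∀ A ∈ far 𝒜 B, #(removable ℬ A \ B) ≤ 2 := fun _ ↦
    card_removable_sdiff_le_two
  have hremovable_sum := sum_le_card_nsmul _ _ _ hremovable
  have hinsert : ∀ X ∈ far ℬ B, #{z ∈ B \ X | insert z X ∈ 𝒜} ≤ 2 := fun _ ↦
    h.card_filter_insert_mem_le_two hB
  have hinsert_sum := sum_le_card_nsmul _ _ _ hinsert
  have hfar := h.card_far_upper_le B
  simp only [smul_eq_mul] at hremovable_sum hinsert_sum
  have hremovable_eq : ∀ A ∈ far 𝒜 B, #(removable ℬ A \ B) = 2 :=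
    (sum_eq_sum_iff_of_le hremovable).1 (by rw [sum_const, smul_eq_mul]; lia)
  have hinsert_eq : ∀ X ∈ far ℬ B, #{z ∈ B \ X | insert z X ∈ 𝒜} = 2 :=
    (sum_eq_sum_iff_of_le hinsert).1 (by rw [sum_const, smul_eq_mul]; lia)
  obtain ⟨hXℬ, htwo⟩ := mem_far.1 hX
  have hBX : #(B \ X) = 2 := by
    rw [← htwo, card_sdiff_comm ((h.sized_lower hB).trans (h.sized_lower hXℬ).symm)]
  have hinsert_mem : insert z X ∈ 𝒜 :=
    card_filter_eq_iff.1 ((hinsert_eq X hX).trans hBX.symm) z hz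
  have hsdiff : insert z X \ B = X \ B := insert_sdiff_of_mem _ (mem_sdiff.1 hz).1
  have hfull : removable ℬ (insert z X) \ B = insert z X \ B :=
    eq_of_subset_of_card_le (sdiff_subset_sdiff removable_subset Subset.rfl) <| by
      rw [hsdiff, htwo, hremovable_eq _ (mem_far.2 ⟨hinsert_mem, hsdiff ▸ htwo⟩)]
  refine ⟨hinsert_mem, fun w hw ↦ ?_⟩
  rw [← hsdiff, ← hfull] at hw
  exact (mem_removable.1 (mem_sdiff.1 hw).1).2

theorem card_neighbors_add_four_mul_card_far_le (h : ThreeValid r 𝒜 ℬ)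
    (hℬ : 2 * #ℬ = (d + 1) * (d + 2)) (hdeg : ∀ B ∈ ℬ, upDegree 𝒜 B = d) (hB : B ∈ ℬ) :
    #(neighbors 𝒜 ℬ B) + 4 * #(far ℬ B) ≤ ∑ X ∈ neighbors 𝒜 ℬ B, upDegree 𝒜 X := by
  have hpartition := card_le_card (far_union_insert_neighbors_subset (𝒜 := 𝒜) hB)
  rw [h.card_far_union_insert_neighbors hB, h.card_neighbors_eq hℬ hdeg hB] at hpartition
  rw [sum_upDegree_neighbors hdeg, h.card_neighbors_eq hℬ hdeg hB]
  nlinarith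

theorem far_union_insert_neighbors_eq (h : ThreeValid r 𝒜 ℬ)
    (hℬ : 2 * #ℬ = (d + 1) * (d + 2)) (hdeg : ∀ B ∈ ℬ, upDegree 𝒜 B = d) (hB : B ∈ ℬ) :
    far ℬ B ∪ insert B (neighbors 𝒜 ℬ B) = ℬ := by
  refine eq_of_subset_of_card_le (far_union_insert_neighbors_subset hB) ?_
  have hupper := h.sum_upDegree_neighbors_le_add_four_mul hB
  rw [sum_upDegree_neighbors hdeg, h.card_neighbors_eq hℬ hdeg hB] at hupper
  rw [h.card_far_union_insert_neighbors hB, h.card_neighbors_eq hℬ hdeg hB]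
  nlinarith

theorem insert_mem_and_erase_mem_of_mem_neighbors (h : ThreeValid r 𝒜 ℬ) (hB : B ∈ ℬ)
    (hX : X ∈ neighbors 𝒜 ℬ B) {z : α} (hz : z ∈ B \ X) :
    insert z X ∈ 𝒜 ∧ ∀ w ∈ X \ B, (insert z X).erase w ∈ ℬ := by
  obtain ⟨hXℬ, -, hunion⟩ := mem_neighbors.1 hX
  obtain ⟨hzB, hzX⟩ := mem_sdiff.1 hz
  have hinsert : insert z X = B ∪ X := by
    refine eq_of_subset_of_card_le (insert_subset (mem_union_left X hzB) subset_union_right) ?_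
    rw [h.sized_upper hunion, card_insert_of_notMem hzX, h.sized_lower hXℬ]
  refine ⟨hinsert ▸ hunion, fun w hw ↦ ?_⟩
  obtain ⟨hwX, hwB⟩ := mem_sdiff.1 hw
  have herase : B = (insert z X).erase w := by
    rw [hinsert]
    refine eq_of_subset_of_card_le (subset_erase.2 ⟨subset_union_left, hwB⟩) ?_
    rw [card_erase_of_mem (mem_union_right B hwX), h.sized_upper hunion, h.sized_lower hB]
    lia
  exact herase ▸ hB

theorem exchangeClosed (h : ThreeValid r 𝒜 ℬ) (hℬ : 2 * #ℬ = (d + 1) * (d + 2))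
    (hdeg : ∀ B ∈ ℬ, upDegree 𝒜 B = d) : ExchangeClosed 𝒜 ℬ := by
  suffices hpair : ∀ X ∈ ℬ, ∀ Y ∈ ℬ, ∀ z ∈ Y \ X,
      insert z X ∈ 𝒜 ∧ ∀ w ∈ X \ Y, (insert z X).erase w ∈ ℬ from
    ⟨fun X hX Y hY z hz ↦ (hpair X hX Y hY z hz).1,
      fun X hX Y hY z hz ↦ (hpair X hX Y hY z hz).2⟩
  intro X hX Y hY z hz
  rw [← h.far_union_insert_neighbors_eq hℬ hdeg hY, mem_union, mem_insert] at hX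
  rcases hX with hfar | rfl | hneighbor
  · have htight := h.card_neighbors_add_four_mul_card_far_le hℬ hdeg hY
    exact h.insert_mem_and_erase_mem_of_tight hY htight hfar hz
  · simp at hz
  · exact h.insert_mem_and_erase_mem_of_mem_neighbors hY hneighbor hz

theorem subset_sup_lower (h : ThreeValid r 𝒜 ℬ) (hA : A ∈ 𝒜) : A ⊆ ℬ.sup id := by
  intro x hxA
  obtain ⟨y, hy, hyx⟩ : ∃ y ∈ removable ℬ A, y ≠ x :=
    exists_mem_ne (by have := h.three_le_card_removable hA; lia) x
  exact mem_sup.2 ⟨A.erase y, (mem_removable.1 hy).2, mem_erase.2 ⟨hyx.symm, hxA⟩⟩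

theorem subset_upper (h : ThreeValid r 𝒜 ℬ) (hX : ∀ B ∈ ℬ, X ⊆ B) (hA : A ∈ 𝒜) : X ⊆ A := by
  obtain ⟨x, hx⟩ : (removable ℬ A).Nonempty :=
    card_pos.1 (by have := h.three_le_card_removable hA; lia)
  exact (hX _ (mem_removable.1 hx).2).trans (erase_subset x A)

namespace ExchangeClosed

theorem mem_removable_of_notMem (hex : ExchangeClosed 𝒜 ℬ) (h : ThreeValid r 𝒜 ℬ) (hA : A ∈ 𝒜)
    (hB : B ∈ ℬ) {q : α} (hqA : q ∈ A) (hqB : q ∉ B) : q ∈ removable ℬ A := by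
  -- Swapping elements of `A \ B` other than `q` into `B` brings `B` closer to `A` without ever
  -- reaching `q`, so it ends at `A.erase q`.
  induction hn : #(B \ A) generalizing B with
  | zero =>
    have hBA : B ⊆ A := sdiff_eq_empty_iff_subset.1 (card_eq_zero.1 hn)
    have herase : B = A.erase q := by
      refine eq_of_subset_of_card_le (subset_erase.2 ⟨hBA, hqB⟩) ?_
      rw [card_erase_of_mem hqA, h.sized_upper hA, h.sized_lower hB]
      lia
    exact mem_removable.2 ⟨hqA, herase ▸ hB⟩
  | succ n ih =>
    obtain ⟨w, hw⟩ : (B \ A).Nonempty := card_pos.1 (by lia)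
    obtain ⟨hwB, hwA⟩ := mem_sdiff.1 hw
    have hAB : 1 < #(A \ B) := by
      have hAB := card_sdiff_add_card_inter A B
      have hBA := card_sdiff_add_card_inter B A
      rw [h.sized_upper hA] at hAB
      rw [h.sized_lower hB, inter_comm] at hBA
      lia
    obtain ⟨x, hx, hxq⟩ := exists_mem_ne hAB q
    obtain ⟨hxA, hxB⟩ := mem_sdiff.1 hx
    obtain ⟨e, he, hex'⟩ : ∃ e ∈ removable ℬ A, e ≠ x :=
      exists_mem_ne (by have := h.three_le_card_removable hA; lia) x
    have hswap : (insert x B).erase w ∈ ℬ :=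
      hex.erase_insert_mem B hB (A.erase e) (mem_removable.1 he).2
        x (mem_sdiff.2 ⟨mem_erase.2 ⟨hex'.symm, hxA⟩, hxB⟩)
        w (mem_sdiff.2 ⟨hwB, fun hmem ↦ hwA (mem_of_mem_erase hmem)⟩)
    refine ih hswap (by simp [hxq.symm, hqB]) ?_
    rw [erase_sdiff_comm, insert_sdiff_of_mem _ hxA, card_erase_of_mem hw, hn]
    lia

theorem exists_common_subset (hex : ExchangeClosed 𝒜 ℬ) {k : ℕ} (h : ThreeValid (k + 2) 𝒜 ℬ)
    (hthree : ∀ A ∈ 𝒜, #(removable ℬ A) = 3) (hne : ℬ.Nonempty) :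
    ∃ S, #S = k ∧ ∀ B ∈ ℬ, S ⊆ B := by
  obtain rfl | ⟨A, hA⟩ := 𝒜.eq_empty_or_nonempty
  · obtain ⟨B, hB⟩ := hne
    obtain ⟨S, hSB, hS⟩ := exists_subset_card_eq (s := B) (n := k) (by rw [h.sized_lower hB]; lia)
    refine ⟨S, hS, fun X hX ↦ hSB.trans fun z hzB ↦ ?_⟩
    by_contra hzX
    exact notMem_empty _ (hex.insert_mem X hX B hB z (mem_sdiff.2 ⟨hzB, hzX⟩))
  · refine ⟨A \ removable ℬ A, ?_, fun B hB q hq ↦ ?_⟩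
    · rw [card_sdiff_of_subset removable_subset, h.sized_upper hA, hthree A hA]
      lia
    · obtain ⟨hqA, hq⟩ := mem_sdiff.1 hq
      exact by_contra fun hqB ↦ hq (hex.mem_removable_of_notMem h hA hB hqA hqB)

theorem upDegree_eq_card_sdiff (hex : ExchangeClosed 𝒜 ℬ) (h : ThreeValid r 𝒜 ℬ) (hB : B ∈ ℬ) :
    upDegree 𝒜 B = #(ℬ.sup id \ B) := by
  have himage : ({A ∈ 𝒜 | B ⊆ A} : Finset _) = (ℬ.sup id \ B).image (insert · B) := by
    ext A
    simp only [mem_filter, mem_image]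
    constructor
    · rintro ⟨hA, hBA⟩
      obtain ⟨z, hzB, rfl⟩ := exists_eq_insert_iff.2
        ⟨hBA, by rw [h.sized_lower hB, h.sized_upper hA]⟩
      exact ⟨z, mem_sdiff.2 ⟨h.subset_sup_lower hA (mem_insert_self z B), hzB⟩, rfl⟩
    · rintro ⟨z, hz, rfl⟩
      obtain ⟨hzU, hzB⟩ := mem_sdiff.1 hz
      obtain ⟨Y, hY, hzY⟩ := mem_sup.1 hzU
      exact ⟨hex.insert_mem B hB Y hY z (mem_sdiff.2 ⟨hzY, hzB⟩), subset_insert z B⟩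
  rw [upDegree, himage, card_image_of_injOn]
  exact (insert_inj_on B).mono fun z hz ↦ (mem_sdiff.1 (mem_coe.1 hz)).2

theorem card_sup_sdiff (hex : ExchangeClosed 𝒜 ℬ) (h : ThreeValid r 𝒜 ℬ) (hB : B ∈ ℬ)
    (hXB : X ⊆ B) : #(ℬ.sup id \ X) + #X = r + upDegree 𝒜 B := by
  have hBU : B ⊆ ℬ.sup id := le_sup (f := id) hB
  rw [hex.upDegree_eq_card_sdiff h hB, card_sdiff_add_card_eq_card (hXB.trans hBU), add_comm,
    ← h.sized_lower hB, card_sdiff_add_card_eq_card hBU]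

end ExchangeClosed

end ThreeValid

open ThreeValid in
theorem stmt_9_general {k c : ℕ} (hc : 2 ≤ c) (h : ThreeValid (k + 2) 𝒜 ℬ)
    (hℬ : #ℬ = c.choose 2) (h𝒜 : #𝒜 = c.choose 3) :
    ∃ S T : Finset α, #S = k ∧ #T = c ∧ Disjoint S T ∧
      ℬ = (T.powersetCard 2).image (S ∪ ·) ∧ 𝒜 = (T.powersetCard 3).image (S ∪ ·) := by
  obtain ⟨d, rfl⟩ := Nat.exists_eq_add_of_le' hc
  have hℬ' : 2 * #ℬ = (d + 1) * (d + 2) := hℬ ▸ two_mul_choose_two d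
  have h𝒜' : 3 * #𝒜 = #ℬ * d := by rw [hℬ, h𝒜, three_mul_choose_three]
  have hdeg : ∀ B ∈ ℬ, upDegree 𝒜 B = d := fun _ ↦ h.upDegree_eq hℬ' h𝒜'
  have hex : ExchangeClosed 𝒜 ℬ := h.exchangeClosed hℬ' hdeg
  have hne : ℬ.Nonempty := card_pos.1 (hℬ ▸ Nat.choose_pos hc)
  obtain ⟨S, hS, hSℬ⟩ := hex.exists_common_subset h (fun _ ↦ h.card_removable_eq_three hdeg h𝒜')
    hne
  have hT : #(ℬ.sup id \ S) = d + 2 := by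
    obtain ⟨B, hB⟩ := hne
    have hcard := hex.card_sup_sdiff h hB (hSℬ B hB)
    rw [hS, hdeg B hB] at hcard
    lia
  refine ⟨S, ℬ.sup id \ S, hS, hT, disjoint_sdiff, ?_, ?_⟩
  · exact eq_image_union_powersetCard hSℬ
      (fun B hB ↦ sdiff_subset_sdiff (le_sup (f := id) hB) Subset.rfl)
      (hS ▸ h.sized_lower) (hT ▸ hℬ)
  · exact eq_image_union_powersetCard (fun _ ↦ h.subset_upper hSℬ)
      (fun A hA ↦ sdiff_subset_sdiff (h.subset_sup_lower hA) Subset.rfl)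
      (hS ▸ h.sized_upper) (hT ▸ h𝒜)

end Families

theorem stmt_9 (r c : ℕ) (hr : 3 ≤ r) (hc : 29 ≤ c)
    (𝒜 ℬ : Finset (Finset ℕ)) (hvalid : ValidPair r 3 𝒜 ℬ)
    (hb : ℬ.card = c.choose 2) (ha : 𝒜.card = c.choose 3) :
    ∃ S T : Finset ℕ, S.card = r - 3 ∧ T.card = c ∧ Disjoint S T ∧
      ℬ = (T.powersetCard 2).image (fun X => S ∪ X) ∧
      𝒜 = (T.powersetCard 3).image (fun X => S ∪ X) := by
  obtain ⟨k, rfl⟩ := Nat.exists_eq_add_of_le' hr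
  exact stmt_9_general (by lia) ⟨hvalid.1, hvalid.2.1, hvalid.2.2⟩ hb ha
end

section
/- Let k ≥ 1 and let H be a k-uniform hypergraph with vertex set V of size b ≥ 1 and edge set E of size a ≥ 1 (each edge is a k-element subset of V). For i ≥ 1, a walk of length i in H is a sequence (v_0, e_1, v_1, e_2, v_2, ..., e_i, v_i) with each e_j ∈ E and v_{j-1}, v_j ∈ e_j (vertices and edges may repeat). Then the number of walks of length i in H is at least b·(a k² / b)^i. -/
/-! Let `W n` be the number of walks of length `n`. Cutting a walk of length `m + n` at its `m`-th
vertex writes `W (m + n)` as an inner product, over the vertices, of the numbers of walks of length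
`m` and `n` leaving a vertex; cutting in the middle of a step gives an inner product over the edges.
By Cauchy–Schwarz, with the cut chosen according to the parity of `n`,
`W (n + 1) ^ 2 ≤ W n * W (n + 2)`. Hence the ratios `W (n + 1) / W n` are nondecreasing, so they are
all at least `W 1 / W 0 = (∑ e ∈ E, #e ^ 2) / #V`. -/

open Finset

section LogConvex

variable {R : Type*} {u : ℕ → R}

theorem mul_le_mul_succ_of_sq_le_mul [CommSemiring R] [LinearOrder R] [IsStrictOrderedRing R]
    (hu : ∀ n, 0 ≤ u n) (hlog : ∀ n, u (n + 1) ^ 2 ≤ u n * u (n + 2)) (n : ℕ) :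
    u 1 * u n ≤ u 0 * u (n + 1) := by
  induction n with
  | zero => rw [mul_comm]
  | succ n ih =>
    rcases (hu n).eq_or_lt with hzero | hpos
    · have hsucc : u (n + 1) = 0 := by
        have hsq := hlog n
        rw [← hzero, zero_mul] at hsq
        exact (not_lt.1 fun hpos ↦ (pow_pos hpos 2).not_ge hsq).antisymm (hu _)
      rw [hsucc, mul_zero]
      exact mul_nonneg (hu _) (hu _)
    · refine le_of_mul_le_mul_left ?_ hpos
      calc u n * (u 1 * u (n + 1)) = (u 1 * u n) * u (n + 1) := by ring
        _ ≤ (u 0 * u (n + 1)) * u (n + 1) := mul_le_mul_of_nonneg_right ih (hu _)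
        _ = u 0 * u (n + 1) ^ 2 := by ring
        _ ≤ u 0 * (u n * u (n + 2)) := mul_le_mul_of_nonneg_left (hlog n) (hu 0)
        _ = u n * (u 0 * u (n + 2)) := by ring

theorem mul_div_pow_le_of_sq_le_mul [Field R] [LinearOrder R] [IsStrictOrderedRing R]
    (h0 : 0 < u 0) (hu : ∀ n, 0 ≤ u n) (hlog : ∀ n, u (n + 1) ^ 2 ≤ u n * u (n + 2)) (n : ℕ) :
    u 0 * (u 1 / u 0) ^ n ≤ u n := by
  induction n with
  | zero => simp
  | succ n ih =>
    calc u 0 * (u 1 / u 0) ^ (n + 1) = u 1 / u 0 * (u 0 * (u 1 / u 0) ^ n) := by ring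
      _ ≤ u 1 / u 0 * u n := mul_le_mul_of_nonneg_left ih (div_nonneg (hu 1) h0.le)
      _ ≤ u (n + 1) := by
        rw [div_mul_eq_mul_div, div_le_iff₀' h0]
        exact mul_le_mul_succ_of_sq_le_mul hu hlog n

end LogConvex

section Walks

variable {α : Type*}

/-- The walks of length `n` in the hypergraph with edge set `E`. The walk
`(v₀, e₁, v₁, …, eₙ, vₙ)` is encoded as the pair of its vertex sequence and its edge sequence, with
`eⱼ₊₁` at index `j`. For `n = 0` the vertex is arbitrary, even if it lies in no edge. -/
def walks (E : Finset (Finset α)) (n : ℕ) : Set ((Fin (n + 1) → α) × (Fin n → Finset α)) :=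
  {w | ∀ j : Fin n, w.2 j ∈ E ∧ w.1 j.castSucc ∈ w.2 j ∧ w.1 j.succ ∈ w.2 j}

theorem cons_mem_walks {E : Finset (Finset α)} {n : ℕ} {v : α} {e : Finset α}
    {w : (Fin (n + 1) → α) × (Fin n → Finset α)} :
    (Fin.cons v w.1, Fin.cons e w.2) ∈ walks E (n + 1) ↔
      (e ∈ E ∧ v ∈ e ∧ w.1 0 ∈ e) ∧ w ∈ walks E n := by
  simp [walks, Fin.forall_fin_succ (n := n)]

variable [DecidableEq α]

/-- The walks of length `n` starting at `v`, enumerated by their first edge, their second vertex and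
the rest of the walk. -/
def walksFrom (E : Finset (Finset α)) :
    (n : ℕ) → α → Finset ((Fin (n + 1) → α) × (Fin n → Finset α))
  | 0, v => {(fun _ ↦ v, Fin.elim0)}
  | n + 1, v =>
    ({e ∈ E | v ∈ e}.sigma fun e ↦ e.sigma fun u ↦ walksFrom E n u).image fun p ↦
      (Fin.cons v p.2.2.1, Fin.cons p.1 p.2.2.2)

theorem mem_walksFrom {E : Finset (Finset α)} {n : ℕ} {v : α}
    {w : (Fin (n + 1) → α) × (Fin n → Finset α)} :
    w ∈ walksFrom E n v ↔ w.1 0 = v ∧ w ∈ walks E n := by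
  induction n generalizing v with
  | zero =>
    simp [walksFrom, walks, Prod.ext_iff, funext_iff, Fin.forall_fin_one]
  | succ n ih =>
    obtain ⟨x, f⟩ := w
    induction x using Fin.consCases with | _ x₀ x
    induction f using Fin.consCases with | _ e f
    rw [cons_mem_walks (w := (x, f))]
    simp only [walksFrom, mem_image, mem_sigma, mem_filter, ih, Sigma.exists, Prod.exists,
      Prod.mk.injEq, Fin.cons_inj, Fin.cons_zero]
    constructor
    · rintro ⟨e, u, x, f, ⟨⟨he, hv⟩, hu, rfl, hw⟩, ⟨rfl, rfl⟩, rfl, rfl⟩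
      exact ⟨rfl, ⟨he, hv, hu⟩, hw⟩
    · rintro ⟨rfl, ⟨he, hv, hu⟩, hw⟩
      exact ⟨e, x 0, x, f, ⟨⟨he, hv⟩, hu, rfl, hw⟩, ⟨rfl, rfl⟩, rfl, rfl⟩

theorem card_walksFrom_zero (E : Finset (Finset α)) (v : α) : #(walksFrom E 0 v) = 1 :=
  card_singleton _

theorem card_walksFrom_succ (E : Finset (Finset α)) (n : ℕ) (v : α) :
    #(walksFrom E (n + 1) v) = ∑ e ∈ E with v ∈ e, ∑ u ∈ e, #(walksFrom E n u) := by
  rw [walksFrom, card_image_of_injOn, card_sigma]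
  · simp only [card_sigma]
  · rintro ⟨e, u, x, f⟩ hp ⟨e', u', x', f'⟩ hp' heq
    simp only [coe_sigma, Set.mem_sigma_iff, mem_coe, mem_walksFrom] at hp hp'
    simp only [Prod.mk.injEq, Fin.cons_inj, true_and] at heq
    obtain ⟨rfl, rfl, rfl⟩ := heq
    obtain rfl : u = u' := hp.2.2.1.symm.trans hp'.2.2.1
    rfl

variable {V : Finset α} {E : Finset (Finset α)}

theorem ncard_walks (hE : ∀ e ∈ E, e ⊆ V) {n : ℕ} (hn : n ≠ 0) :
    (walks E n).ncard = ∑ v ∈ V, #(walksFrom E n v) := by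
  have hunion : walks E n = V.biUnion (walksFrom E n) := by
    ext w
    simp only [mem_coe, mem_biUnion, mem_walksFrom]
    refine ⟨fun hw ↦ ?_, fun ⟨_, _, _, hw⟩ ↦ hw⟩
    have hfirst := hw ⟨0, Nat.pos_of_ne_zero hn⟩
    exact ⟨w.1 0, hE _ hfirst.1 hfirst.2.1, rfl, hw⟩
  rw [hunion, Set.ncard_coe_finset, card_biUnion]
  intro u _ v _ huv
  refine disjoint_left.2 fun w hu hv ↦ huv ?_
  rw [mem_walksFrom] at hu hv
  exact hu.1.symm.trans hv.1

theorem sum_mul_sum_filter_mem {R : Type*} [NonUnitalNonAssocSemiring R]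
    (hE : ∀ e ∈ E, e ⊆ V) (f g : α → R) :
    ∑ v ∈ V, f v * ∑ e ∈ E with v ∈ e, ∑ u ∈ e, g u =
      ∑ e ∈ E, (∑ v ∈ e, f v) * ∑ u ∈ e, g u := by
  simp only [mul_sum (s := filter _ _), sum_mul (f := f)]
  refine sum_comm' fun v e ↦ ?_
  simp only [mem_filter]
  exact ⟨fun h ↦ ⟨h.2.2, h.2.1⟩, fun h ↦ ⟨hE e h.2 h.1, h.2, h.1⟩⟩

theorem sum_card_walksFrom_mul_succ (hE : ∀ e ∈ E, e ⊆ V) (m n : ℕ) :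
    ∑ v ∈ V, #(walksFrom E m v) * #(walksFrom E (n + 1) v) =
      ∑ e ∈ E, (∑ v ∈ e, #(walksFrom E m v)) * ∑ v ∈ e, #(walksFrom E n v) := by
  simp only [card_walksFrom_succ]
  exact sum_mul_sum_filter_mem hE _ _

theorem sum_card_walksFrom_mul (hE : ∀ e ∈ E, e ⊆ V) (m n : ℕ) :
    ∑ v ∈ V, #(walksFrom E m v) * #(walksFrom E n v) = ∑ v ∈ V, #(walksFrom E (m + n) v) := by
  induction m generalizing n with
  | zero =>
    rw [zero_add n]
    simp only [card_walksFrom_zero, one_mul]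
  | succ m ih =>
    calc ∑ v ∈ V, #(walksFrom E (m + 1) v) * #(walksFrom E n v)
        = ∑ v ∈ V, #(walksFrom E n v) * #(walksFrom E (m + 1) v) := by simp only [mul_comm]
      _ = ∑ v ∈ V, #(walksFrom E m v) * #(walksFrom E (n + 1) v) := by
        simp only [sum_card_walksFrom_mul_succ hE, mul_comm]
      _ = ∑ v ∈ V, #(walksFrom E (m + 1 + n) v) := by rw [ih, Nat.succ_add_eq_add_succ]

theorem sum_card_walksFrom_one (hE : ∀ e ∈ E, e ⊆ V) :
    ∑ v ∈ V, #(walksFrom E 1 v) = ∑ e ∈ E, #e ^ 2 := by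
  simpa only [card_walksFrom_zero, one_mul, sum_const, smul_eq_mul, mul_one, sq]
    using sum_card_walksFrom_mul_succ hE 0 0

theorem sq_sum_card_walksFrom_succ_le (hE : ∀ e ∈ E, e ⊆ V) (n : ℕ) :
    (∑ v ∈ V, #(walksFrom E (n + 1) v)) ^ 2 ≤
      (∑ v ∈ V, #(walksFrom E n v)) * ∑ v ∈ V, #(walksFrom E (n + 2) v) := by
  rcases n.even_or_odd' with ⟨m, rfl | rfl⟩
  · have hcauchy := sum_mul_sq_le_sq_mul_sq V
      (fun v ↦ #(walksFrom E m v)) (fun v ↦ #(walksFrom E (m + 1) v))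
    simp only [sq (#_), sum_card_walksFrom_mul hE] at hcauchy
    rwa [show m + (m + 1) = 2 * m + 1 by ring, ← two_mul m,
      show m + 1 + (m + 1) = 2 * m + 2 by ring] at hcauchy
  · have hcauchy := sum_mul_sq_le_sq_mul_sq E
      (fun e ↦ ∑ v ∈ e, #(walksFrom E m v)) (fun e ↦ ∑ v ∈ e, #(walksFrom E (m + 1) v))
    simp only [sq (∑ _ ∈ _, #_), ← sum_card_walksFrom_mul_succ hE] at hcauchy
    simp only [sum_card_walksFrom_mul hE] at hcauchy
    rwa [show m + (m + 1 + 1) = 2 * m + 1 + 1 by ring, show m + (m + 1) = 2 * m + 1 by ring,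
      show m + 1 + (m + 1 + 1) = 2 * m + 1 + 2 by ring] at hcauchy

end Walks

theorem stmt_11_general {α : Type*} {V : Finset α} {E : Finset (Finset α)} (hV : V.Nonempty)
    (hE : ∀ e ∈ E, e ⊆ V) {i : ℕ} (hi : i ≠ 0) :
    (#V : ℝ) * ((∑ e ∈ E, (#e : ℝ) ^ 2) / #V) ^ i ≤ (walks E i).ncard := by
  classical
  let W (n : ℕ) : ℝ := (∑ v ∈ V, #(walksFrom E n v) : ℕ)
  have hW₀ : W 0 = #V := by simp [W, card_walksFrom_zero]
  have hW₁ : W 1 = ∑ e ∈ E, (#e : ℝ) ^ 2 := by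
    dsimp only [W]
    exact_mod_cast sum_card_walksFrom_one hE
  have hlog (n : ℕ) : W (n + 1) ^ 2 ≤ W n * W (n + 2) := by
    dsimp only [W]
    exact_mod_cast sq_sum_card_walksFrom_succ_le hE n
  have hpos : 0 < W 0 := by rw [hW₀]; exact_mod_cast hV.card_pos
  rw [ncard_walks hE hi, ← hW₀, ← hW₁]
  exact mul_div_pow_le_of_sq_le_mul hpos (fun n ↦ Nat.cast_nonneg _) hlog i

theorem stmt_11 (k b a i : ℕ) (hk : 1 ≤ k) (hi : 1 ≤ i)
    (V : Finset ℕ) (E : Finset (Finset ℕ))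
    (hV : V.card = b) (hE : E.card = a) (hb : 1 ≤ b) (ha : 1 ≤ a)
    (hedge : ∀ e ∈ E, e ⊆ V ∧ e.card = k) :
    (b : ℝ) * ((a * k ^ 2 : ℝ) / b) ^ i ≤
      Set.ncard {w : (Fin (i + 1) → ℕ) × (Fin i → Finset ℕ) |
        ∀ j : Fin i, w.2 j ∈ E ∧ w.1 j.castSucc ∈ w.2 j ∧ w.1 j.succ ∈ w.2 j} := by
  have hsum : ∑ e ∈ E, (#e : ℝ) ^ 2 = a * k ^ 2 := by
    rw [sum_congr rfl fun e he ↦ by rw [(hedge e he).2], sum_const, hE, nsmul_eq_mul]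
  rw [← hV, ← hsum]
  exact stmt_11_general (card_pos.1 (hV ▸ hb)) (fun e he ↦ (hedge e he).1) (by lia)
end

section
/- For every integer k ≥ 2 there exists a constant D > 0 (depending only on k) such that for all integers r ≥ k, every k-valid pair (𝒜, ℬ) with |ℬ| = b ≥ 2 and |𝒜| = a satisfies a ≤ b^{k/(k-1)}·((k−1)!)^{1/(k-1)}/k + D·b·ln b. -/
/-! Fix in every `A ∈ 𝒜` a set `S A` of `k` elements `t` with `A \ t ∈ ℬ`, and let `d B` be the
number of ways of adding to `B` an element that is chosen in the resulting member of `𝒜`. Each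
`B ∈ ℬ` contributes at most `1` to `∑ A, ∑ t ∈ S A, 1 / d (A \ t)`, so by AM-GM the average of
`∑ t ∈ S A, log d (A \ t)` is at least `k log (k |𝒜| / |ℬ|)`. It is also at most
`log (k! |𝒜|)`, which gives the bound without any error term.

The upper estimate is a form of the chain rule for entropy and holds for chosen sets `S A` of
arbitrary sizes, with `log (k! |𝒜|)` replaced by `log |𝒜|` plus the average of `log |S A|!`. By
induction it holds in each star `{A ∈ 𝒜 | x ∈ A}`. Summing over `x` reduces it to one inequality
about the sizes of the stars, proved by replacing a chosen element `t` of `A` with a random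
element that is chosen in some member of `𝒜` above `A \ t`, and applying AM-GM twice. -/

open Finset
open scoped Nat FinsetFamily

/-- AM-GM in logarithmic form. -/
lemma sum_log_le_card_mul_log {ι : Type*} {s : Finset ι} {y : ι → ℝ} {c : ℝ}
    (hy : ∀ i ∈ s, 0 < y i) (hc : ∑ i ∈ s, y i ≤ #s * c) :
    ∑ i ∈ s, Real.log (y i) ≤ #s * Real.log c := by
  obtain rfl | hs := s.eq_empty_or_nonempty
  · simp
  have hcard : (0 : ℝ) < #s := by exact_mod_cast hs.card_pos
  have hc0 : 0 < c := pos_of_mul_pos_right ((sum_pos hy hs).trans_le hc) hcard.le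
  calc ∑ i ∈ s, Real.log (y i)
    _ ≤ ∑ i ∈ s, (y i / c - 1 + Real.log c) := sum_le_sum fun i hi ↦ by
        have := Real.log_le_sub_one_of_pos (div_pos (hy i hi) hc0)
        rw [Real.log_div (hy i hi).ne' hc0.ne'] at this
        linarith
    _ = (∑ i ∈ s, y i) / c - #s + #s * Real.log c := by
        simp only [sum_add_distrib, sum_sub_distrib, sum_div, sum_const, nsmul_eq_mul, mul_one]
    _ ≤ #s * Real.log c := by
        have := (div_le_iff₀ hc0).2 hc
        linarith

lemma sum_log_add_sum_log_le {ι : Type*} [DecidableEq ι] {V T : Finset ι} (hT : T ⊆ V) {y z : ι → ℝ}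
    {c : ℝ} (hy : ∀ x ∈ V \ T, 0 < y x) (hz : ∀ t ∈ T, 0 < z t)
    (hc : ∑ x ∈ V \ T, y x + ∑ t ∈ T, z t ≤ #V * c) :
    ∑ x ∈ V \ T, Real.log (y x) + ∑ t ∈ T, Real.log (z t) ≤ #V * Real.log c := by
  have hcard : #((V \ T).disjSum T) = #V := by rw [card_disjSum, card_sdiff_add_card_eq_card hT]
  have := sum_log_le_card_mul_log (s := (V \ T).disjSum T) (y := Sum.elim y z) (c := c)
    (by
      rintro (x | t) h
      exacts [hy x (inl_mem_disjSum.1 h), hz t (inr_mem_disjSum.1 h)])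
    (by simpa [hcard] using hc)
  simpa [hcard] using this

lemma sum_log_add_log_card_le {ι : Type*} {s : Finset ι} {y : ι → ℝ} (hy : ∀ i ∈ s, 0 < y i) :
    ∑ i ∈ s, (Real.log (y i) + Real.log #s) ≤ #s * Real.log (∑ i ∈ s, y i) := by
  obtain rfl | hs := s.eq_empty_or_nonempty
  · simp
  have hcard : (0 : ℝ) < #s := by exact_mod_cast hs.card_pos
  have := sum_log_le_card_mul_log hy (mul_div_cancel₀ (∑ i ∈ s, y i) hcard.ne').ge
  rw [Real.log_div (sum_pos hy hs).ne' hcard.ne'] at this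
  rw [sum_add_distrib, sum_const, nsmul_eq_mul]
  linarith

lemma add_sum_div_card_le {ι : Type*} {T : Finset ι} {u c : ℝ} {w : ι → ℝ} (hu : u ≤ c)
    (hw : ∀ t ∈ T, u + w t ≤ c) : u + ∑ t ∈ T, w t / #T ≤ c := by
  obtain rfl | hT := T.eq_empty_or_nonempty
  · simpa using hu
  have hcard : (0 : ℝ) < #T := by exact_mod_cast hT.card_pos
  have hsum : ∑ t ∈ T, w t ≤ #T * (c - u) := by
    rw [← nsmul_eq_mul]
    exact sum_le_card_nsmul T w (c - u) fun t ht ↦ le_sub_iff_add_le'.2 (hw t ht)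
  rw [← sum_div]
  linarith [(div_le_iff₀' hcard).2 hsum]

lemma sum_erase_sub_log_factorial {ι : Type*} [DecidableEq ι] {V T : Finset ι}
    (hT : T ⊆ V) (g : ι → ℝ) :
    ∑ x ∈ V, (∑ t ∈ T.erase x, g t - Real.log ((#(T.erase x))! : ℝ)) +
        ∑ t ∈ T, (g t - Real.log #T) =
      #V * (∑ t ∈ T, g t - Real.log ((#T)! : ℝ)) := by
  rw [← inter_eq_right.2 hT, ← sum_ite_mem V T, inter_eq_right.2 hT, ← sum_add_distrib,
    ← nsmul_eq_mul, ← sum_const]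
  refine sum_congr rfl fun x _ ↦ ?_
  split_ifs with hx
  · have hcard : (#T : ℝ) ≠ 0 := by exact_mod_cast card_ne_zero_of_mem hx
    have hfact : Real.log ((#T)! : ℝ) = Real.log #T + Real.log ((#T - 1)! : ℝ) := by
      rw [← Nat.mul_factorial_pred (card_ne_zero_of_mem hx), Nat.cast_mul,
        Real.log_mul hcard (by positivity)]
    rw [card_erase_of_mem hx, ← sum_erase_add T g hx, hfact]
    ring
  · rw [erase_eq_of_notMem hx, add_zero]

section MarkedFamily

variable {α : Type*} [DecidableEq α] {𝒜 ℬ : Finset (Finset α)} {S : Finset α → Finset α}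
  {A L B : Finset α} {x : α}

/-- The star of `L` in the family `𝒜`: the members of `𝒜` containing `L`. -/
def starOf (𝒜 : Finset (Finset α)) (L : Finset α) : Finset (Finset α) :=
  {A ∈ 𝒜 | L ⊆ A}

/-- The marked extensions of `B`, where the elements of `S A` are regarded as marked in `A`: the new
elements `x` that are marked in `B ∪ {x} ∈ 𝒜`. They are drawn from the union of `𝒜` only to get a
`Finset`. -/
def markedExtensions (𝒜 : Finset (Finset α)) (S : Finset α → Finset α) (B : Finset α) : Finset α :=
  {x ∈ 𝒜.biUnion id | x ∉ B ∧ insert x B ∈ 𝒜 ∧ x ∈ S (insert x B)}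

lemma mem_starOf : A ∈ starOf 𝒜 L ↔ A ∈ 𝒜 ∧ L ⊆ A :=
  mem_filter

lemma mem_markedExtensions :
    x ∈ markedExtensions 𝒜 S B ↔ x ∉ B ∧ insert x B ∈ 𝒜 ∧ x ∈ S (insert x B) := by
  refine mem_filter.trans (and_iff_right_of_imp fun h ↦ ?_)
  exact subset_biUnion_of_mem id h.2.1 (mem_insert_self x B)

lemma mem_markedExtensions_erase (hS : ∀ A ∈ 𝒜, S A ⊆ A) (hA : A ∈ 𝒜) (hx : x ∈ S A) :
    x ∈ markedExtensions 𝒜 S (A.erase x) := by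
  rw [mem_markedExtensions, insert_erase (hS A hA hx)]
  exact ⟨notMem_erase x A, hA, hx⟩

lemma card_starOf_insert_pos (hA : A ∈ starOf 𝒜 L) (hx : x ∈ A) :
    0 < #(starOf 𝒜 (insert x L)) :=
  card_pos.2 ⟨A, mem_starOf.2
    ⟨(mem_starOf.1 hA).1, insert_subset hx (mem_starOf.1 hA).2⟩⟩

lemma sum_starOf_insert {M : Type*} [AddCommMonoid M] (g : α → Finset α → M) :
    ∑ x ∈ 𝒜.biUnion id \ L, ∑ A ∈ starOf 𝒜 (insert x L), g x A =
      ∑ A ∈ starOf 𝒜 L, ∑ x ∈ A \ L, g x A := by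
  refine sum_comm' fun x A ↦ ?_
  simp only [mem_sdiff, mem_starOf, insert_subset_iff]
  have hmem : A ∈ 𝒜 → x ∈ A → x ∈ 𝒜.biUnion id := fun hA hx ↦ subset_biUnion_of_mem id hA hx
  tauto

lemma sum_marks_eq_sum_markedExtensions (hS : ∀ A ∈ 𝒜, S A ⊆ A)
    (hℬ : ∀ A ∈ 𝒜, ∀ t ∈ S A, A.erase t ∈ ℬ) {M : Type*} [AddCommMonoid M] (L : Finset α)
    (g : Finset α → α → M) :
    ∑ A ∈ starOf 𝒜 L, ∑ t ∈ S A \ L, g (A.erase t) t =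
      ∑ B ∈ ℬ with L ⊆ B, ∑ x ∈ markedExtensions 𝒜 S B, g B x := by
  rw [sum_sigma', sum_sigma']
  refine sum_bij' (fun p _ ↦ ⟨p.1.erase p.2, p.2⟩) (fun q _ ↦ ⟨insert q.2 q.1, q.2⟩)
    ?_ ?_ ?_ ?_ fun _ _ ↦ rfl
  · rintro ⟨A, t⟩ h
    simp only [mem_sigma, mem_starOf, mem_sdiff, mem_filter] at h ⊢
    obtain ⟨⟨hA, hL⟩, ht, htL⟩ := h
    exact ⟨⟨hℬ A hA t ht, subset_erase.2 ⟨hL, htL⟩⟩, mem_markedExtensions_erase hS hA ht⟩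
  · rintro ⟨B, x⟩ h
    simp only [mem_sigma, mem_starOf, mem_sdiff, mem_filter, mem_markedExtensions] at h ⊢
    obtain ⟨⟨-, hL⟩, hx, hins, hxS⟩ := h
    exact ⟨⟨hins, hL.trans (subset_insert x B)⟩, hxS, fun hxL ↦ hx (hL hxL)⟩
  · rintro ⟨A, t⟩ h
    simp only [mem_sigma, mem_starOf, mem_sdiff] at h
    simp only [insert_erase (hS A h.1.1 h.2.1)]
  · rintro ⟨B, x⟩ h
    simp only [mem_sigma, mem_markedExtensions] at h
    simp only [erase_insert h.2.1]

/-- The total size of the stars of `L ∪ {x}` over the marked extensions `x` of `B`; it compares the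
star of a marked element of `A` with the stars of the elements that can replace it. -/
def resampleWeight (𝒜 : Finset (Finset α)) (S : Finset α → Finset α) (L B : Finset α) : ℕ :=
  ∑ x ∈ markedExtensions 𝒜 S B, #(starOf 𝒜 (insert x L))

lemma resampleWeight_erase_pos (hS : ∀ A ∈ 𝒜, S A ⊆ A) (hA : A ∈ starOf 𝒜 L) (hx : x ∈ S A) :
    0 < resampleWeight 𝒜 S L (A.erase x) := by
  have hA𝒜 := (mem_starOf.1 hA).1
  exact sum_pos' (fun _ _ ↦ Nat.zero_le _) ⟨x, mem_markedExtensions_erase hS hA𝒜 hx,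
    card_starOf_insert_pos hA (hS A hA𝒜 hx)⟩

lemma sum_log_add_log_card_le_sum_log_resampleWeight (hS : ∀ A ∈ 𝒜, S A ⊆ A) (L : Finset α) :
    ∑ A ∈ starOf 𝒜 L, ∑ t ∈ S A \ L, (Real.log #(starOf 𝒜 (insert t L)) +
        Real.log #(markedExtensions 𝒜 S (A.erase t))) ≤
      ∑ A ∈ starOf 𝒜 L, ∑ t ∈ S A \ L, Real.log (resampleWeight 𝒜 S L (A.erase t)) := by
  have hshadow : ∀ A ∈ 𝒜, ∀ t ∈ S A, A.erase t ∈ ∂ 𝒜 :=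
    fun A hA t ht ↦ erase_mem_shadow hA (hS A hA ht)
  rw [sum_marks_eq_sum_markedExtensions hS hshadow L fun B t ↦
      Real.log #(starOf 𝒜 (insert t L)) + Real.log #(markedExtensions 𝒜 S B),
    sum_marks_eq_sum_markedExtensions hS hshadow L fun B _ ↦ Real.log (resampleWeight 𝒜 S L B)]
  refine sum_le_sum fun B hB ↦ ?_
  rw [sum_const, nsmul_eq_mul, resampleWeight, Nat.cast_sum]
  refine sum_log_add_log_card_le fun x hx ↦ Nat.cast_pos.2 ?_
  exact card_starOf_insert_pos (mem_starOf.2 ⟨(mem_markedExtensions.1 hx).2.1,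
    (mem_filter.1 hB).2.trans (subset_insert x B)⟩) (mem_insert_self x B)

lemma sum_card_starOf_insert {n : ℕ} (hn : ∀ A ∈ starOf 𝒜 L, #(A \ L) = n) :
    ∑ x ∈ 𝒜.biUnion id \ L, #(starOf 𝒜 (insert x L)) = n * #(starOf 𝒜 L) := by
  have h := sum_starOf_insert (𝒜 := 𝒜) (L := L) fun _ _ ↦ 1
  simp only [← card_eq_sum_ones] at h
  rw [h, sum_congr rfl hn, sum_const, smul_eq_mul, mul_comm]

lemma sum_unmarked_card_starOf_le {n : ℕ} (hn : ∀ A ∈ starOf 𝒜 L, #(A \ L) = n)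
    (hA : A ∈ starOf 𝒜 L) :
    ∑ x ∈ (A \ L) \ (S A \ L), #(starOf 𝒜 (insert x L)) ≤ n * #(starOf 𝒜 L) := by
  rw [← sum_card_starOf_insert hn]
  exact sum_le_sum_of_subset <| sdiff_subset.trans <|
    sdiff_subset_sdiff (subset_biUnion_of_mem id (mem_starOf.1 hA).1) le_rfl

lemma sum_unmarked_add_resampleWeight_le {n : ℕ} (hn : ∀ A ∈ starOf 𝒜 L, #(A \ L) = n)
    (hA : A ∈ starOf 𝒜 L) {t : α} (ht : t ∈ S A \ L) :
    ∑ x ∈ (A \ L) \ (S A \ L), #(starOf 𝒜 (insert x L)) + resampleWeight 𝒜 S L (A.erase t) ≤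
      n * #(starOf 𝒜 L) := by
  obtain ⟨hA𝒜, hLA⟩ := mem_starOf.1 hA
  have hLt : L ⊆ A.erase t := subset_erase.2 ⟨hLA, (mem_sdiff.1 ht).2⟩
  have hdisj : Disjoint ((A \ L) \ (S A \ L)) (markedExtensions 𝒜 S (A.erase t)) := by
    refine disjoint_left.2 fun x hx hext ↦ (mem_markedExtensions.1 hext).1 ?_
    obtain ⟨hxA, hxS⟩ := mem_sdiff.1 hx
    exact mem_erase.2 ⟨fun h ↦ hxS (h ▸ ht), (mem_sdiff.1 hxA).1⟩
  rw [resampleWeight, ← sum_union hdisj, ← sum_card_starOf_insert hn]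
  refine sum_le_sum_of_subset (union_subset ?_ fun x hx ↦ ?_)
  · exact sdiff_subset.trans (sdiff_subset_sdiff (subset_biUnion_of_mem id hA𝒜) le_rfl)
  · exact mem_sdiff.2 ⟨(mem_filter.1 hx).1, fun h ↦ (mem_markedExtensions.1 hx).1 (hLt h)⟩

lemma sum_log_unmarked_add_sum_log_resampleWeight_le (hS : ∀ A ∈ 𝒜, S A ⊆ A) {n : ℕ}
    (hn : ∀ A ∈ starOf 𝒜 L, #(A \ L) = n) (hA : A ∈ starOf 𝒜 L) :
    ∑ x ∈ (A \ L) \ (S A \ L), Real.log #(starOf 𝒜 (insert x L)) +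
        ∑ t ∈ S A \ L, (Real.log (resampleWeight 𝒜 S L (A.erase t)) - Real.log #(S A \ L)) ≤
      n * Real.log #(starOf 𝒜 L) := by
  have hSA : S A ⊆ A := hS A (mem_starOf.1 hA).1
  have hpos_unmarked : ∀ x ∈ (A \ L) \ (S A \ L), (0 : ℝ) < #(starOf 𝒜 (insert x L)) := fun x hx ↦
    Nat.cast_pos.2 (card_starOf_insert_pos hA (mem_sdiff.1 (mem_sdiff.1 hx).1).1)
  have hpos_marked : ∀ t ∈ S A \ L, (0 : ℝ) < resampleWeight 𝒜 S L (A.erase t) := fun t ht ↦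
    Nat.cast_pos.2 (resampleWeight_erase_pos hS hA (mem_sdiff.1 ht).1)
  have hcard_pos : ∀ t ∈ S A \ L, (0 : ℝ) < #(S A \ L) := fun t ht ↦
    Nat.cast_pos.2 (card_pos.2 ⟨t, ht⟩)
  have hsum := add_sum_div_card_le (T := S A \ L)
    (u := ∑ x ∈ (A \ L) \ (S A \ L), (#(starOf 𝒜 (insert x L)) : ℝ))
    (w := fun t ↦ (resampleWeight 𝒜 S L (A.erase t) : ℝ)) (c := n * #(starOf 𝒜 L))
    (mod_cast sum_unmarked_card_starOf_le hn hA)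
    fun t ht ↦ mod_cast sum_unmarked_add_resampleWeight_le hn hA ht
  have h := sum_log_add_sum_log_le
    (sdiff_subset_sdiff hSA le_rfl) hpos_unmarked
    (fun t ht ↦ div_pos (hpos_marked t ht) (hcard_pos t ht)) (by rwa [hn A hA])
  rw [hn A hA] at h
  refine le_of_eq_of_le (congrArg _ <| sum_congr rfl fun t ht ↦ ?_) h
  rw [Real.log_div (hpos_marked t ht).ne' (hcard_pos t ht).ne']

lemma sum_log_card_starOf_insert_le (hS : ∀ A ∈ 𝒜, S A ⊆ A) {n : ℕ}
    (hn : ∀ A ∈ starOf 𝒜 L, #(A \ L) = n) :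
    ∑ A ∈ starOf 𝒜 L, (∑ x ∈ A \ L, Real.log #(starOf 𝒜 (insert x L)) +
        ∑ t ∈ S A \ L, (Real.log #(markedExtensions 𝒜 S (A.erase t)) - Real.log #(S A \ L))) ≤
      n * (#(starOf 𝒜 L) * Real.log #(starOf 𝒜 L)) := by
  have hsplit : ∀ A ∈ starOf 𝒜 L,
      ∑ x ∈ A \ L, Real.log #(starOf 𝒜 (insert x L)) =
        ∑ x ∈ (A \ L) \ (S A \ L), Real.log #(starOf 𝒜 (insert x L)) +
          ∑ x ∈ S A \ L, Real.log #(starOf 𝒜 (insert x L)) := fun A hA ↦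
    (sum_sdiff (sdiff_subset_sdiff (hS A (mem_starOf.1 hA).1) le_rfl)).symm
  have hresample := sum_log_add_log_card_le_sum_log_resampleWeight hS L
  have hmember := sum_le_sum fun A hA ↦ sum_log_unmarked_add_sum_log_resampleWeight_le hS hn hA
  rw [sum_const, nsmul_eq_mul] at hmember
  rw [sum_congr rfl fun A hA ↦ congrArg (· + _) (hsplit A hA)]
  simp only [sum_add_distrib, sum_sub_distrib] at hresample hmember ⊢
  linarith

theorem sum_log_markedExtensions_starOf_le (hS : ∀ A ∈ 𝒜, S A ⊆ A) {n : ℕ}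
    (hn : ∀ A ∈ starOf 𝒜 L, #(A \ L) = n) :
    ∑ A ∈ starOf 𝒜 L, (∑ t ∈ S A \ L, Real.log #(markedExtensions 𝒜 S (A.erase t)) -
        Real.log ((#(S A \ L))! : ℝ)) ≤
      #(starOf 𝒜 L) * Real.log #(starOf 𝒜 L) := by
  induction n generalizing L with
  | zero =>
    refine (sum_nonpos fun A hA ↦ ?_).trans (by positivity)
    have hempty : S A \ L = ∅ := subset_empty.1 <|
      card_eq_zero.1 (hn A hA) ▸ sdiff_subset_sdiff (hS A (mem_starOf.1 hA).1) le_rfl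
    simp [hempty]
  | succ n ih =>
    have hlinks : ∑ A ∈ starOf 𝒜 L, ∑ x ∈ A \ L,
          (∑ t ∈ (S A \ L).erase x, Real.log #(markedExtensions 𝒜 S (A.erase t)) -
            Real.log ((#((S A \ L).erase x))! : ℝ)) ≤
        ∑ A ∈ starOf 𝒜 L, ∑ x ∈ A \ L, Real.log #(starOf 𝒜 (insert x L)) := by
      simp only [← sdiff_insert]
      rw [← sum_starOf_insert, ← sum_starOf_insert]
      refine sum_le_sum fun x hx ↦ ?_
      rw [sum_const, nsmul_eq_mul]
      refine ih fun A hA ↦ ?_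
      obtain ⟨hA𝒜, hinsert⟩ := mem_starOf.1 hA
      have hAL : A ∈ starOf 𝒜 L := mem_starOf.2 ⟨hA𝒜, (subset_insert x L).trans hinsert⟩
      rw [sdiff_insert, card_erase_of_mem (mem_sdiff.2 ⟨hinsert (mem_insert_self x L),
        (mem_sdiff.1 hx).2⟩), hn A hAL, Nat.add_sub_cancel]
    have hstep := sum_log_card_starOf_insert_le hS hn
    rw [sum_add_distrib] at hstep
    refine le_of_mul_le_mul_left (a := ((n + 1 : ℕ) : ℝ)) ?_ (by positivity)
    refine le_trans (le_of_eq ?_) ((add_le_add_left hlinks _).trans hstep)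
    rw [mul_sum, ← sum_add_distrib]
    refine sum_congr rfl fun A hA ↦ ?_
    rw [sum_erase_sub_log_factorial (sdiff_subset_sdiff (hS A (mem_starOf.1 hA).1) le_rfl)
      fun t ↦ Real.log #(markedExtensions 𝒜 S (A.erase t)), hn A hA]

lemma sum_inv_card_markedExtensions_le (hS : ∀ A ∈ 𝒜, S A ⊆ A)
    (hℬ : ∀ A ∈ 𝒜, ∀ t ∈ S A, A.erase t ∈ ℬ) :
    ∑ A ∈ 𝒜, ∑ t ∈ S A, (#(markedExtensions 𝒜 S (A.erase t)) : ℝ)⁻¹ ≤ #ℬ := by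
  have h := sum_marks_eq_sum_markedExtensions hS hℬ ∅
    fun B _ ↦ (#(markedExtensions 𝒜 S B) : ℝ)⁻¹
  simp only [starOf, empty_subset, filter_true, sdiff_empty, sum_const, nsmul_eq_mul] at h
  rw [h]
  simpa using sum_le_card_nsmul ℬ (fun B ↦ #(markedExtensions 𝒜 S B) *
    (#(markedExtensions 𝒜 S B) : ℝ)⁻¹) 1 fun B _ ↦ mul_inv_le_one

lemma mul_log_div_le_sum_log_markedExtensions {k : ℕ} (hk : k ≠ 0) (h𝒜 : 𝒜.Nonempty)
    (hS : ∀ A ∈ 𝒜, S A ⊆ A) (hSk : ∀ A ∈ 𝒜, #(S A) = k)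
    (hℬ : ∀ A ∈ 𝒜, ∀ t ∈ S A, A.erase t ∈ ℬ) :
    #𝒜 * (k * Real.log (k * #𝒜 / #ℬ)) ≤
      ∑ A ∈ 𝒜, ∑ t ∈ S A, Real.log #(markedExtensions 𝒜 S (A.erase t)) := by
  have hcard : (#(𝒜.sigma S) : ℝ) = k * #𝒜 := by
    rw [card_sigma, sum_congr rfl hSk, sum_const, smul_eq_mul, mul_comm, Nat.cast_mul]
  have hpos : (0 : ℝ) < k * #𝒜 :=
    mul_pos (Nat.cast_pos.2 hk.bot_lt) (Nat.cast_pos.2 h𝒜.card_pos)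
  have hamgm := sum_log_le_card_mul_log (s := 𝒜.sigma S)
    (y := fun p ↦ (#(markedExtensions 𝒜 S (p.1.erase p.2)) : ℝ)⁻¹)
    (c := #ℬ / (k * #𝒜))
    (fun p hp ↦ inv_pos.2 <| Nat.cast_pos.2 <| card_pos.2 ⟨p.2, mem_markedExtensions_erase hS
      (mem_sigma.1 hp).1 (mem_sigma.1 hp).2⟩)
    (by
      rw [hcard, mul_div_cancel₀ _ hpos.ne', sum_sigma]
      exact sum_inv_card_markedExtensions_le hS hℬ)
  simp only [Real.log_inv, sum_neg_distrib, sum_sigma, hcard] at hamgm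
  rw [← inv_div, Real.log_inv] at hamgm
  linarith

lemma mul_log_div_le_log_factorial_mul {r k : ℕ} (hk : k ≠ 0) (h𝒜 : 𝒜.Nonempty)
    (hr : (𝒜 : Set (Finset α)).Sized r) (hS : ∀ A ∈ 𝒜, S A ⊆ A) (hSk : ∀ A ∈ 𝒜, #(S A) = k)
    (hℬ : ∀ A ∈ 𝒜, ∀ t ∈ S A, A.erase t ∈ ℬ) :
    k * Real.log (k * #𝒜 / #ℬ) ≤ Real.log (k ! * #𝒜) := by
  have hpos : (0 : ℝ) < #𝒜 := Nat.cast_pos.2 h𝒜.card_pos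
  have hlower := mul_log_div_le_sum_log_markedExtensions hk h𝒜 hS hSk hℬ
  have hupper := sum_log_markedExtensions_starOf_le (L := ∅) (n := r) hS
    fun A hA ↦ by rw [sdiff_empty, hr (mem_starOf.1 hA).1]
  simp only [starOf, empty_subset, filter_true, sdiff_empty, sum_sub_distrib] at hupper
  have hfact : ∑ A ∈ 𝒜, Real.log ((#(S A))! : ℝ) = #𝒜 * Real.log (k ! : ℝ) := by
    rw [sum_congr rfl fun A hA ↦ by rw [hSk A hA], sum_const, nsmul_eq_mul]
  rw [Real.log_mul (by positivity) hpos.ne']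
  refine le_of_mul_le_mul_left ?_ hpos
  linarith

theorem pow_card_le_factorial_mul_pow_card {r k : ℕ} (hk : 2 ≤ k)
    (hr : (𝒜 : Set (Finset α)).Sized r) (h : ∀ A ∈ 𝒜, k ≤ #{t ∈ A | A.erase t ∈ ℬ}) :
    (k * #𝒜) ^ (k - 1) ≤ (k - 1)! * #ℬ ^ k := by
  obtain rfl | h𝒜 := 𝒜.eq_empty_or_nonempty
  · simp [show k - 1 ≠ 0 by lia]
  choose! S hS hSk using fun A hA ↦ exists_subset_card_eq (h A hA)
  have hℬ : ∀ A ∈ 𝒜, ∀ t ∈ S A, A.erase t ∈ ℬ := fun A hA t ht ↦ (mem_filter.1 (hS A hA ht)).2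
  have hℬpos : 0 < #ℬ := by
    obtain ⟨A, hA⟩ := h𝒜
    obtain ⟨t, ht⟩ : (S A).Nonempty := card_pos.1 (by rw [hSk A hA]; lia)
    exact card_pos.2 ⟨_, hℬ A hA t ht⟩
  have := h𝒜.card_pos
  have hlog := mul_log_div_le_log_factorial_mul (by lia) h𝒜 hr
    (fun A hA ↦ (hS A hA).trans (filter_subset _ A)) hSk hℬ
  have hkpos : 0 < k := by lia
  rw [← Real.log_pow, Real.log_le_log_iff (by positivity) (by positivity), div_pow,
    div_le_iff₀ (by positivity)] at hlog
  have hpow : (k * #𝒜) ^ k ≤ k ! * #𝒜 * #ℬ ^ k := by exact_mod_cast hlog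
  refine le_of_mul_le_mul_left (a := k * #𝒜) ?_ (by positivity)
  calc k * #𝒜 * (k * #𝒜) ^ (k - 1)
    _ = (k * #𝒜) ^ k := mul_pow_sub_one hkpos.ne' _
    _ ≤ k ! * #𝒜 * #ℬ ^ k := hpow
    _ = k * #𝒜 * ((k - 1)! * #ℬ ^ k) := by
      rw [← Nat.mul_factorial_pred hkpos.ne']
      ring

theorem stmt_12_general {r k : ℕ} (hk : 2 ≤ k) (hr : (𝒜 : Set (Finset α)).Sized r)
    (h : ∀ A ∈ 𝒜, k ≤ #{t ∈ A | A.erase t ∈ ℬ}) :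
    (#𝒜 : ℝ) ≤ (#ℬ : ℝ) ^ ((k : ℝ) / (k - 1)) * ((k - 1)! : ℝ) ^ (1 / ((k : ℝ) - 1)) / k := by
  have hk' : (0 : ℝ) < k - 1 := by
    rw [sub_pos]
    exact_mod_cast hk
  have hpow : (k * #𝒜 : ℝ) ^ ((k : ℝ) - 1) ≤ (#ℬ : ℝ) ^ (k : ℝ) * ((k - 1)! : ℝ) := by
    rw [← Nat.cast_pred (by lia), Real.rpow_natCast, Real.rpow_natCast, mul_comm (_ ^ k)]
    exact_mod_cast pow_card_le_factorial_mul_pow_card hk hr h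
  rw [le_div_iff₀' (by positivity)]
  calc (k * #𝒜 : ℝ)
    _ ≤ ((#ℬ : ℝ) ^ (k : ℝ) * ((k - 1)! : ℝ)) ^ (1 / ((k : ℝ) - 1)) := by
        rwa [one_div, Real.le_rpow_inv_iff_of_pos (by positivity) (by positivity) hk']
    _ = (#ℬ : ℝ) ^ ((k : ℝ) / (k - 1)) * ((k - 1)! : ℝ) ^ (1 / ((k : ℝ) - 1)) := by
        rw [Real.mul_rpow (by positivity) (by positivity), ← Real.rpow_mul (by positivity),
          mul_one_div]

end MarkedFamily

lemma ValidPair.le_card_filter_erase_mem {r k : ℕ} {𝒜 ℬ : Finset (Finset ℕ)} (hr : r ≠ 0)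
    (h : ValidPair r k 𝒜 ℬ) {A : Finset ℕ} (hA : A ∈ 𝒜) : k ≤ #{t ∈ A | A.erase t ∈ ℬ} := by
  obtain ⟨h𝒜, hℬ, hk⟩ := h
  refine (hk A hA).trans <| (card_le_card fun B hB ↦ ?_).trans (card_image_le (f := A.erase))
  obtain ⟨hBℬ, hBA⟩ := mem_filter.1 hB
  obtain ⟨t, htB, rfl⟩ := exists_eq_insert_iff.2 ⟨hBA, by grind⟩
  exact mem_image.2 ⟨t, by simp [htB, hBℬ], erase_insert htB⟩

theorem stmt_12 (k : ℕ) (hk : 2 ≤ k) :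
    ∃ D : ℝ, 0 < D ∧ ∀ r : ℕ, k ≤ r → ∀ 𝒜 ℬ : Finset (Finset ℕ),
      ValidPair r k 𝒜 ℬ → 2 ≤ ℬ.card →
      (𝒜.card : ℝ) ≤
        (ℬ.card : ℝ) ^ ((k : ℝ) / ((k : ℝ) - 1)) *
            (((k - 1).factorial : ℝ)) ^ (1 / ((k : ℝ) - 1)) / k +
          D * ℬ.card * Real.log ℬ.card := by
  refine ⟨1, one_pos, fun r hr 𝒜 ℬ h _ ↦ ?_⟩
  have hmain := stmt_12_general hk (fun A hA ↦ h.1 A hA)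
    fun A hA ↦ h.le_card_filter_erase_mem (by lia) hA
  exact hmain.trans (le_add_of_nonneg_right (by positivity))
end

section
/- For every integer k ≥ 2 and every real C > 0 and ε > 0, there exists b_0 (depending only on k, C, ε) such that the following holds for all integers r ≥ k: if (𝒜, ℬ) is a k-valid pair with |ℬ| = b ≥ b_0 and |𝒜| ≥ b^{k/(k-1)}·((k−1)!)^{1/(k-1)}/k − C·b·ln b, then there exists a set S ⊆ ℕ with |S| = r − k such that S is a subset of at least (1−ε)·b of the elements of ℬ. -/
/-!
Put `m = k - 1` and mark in each `A ∈ 𝒜` a set `K A` of `m + 1` elements whose deletion leads to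
`ℬ`. Passing to a subpair costs little and makes every member of `ℬ` have at least
`d = η b ^ (1 / m)` extensions. Extensions of `B` then mostly lead on to members of `ℬ` one exchange
farther from a given `B₀`, so the sphere of radius `m` about `B₀` contains at least a constant times
`d ^ m`, hence a positive proportion, of the members of `ℬ`. Averaging over these spheres gives
`m`-sets `T B ⊆ B` such that `K A \ {x} = T (A \ {x})` for all `x ∈ K A`, for all but `O(b)` sets
`A`.

For these `A`, all sets `A \ {x}` share the unmarked part `S = A \ K A`, so the problem splits over
`S`, and in each part the marked sets satisfy the Kruskal–Katona bound with respect to a family no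
larger than the star of `S` in `ℬ`. If every star has fewer than `(1 - ε) b` members, this improves
the extremal bound by a constant factor.
-/

open Finset Filter
open scoped FinsetFamily Nat

variable {α : Type*} [DecidableEq α]

section KruskalKatona

variable {𝒢 : Finset (Finset α)} {n : ℕ}

lemma sized_memberSubfamily (h𝒢 : (𝒢 : Set (Finset α)).Sized (n + 1)) (v : α) :
    (𝒢.memberSubfamily v : Set (Finset α)).Sized n := by
  intro S hS
  obtain ⟨hins, hv⟩ := mem_memberSubfamily.1 hS
  have hcard := h𝒢 hins
  rw [card_insert_of_notMem hv] at hcard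
  omega

lemma memberSubfamily_subset_shadow (v : α) : 𝒢.memberSubfamily v ⊆ ∂ 𝒢 := fun _ hS =>
  have ⟨hins, hv⟩ := mem_memberSubfamily.1 hS
  mem_shadow_iff_insert_mem.2 ⟨v, hv, hins⟩

lemma shadow_memberSubfamily_subset (v : α) :
    ∂ (𝒢.memberSubfamily v) ⊆ (∂ 𝒢).memberSubfamily v := by
  intro S hS
  obtain ⟨x, hxS, hmem⟩ := mem_shadow_iff_insert_mem.1 hS
  obtain ⟨hins, hv⟩ := mem_memberSubfamily.1 hmem
  rw [mem_insert, not_or] at hv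
  refine mem_memberSubfamily.2 ⟨mem_shadow_iff_insert_mem.2 ⟨x, ?_, ?_⟩, hv.2⟩
  · simp [hxS, Ne.symm hv.1]
  · rwa [insert_comm]

lemma card_memberSubfamily (v : α) : #(𝒢.memberSubfamily v) = #{F ∈ 𝒢 | v ∈ F} :=
  card_image_of_injOn <| (erase_injOn' v).mono fun _ hF => (mem_filter.1 hF).2

lemma sum_card_memberSubfamily {V : Finset α} (hV : ∀ F ∈ 𝒢, F ⊆ V)
    (h𝒢 : (𝒢 : Set (Finset α)).Sized n) : ∑ v ∈ V, #(𝒢.memberSubfamily v) = #𝒢 * n := by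
  simp_rw [card_memberSubfamily]
  refine (sum_card_bipartiteAbove_eq_sum_card_bipartiteBelow (· ∈ ·)).trans
    (sum_const_nat fun F hF => ?_)
  rw [bipartiteBelow, filter_mem_eq_inter, inter_eq_right.2 (hV F hF), h𝒢 hF]

lemma mul_card_le_mul_card_shadow_of_link (hn : n ≠ 0)
    (h𝒢 : (𝒢 : Set (Finset α)).Sized (n + 1)) {θ : ℝ}
    (hlink : ∀ v, (n : ℝ) * #(𝒢.memberSubfamily v) ≤ θ * #((∂ 𝒢).memberSubfamily v)) :
    (n + 1 : ℝ) * #𝒢 ≤ θ * #(∂ 𝒢) := by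
  have hV : ∀ G ∈ 𝒢, G ⊆ 𝒢.sup id := fun G hG => le_sup (f := id) hG
  have hshadowV : ∀ S ∈ ∂ 𝒢, S ⊆ 𝒢.sup id := fun S hS =>
    have ⟨G, hG, hSG⟩ := exists_subset_of_mem_shadow hS
    hSG.trans (hV G hG)
  have hsum := sum_le_sum fun v (_ : v ∈ 𝒢.sup id) => hlink v
  rw [← mul_sum, ← mul_sum, ← Nat.cast_sum, ← Nat.cast_sum, sum_card_memberSubfamily hV h𝒢,
    sum_card_memberSubfamily hshadowV h𝒢.shadow] at hsum
  refine le_of_mul_le_mul_left ?_ (Nat.cast_pos.2 (Nat.pos_of_ne_zero hn) : (0 : ℝ) < n)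
  push_cast [Nat.add_sub_cancel] at hsum
  linarith

/-- The induction is on the uniformity: the links of a point satisfy the bound, and each link is
at most as large as the shadow. -/
theorem kruskal_katona_pow (m : ℕ) (hne : 𝒢.Nonempty)
    (h𝒢 : (𝒢 : Set (Finset α)).Sized (m + 1)) :
    ((m + 1 : ℝ) * #𝒢) ^ m ≤ (m ! : ℝ) * (#(∂ 𝒢) : ℝ) ^ (m + 1) := by
  induction m generalizing 𝒢 with
  | zero =>
    obtain ⟨G, hG⟩ := hne
    obtain ⟨x, hx⟩ : G.Nonempty := card_pos.1 (by rw [h𝒢 hG]; omega)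
    have : 0 < #(∂ 𝒢) := card_pos.2 ⟨_, erase_mem_shadow hG hx⟩
    simpa using this
  | succ m ih =>
    set θ : ℝ := (((m + 1)! : ℝ) * #(∂ 𝒢)) ^ (((m + 1 : ℕ) : ℝ)⁻¹)
    have hθ : θ ^ (m + 1) = ((m + 1)! : ℝ) * #(∂ 𝒢) :=
      Real.rpow_inv_natCast_pow (by positivity) m.succ_ne_zero
    have hθ0 : 0 ≤ θ := by positivity
    have link (v : α) :
        (m + 1 : ℝ) * #(𝒢.memberSubfamily v) ≤ θ * #((∂ 𝒢).memberSubfamily v) := by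
      rcases (𝒢.memberSubfamily v).eq_empty_or_nonempty with hv | hv
      · rw [hv, card_empty, Nat.cast_zero, mul_zero]
        positivity
      refine le_of_pow_le_pow_left₀ m.succ_ne_zero (by positivity) ?_
      calc ((m + 1 : ℝ) * #(𝒢.memberSubfamily v)) ^ (m + 1)
          = ((m + 1 : ℝ) * #(𝒢.memberSubfamily v)) ^ m *
            ((m + 1 : ℝ) * #(𝒢.memberSubfamily v)) := pow_succ _ _
        _ ≤ ((m ! : ℝ) * #((∂ 𝒢).memberSubfamily v) ^ (m + 1)) * ((m + 1 : ℝ) * #(∂ 𝒢)) := by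
          gcongr
          · refine (ih hv (sized_memberSubfamily h𝒢 v)).trans ?_
            gcongr
            exact shadow_memberSubfamily_subset v
          · exact memberSubfamily_subset_shadow v
        _ = (θ * #((∂ 𝒢).memberSubfamily v)) ^ (m + 1) := by
          rw [mul_pow θ, hθ, Nat.factorial_succ]
          push_cast
          ring
    have hlin : (((m + 1 : ℕ) : ℝ) + 1) * #𝒢 ≤ θ * #(∂ 𝒢) :=
      mul_card_le_mul_card_shadow_of_link m.succ_ne_zero h𝒢 fun v => by exact_mod_cast link v
    calc ((((m + 1 : ℕ) : ℝ) + 1) * #𝒢) ^ (m + 1)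
        ≤ (θ * #(∂ 𝒢)) ^ (m + 1) := by gcongr
      _ = ((m + 1)! : ℝ) * (#(∂ 𝒢) : ℝ) ^ (m + 1 + 1) := by rw [mul_pow, hθ]; ring

lemma mul_card_le_mul_card_shadow {m : ℕ} (hm : m ≠ 0)
    (h𝒢 : (𝒢 : Set (Finset α)).Sized (m + 1)) {θ : ℝ} (hθ0 : 0 ≤ θ)
    (hθ : (m ! : ℝ) * #(∂ 𝒢) ≤ θ ^ m) : (m + 1 : ℝ) * #𝒢 ≤ θ * #(∂ 𝒢) := by
  rcases 𝒢.eq_empty_or_nonempty with rfl | hne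
  · simp
  refine le_of_pow_le_pow_left₀ hm (by positivity) ?_
  calc ((m + 1 : ℝ) * #𝒢) ^ m ≤ (m ! : ℝ) * (#(∂ 𝒢) : ℝ) ^ (m + 1) :=
        kruskal_katona_pow m hne h𝒢
    _ = (m ! * #(∂ 𝒢)) * (#(∂ 𝒢) : ℝ) ^ m := by ring
    _ ≤ θ ^ m * (#(∂ 𝒢) : ℝ) ^ m := by gcongr
    _ = (θ * #(∂ 𝒢)) ^ m := (mul_pow ..).symm

end KruskalKatona

/-- The sets of `ℬ` at distance `j` from `B₀`, where the distance of two sets of the same size is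
half the size of their symmetric difference. -/
def distSphere (ℬ : Finset (Finset α)) (B₀ : Finset α) (j : ℕ) : Finset (Finset α) :=
  {B ∈ ℬ | #(B₀ \ B) = j}

/-- `B'` arises from `B` by exchanging an element of `B₀` for an element outside `B₀`; such an
exchange increases the distance from `B₀` by one. -/
def IsStepAway (B₀ B B' : Finset α) : Prop :=
  ∃ x ∈ B' \ B₀, ∃ y ∈ B₀ \ B', insert y (B'.erase x) = B

instance (B₀ : Finset α) : DecidableRel (IsStepAway B₀) := fun B B' =>
  inferInstanceAs (Decidable (∃ x ∈ B' \ B₀, ∃ y ∈ B₀ \ B', insert y (B'.erase x) = B))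

/-- The sets `A ∈ 𝒜` from which `B` arises by deleting an element of the marked set `K A`. -/
def extensions (K : Finset α → Finset α) (𝒜 : Finset (Finset α)) (B : Finset α) :
    Finset (Finset α) :=
  {A ∈ 𝒜 | ∃ x ∈ K A, A.erase x = B}

/-- The extensions of `B` whose marked set meets `B` outside `T`. -/
def badExtensions (K : Finset α → Finset α) (𝒜 : Finset (Finset α)) (B T : Finset α) :
    Finset (Finset α) :=
  {A ∈ extensions K 𝒜 B | ¬ K A ∩ B ⊆ T}

/-- An `(m + 1)`-valid pair `(𝒜, ℬ)` of families of `(n + 1)`-sets and `n`-sets, respectively,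
together with a choice of `m + 1` marked elements `K A` of each `A ∈ 𝒜` whose deletion leads from
`A` to `ℬ`. The indices are shifted by one to avoid subtraction, and the size of the members of `𝒜`
is a consequence (`IsMarking.sized_left`). -/
structure IsMarking (n m : ℕ) (K : Finset α → Finset α) (𝒜 ℬ : Finset (Finset α)) : Prop where
  sized_right : (ℬ : Set (Finset α)).Sized n
  subset : ∀ A ∈ 𝒜, K A ⊆ A
  card_eq : ∀ A ∈ 𝒜, #(K A) = m + 1
  erase_mem : ∀ A ∈ 𝒜, ∀ x ∈ K A, A.erase x ∈ ℬ

lemma exists_isMarking {n m : ℕ} {𝒜 ℬ : Finset (Finset α)}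
    (h𝒜 : (𝒜 : Set (Finset α)).Sized (n + 1)) (hℬ : (ℬ : Set (Finset α)).Sized n)
    (hvalid : ∀ A ∈ 𝒜, m + 1 ≤ #{B ∈ ℬ | B ⊆ A}) : ∃ K, IsMarking n m K 𝒜 ℬ := by
  have hmarks : ∀ A ∈ 𝒜, ∃ M ⊆ A, #M = m + 1 ∧ ∀ x ∈ M, A.erase x ∈ ℬ := by
    intro A hA
    have hsub : {B ∈ ℬ | B ⊆ A} ⊆ {x ∈ A | A.erase x ∈ ℬ}.image A.erase := by
      intro B hB
      obtain ⟨hBℬ, hBA⟩ := mem_filter.1 hB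
      obtain ⟨x, hxB, rfl⟩ := exists_eq_insert_iff.2 ⟨hBA, by rw [hℬ hBℬ, h𝒜 hA]⟩
      exact mem_image.2 ⟨x, by simp [hxB, hBℬ], erase_insert hxB⟩
    obtain ⟨M, hM, hcard⟩ := exists_subset_card_eq
      ((hvalid A hA).trans <| (card_le_card hsub).trans card_image_le)
    exact ⟨M, hM.trans (filter_subset _ _), hcard, fun x hx => (mem_filter.1 (hM hx)).2⟩
  choose! K hK using hmarks
  exact ⟨K, hℬ, fun A hA => (hK A hA).1, fun A hA => (hK A hA).2.1, fun A hA => (hK A hA).2.2⟩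

lemma mem_distSphere_comm {n : ℕ} {ℬ : Finset (Finset α)} (hℬ : (ℬ : Set (Finset α)).Sized n)
    {B₀ B : Finset α} {j : ℕ} :
    B ∈ ℬ ∧ B₀ ∈ distSphere ℬ B j ↔ B ∈ distSphere ℬ B₀ j ∧ B₀ ∈ ℬ := by
  simp only [distSphere, mem_filter]
  constructor
  · rintro ⟨hB, hB₀, rfl⟩
    exact ⟨⟨hB, card_sdiff_comm ((hℬ hB₀).trans (hℬ hB).symm)⟩, hB₀⟩
  · rintro ⟨⟨hB, rfl⟩, hB₀⟩
    exact ⟨hB, hB₀, card_sdiff_comm ((hℬ hB).trans (hℬ hB₀).symm)⟩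

lemma card_isStepAway_le (𝒟 : Finset (Finset α)) {B₀ B' : Finset α} (hcard : #B' = #B₀) :
    #{B ∈ 𝒟 | IsStepAway B₀ B B'} ≤ #(B₀ \ B') ^ 2 := by
  have hsub : {B ∈ 𝒟 | IsStepAway B₀ B B'} ⊆
      ((B' \ B₀) ×ˢ (B₀ \ B')).image fun p => insert p.2 (B'.erase p.1) := by
    intro B hB
    obtain ⟨x, hx, y, hy, rfl⟩ := (mem_filter.1 hB).2
    exact mem_image.2 ⟨(x, y), mk_mem_product hx hy, rfl⟩
  calc #{B ∈ 𝒟 | IsStepAway B₀ B B'} ≤ #((B' \ B₀) ×ˢ (B₀ \ B')) :=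
        (card_le_card hsub).trans card_image_le
    _ = #(B₀ \ B') ^ 2 := by rw [card_product, card_sdiff_comm hcard, sq]

lemma card_isStepAway_le_of_mem_distSphere {n : ℕ} {ℬ : Finset (Finset α)}
    (hℬ : (ℬ : Set (Finset α)).Sized n) {B₀ : Finset α} (hB₀ : B₀ ∈ ℬ) (𝒟 : Finset (Finset α))
    {B' : Finset α} {j : ℕ} (hB' : B' ∈ distSphere ℬ B₀ j) :
    #{B ∈ 𝒟 | IsStepAway B₀ B B'} ≤ j ^ 2 := by
  obtain ⟨hB'ℬ, rfl⟩ := mem_filter.1 hB'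
  exact card_isStepAway_le 𝒟 ((hℬ hB'ℬ).trans (hℬ hB₀).symm)

lemma sum_card_isStepAway_le {n : ℕ} {ℬ : Finset (Finset α)} (hℬ : (ℬ : Set (Finset α)).Sized n)
    {B₀ : Finset α} (hB₀ : B₀ ∈ ℬ) (𝒟 : Finset (Finset α)) (j : ℕ) :
    ∑ B ∈ 𝒟, #{B' ∈ distSphere ℬ B₀ j | IsStepAway B₀ B B'} ≤ #(distSphere ℬ B₀ j) * j ^ 2 :=
  calc ∑ B ∈ 𝒟, #{B' ∈ distSphere ℬ B₀ j | IsStepAway B₀ B B'}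
      = ∑ B' ∈ distSphere ℬ B₀ j, #{B ∈ 𝒟 | IsStepAway B₀ B B'} :=
        sum_card_bipartiteAbove_eq_sum_card_bipartiteBelow _
    _ ≤ #(distSphere ℬ B₀ j) * j ^ 2 :=
        sum_le_card_nsmul _ _ _ fun _ => card_isStepAway_le_of_mem_distSphere hℬ hB₀ 𝒟

namespace IsMarking

variable {n m : ℕ} {K : Finset α → Finset α} {𝒜 ℬ : Finset (Finset α)}

lemma sized_left (h : IsMarking n m K 𝒜 ℬ) : (𝒜 : Set (Finset α)).Sized (n + 1) := by
  intro A hA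
  obtain ⟨x, hx⟩ : (K A).Nonempty := card_pos.1 (by rw [h.card_eq A hA]; omega)
  rw [← h.sized_right (h.erase_mem A hA x hx), card_erase_add_one (h.subset A hA hx)]

lemma mono_left (h : IsMarking n m K 𝒜 ℬ) {𝒜' : Finset (Finset α)} (hsub : 𝒜' ⊆ 𝒜) :
    IsMarking n m K 𝒜' ℬ where
  sized_right := h.sized_right
  subset A hA := h.subset A (hsub hA)
  card_eq A hA := h.card_eq A (hsub hA)
  erase_mem A hA := h.erase_mem A (hsub hA)

/-- Among all `ℬ' ⊆ ℬ`, take one maximizing the number of sets of `𝒜` marked into `ℬ'` minus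
`d * #ℬ'`. -/
lemma exists_le_card_extensions (h : IsMarking n m K 𝒜 ℬ) (d : ℝ) :
    ∃ 𝒜' ⊆ 𝒜, ∃ ℬ' ⊆ ℬ, IsMarking n m K 𝒜' ℬ' ∧ (∀ B ∈ ℬ', d ≤ #(extensions K 𝒜' B)) ∧
      (#𝒜 : ℝ) - d * #ℬ ≤ #𝒜' - d * #ℬ' := by
  let F (ℬ' : Finset (Finset α)) : Finset (Finset α) := {A ∈ 𝒜 | ∀ x ∈ K A, A.erase x ∈ ℬ'}
  obtain ⟨ℬ', hℬ', hmax⟩ := exists_max_image ℬ.powerset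
    (fun ℬ' => (#(F ℬ') : ℝ) - d * #ℬ') ⟨ℬ, mem_powerset_self _⟩
  rw [mem_powerset] at hℬ'
  refine ⟨F ℬ', filter_subset _ _, ℬ', hℬ', ?_, fun B hB => ?_, ?_⟩
  · exact { h.mono_left (filter_subset _ _) with
      sized_right := h.sized_right.mono (coe_subset.2 hℬ')
      erase_mem := fun A hA => (mem_filter.1 hA).2 }
  · have hle := hmax (ℬ'.erase B) (mem_powerset.2 ((erase_subset _ _).trans hℬ'))
    have hsub : F ℬ' ⊆ F (ℬ'.erase B) ∪ extensions K (F ℬ') B := by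
      intro A hA
      obtain ⟨hA𝒜, hAℬ'⟩ := mem_filter.1 hA
      by_cases hext : ∃ x ∈ K A, A.erase x = B
      · exact mem_union_right _ (mem_filter.2 ⟨hA, hext⟩)
      · push Not at hext
        exact mem_union_left _
          (mem_filter.2 ⟨hA𝒜, fun x hx => mem_erase.2 ⟨hext x hx, hAℬ' x hx⟩⟩)
    have hcard : (#(F ℬ') : ℝ) ≤ #(F (ℬ'.erase B)) + #(extensions K (F ℬ') B) :=
      mod_cast (card_le_card hsub).trans (card_union_le _ _)
    rw [← card_erase_add_one hB] at hle
    push_cast at hle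
    linarith
  · have hF : F ℬ = 𝒜 := filter_true_of_mem h.erase_mem
    simpa only [hF] using hmax ℬ (mem_powerset_self _)

/-- Let `A = insert x B` be a bad extension. Unless `x ∈ B₀ \ B`, deleting from `A` a marked element
of `B ∩ B₀` is a step away from `B₀`, and `A` is recovered as the union of `B` and the result. -/
lemma card_badExtensions_le (h : IsMarking n m K 𝒜 ℬ) (B₀ B : Finset α) :
    #(badExtensions K 𝒜 B (B \ B₀)) ≤
      #{B' ∈ distSphere ℬ B₀ (#(B₀ \ B) + 1) | IsStepAway B₀ B B'} + #(B₀ \ B) := by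
  have hsub : badExtensions K 𝒜 B (B \ B₀) ⊆
      {B' ∈ distSphere ℬ B₀ (#(B₀ \ B) + 1) | IsStepAway B₀ B B'}.image (B ∪ ·) ∪
        (B₀ \ B).image (insert · B) := by
    intro A hA
    obtain ⟨hext, hbad⟩ := mem_filter.1 hA
    obtain ⟨hA𝒜, x, hxK, rfl⟩ := mem_filter.1 hext
    have hxA := h.subset A hA𝒜 hxK
    obtain ⟨y, hy, hy₀⟩ := not_subset.1 hbad
    obtain ⟨hyK, hyx⟩ := mem_inter.1 hy
    obtain ⟨hyx, hyA⟩ := mem_erase.1 hyx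
    have hyB₀ : y ∈ B₀ := by simpa [hyx, hyA] using hy₀
    by_cases hxB₀ : x ∈ B₀
    · refine mem_union_right _ (mem_image.2 ⟨x, by simp [hxB₀], insert_erase hxA⟩)
    refine mem_union_left _ (mem_image.2 ⟨A.erase y, mem_filter.2 ⟨mem_filter.2
      ⟨h.erase_mem A hA𝒜 y hyK, ?_⟩, x, ?_, y, ?_, ?_⟩, ?_⟩)
    · have hx : B₀ \ A.erase x = B₀ \ A := by grind
      rw [hx, sdiff_erase hyB₀, card_insert_of_notMem (by simp [hyA])]
    all_goals grind
  calc #(badExtensions K 𝒜 B (B \ B₀))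
      ≤ _ := (card_le_card hsub).trans (card_union_le _ _)
    _ ≤ _ := add_le_add card_image_le card_image_le

lemma inter_erase_eq (h : IsMarking n m K 𝒜 ℬ) {A : Finset α} (hA : A ∈ 𝒜) (x : α) :
    K A ∩ A.erase x = (K A).erase x := by
  rw [← erase_inter_comm, inter_eq_left.2 ((erase_subset _ _).trans (h.subset A hA))]

lemma badExtensions_eq_extensions (h : IsMarking n m K 𝒜 ℬ) {B T : Finset α} (hT : #T < m) :
    badExtensions K 𝒜 B T = extensions K 𝒜 B := by
  refine filter_true_of_mem fun A hA hsub => ?_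
  obtain ⟨hA𝒜, x, hxK, rfl⟩ := mem_filter.1 hA
  have hcard := card_le_card hsub
  rw [h.inter_erase_eq hA𝒜, card_erase_of_mem hxK, h.card_eq A hA𝒜] at hcard
  omega

lemma card_distSphere_mul_le (h : IsMarking n m K 𝒜 ℬ) {d : ℝ}
    (hdeg : ∀ B ∈ ℬ, d ≤ #(extensions K 𝒜 B)) {B₀ : Finset α} (hB₀ : B₀ ∈ ℬ) {j : ℕ}
    (hj : j < m) :
    #(distSphere ℬ B₀ j) * (d - j) ≤ #(distSphere ℬ B₀ (j + 1)) * ((j + 1 : ℕ) ^ 2 : ℝ) := by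
  rw [← nsmul_eq_mul, ← nsmul_eq_mul]
  refine card_nsmul_le_card_nsmul (IsStepAway B₀) (fun B hB => ?_) fun B' hB' =>
    mod_cast card_isStepAway_le_of_mem_distSphere h.sized_right hB₀ _ hB'
  obtain ⟨⟨hBℬ, hdist⟩, hdist'⟩ := mem_filter.1 hB,
    (mem_filter.1 ((mem_distSphere_comm h.sized_right).2 ⟨hB, hB₀⟩).2).2
  have hstep := h.card_badExtensions_le B₀ B
  rw [h.badExtensions_eq_extensions (by omega), hdist] at hstep
  have hstep' : (#(extensions K 𝒜 B) : ℝ) ≤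
      #{B' ∈ distSphere ℬ B₀ (j + 1) | IsStepAway B₀ B B'} + j := mod_cast hstep
  rw [bipartiteAbove]
  linarith [hdeg B hBℬ]

lemma pow_le_card_distSphere (h : IsMarking n m K 𝒜 ℬ) {d : ℝ} (hd : m ≤ d)
    (hdeg : ∀ B ∈ ℬ, d ≤ #(extensions K 𝒜 B)) {B₀ : Finset α} (hB₀ : B₀ ∈ ℬ) {j : ℕ}
    (hj : j ≤ m) : ((d - m) / (m + 1) ^ 2) ^ j ≤ #(distSphere ℬ B₀ j) := by
  induction j with
  | zero =>
    have : 0 < #(distSphere ℬ B₀ 0) := card_pos.2 ⟨B₀, mem_filter.2 ⟨hB₀, by simp⟩⟩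
    rw [pow_zero]
    exact_mod_cast this
  | succ j ih =>
    have hjm : (j : ℝ) + 1 ≤ m := by exact_mod_cast hj
    have : 0 ≤ d - m := sub_nonneg.2 hd
    rw [pow_succ, ← mul_div_assoc, div_le_iff₀ (by positivity)]
    calc ((d - m) / (m + 1) ^ 2) ^ j * (d - m) ≤ #(distSphere ℬ B₀ j) * (d - j) := by
          gcongr
          · exact ih (by omega)
          · linarith [hjm]
      _ ≤ #(distSphere ℬ B₀ (j + 1)) * ((j + 1 : ℕ) ^ 2 : ℝ) :=
          h.card_distSphere_mul_le hdeg hB₀ (by omega)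
      _ ≤ #(distSphere ℬ B₀ (j + 1)) * (m + 1) ^ 2 := by
          push_cast
          gcongr
          linarith [hjm]

lemma sum_distSphere_card_badExtensions_le (h : IsMarking n m K 𝒜 ℬ) {B₀ : Finset α}
    (hB₀ : B₀ ∈ ℬ) (j : ℕ) :
    ∑ B ∈ distSphere ℬ B₀ j, #(badExtensions K 𝒜 B (B \ B₀)) ≤ ((j + 1) ^ 2 + j) * #ℬ := by
  calc ∑ B ∈ distSphere ℬ B₀ j, #(badExtensions K 𝒜 B (B \ B₀))
      ≤ ∑ B ∈ distSphere ℬ B₀ j,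
          (#{B' ∈ distSphere ℬ B₀ (j + 1) | IsStepAway B₀ B B'} + j) :=
        sum_le_sum fun B hB => by
          simpa only [(mem_filter.1 hB).2] using h.card_badExtensions_le B₀ B
    _ = ∑ B ∈ distSphere ℬ B₀ j, #{B' ∈ distSphere ℬ B₀ (j + 1) | IsStepAway B₀ B B'} +
          #(distSphere ℬ B₀ j) * j := by
        rw [sum_add_distrib, sum_const, smul_eq_mul]
    _ ≤ #ℬ * (j + 1) ^ 2 + #ℬ * j := by
        gcongr
        · refine (sum_card_isStepAway_le h.sized_right hB₀ _ _).trans ?_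
          gcongr
          exact filter_subset _ _
        · exact filter_subset _ _
    _ = ((j + 1) ^ 2 + j) * #ℬ := by ring

/-- Choose `T B` to minimize the number of bad extensions of `B`. This number is then at most its
average over the sets `B \ B₀` with `B₀` at distance `m` from `B`, and summing over `B₀` first
bounds the total. -/
lemma exists_mul_sum_card_badExtensions_le (h : IsMarking n m K 𝒜 ℬ) (hmn : m ≤ n) {N : ℝ}
    (hN : ∀ B ∈ ℬ, N ≤ #(distSphere ℬ B m)) :
    ∃ T : Finset α → Finset α, (∀ B ∈ ℬ, #(T B) = m) ∧
      N * ∑ B ∈ ℬ, (#(badExtensions K 𝒜 B (T B)) : ℝ) ≤ ((m + 1) ^ 2 + m) * (#ℬ : ℝ) ^ 2 := by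
  have hmin : ∀ B ∈ ℬ, ∃ T ∈ powersetCard m B, ∀ T' ∈ powersetCard m B,
      #(badExtensions K 𝒜 B T) ≤ #(badExtensions K 𝒜 B T') := fun B hB =>
    exists_min_image _ _ (powersetCard_nonempty.2 (by rwa [h.sized_right hB]))
  choose! T hT hTmin using hmin
  refine ⟨T, fun B hB => (mem_powersetCard.1 (hT B hB)).2, ?_⟩
  have haverage : ∀ B ∈ ℬ, N * #(badExtensions K 𝒜 B (T B)) ≤
      ∑ B₀ ∈ distSphere ℬ B m, (#(badExtensions K 𝒜 B (B \ B₀)) : ℝ) := fun B hB =>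
    calc N * #(badExtensions K 𝒜 B (T B))
        ≤ #(distSphere ℬ B m) * (#(badExtensions K 𝒜 B (T B)) : ℝ) := by
          gcongr
          exact hN B hB
      _ ≤ ∑ B₀ ∈ distSphere ℬ B m, (#(badExtensions K 𝒜 B (B \ B₀)) : ℝ) := by
          rw [← nsmul_eq_mul]
          refine card_nsmul_le_sum _ _ _ fun B₀ hB₀ => ?_
          exact_mod_cast hTmin B hB _
            (mem_powersetCard.2 ⟨sdiff_subset, (mem_filter.1 hB₀).2⟩)
  calc N * ∑ B ∈ ℬ, (#(badExtensions K 𝒜 B (T B)) : ℝ)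
      ≤ ∑ B ∈ ℬ, ∑ B₀ ∈ distSphere ℬ B m, (#(badExtensions K 𝒜 B (B \ B₀)) : ℝ) := by
        rw [mul_sum]
        exact sum_le_sum haverage
    _ = ∑ B₀ ∈ ℬ, ∑ B ∈ distSphere ℬ B₀ m, (#(badExtensions K 𝒜 B (B \ B₀)) : ℝ) :=
        sum_comm' fun B B₀ => mem_distSphere_comm h.sized_right
    _ ≤ #ℬ • (((m + 1) ^ 2 + m) * #ℬ : ℝ) :=
        sum_le_card_nsmul _ _ _ fun B₀ hB₀ =>
          mod_cast h.sum_distSphere_card_badExtensions_le hB₀ m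
    _ = ((m + 1) ^ 2 + m) * (#ℬ : ℝ) ^ 2 := by
        rw [nsmul_eq_mul]
        ring

lemma card_le_add_sum_card_badExtensions (h : IsMarking n m K 𝒜 ℬ) {T : Finset α → Finset α}
    (hT : ∀ B ∈ ℬ, #(T B) = m) :
    #𝒜 ≤ #{A ∈ 𝒜 | ∀ x ∈ K A, (K A).erase x = T (A.erase x)} +
      ∑ B ∈ ℬ, #(badExtensions K 𝒜 B (T B)) := by
  have hsub : 𝒜 ⊆ {A ∈ 𝒜 | ∀ x ∈ K A, (K A).erase x = T (A.erase x)} ∪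
      ℬ.biUnion fun B => badExtensions K 𝒜 B (T B) := by
    intro A hA
    by_cases hgood : ∀ x ∈ K A, (K A).erase x = T (A.erase x)
    · exact mem_union_left _ (mem_filter.2 ⟨hA, hgood⟩)
    push Not at hgood
    obtain ⟨x, hx, hne⟩ := hgood
    have hB := h.erase_mem A hA x hx
    refine mem_union_right _ (mem_biUnion.2 ⟨A.erase x, hB, mem_filter.2
      ⟨mem_filter.2 ⟨hA, x, hx, rfl⟩, fun hsubset => hne ?_⟩⟩)
    rw [h.inter_erase_eq hA] at hsubset
    refine eq_of_subset_of_card_le hsubset ?_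
    rw [hT _ hB, card_erase_of_mem hx, h.card_eq A hA, Nat.add_sub_cancel]
  exact (card_le_card hsub).trans <| (card_union_le _ _).trans <|
    Nat.add_le_add_left card_biUnion_le _

lemma shadow_image_subset (h : IsMarking n m K 𝒜 ℬ) {T : Finset α → Finset α}
    (hgood : ∀ A ∈ 𝒜, ∀ x ∈ K A, (K A).erase x = T (A.erase x)) (S : Finset α) :
    ∂ ({A ∈ 𝒜 | A \ K A = S}.image K) ⊆ {B ∈ ℬ | B \ T B = S}.image T := by
  intro G hG
  obtain ⟨_, hmem, x, hx, rfl⟩ := mem_shadow_iff.1 hG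
  obtain ⟨A, hAS, rfl⟩ := mem_image.1 hmem
  obtain ⟨hA, rfl⟩ := mem_filter.1 hAS
  refine mem_image.2 ⟨A.erase x, mem_filter.2 ⟨h.erase_mem A hA x hx, ?_⟩, (hgood A hA x hx).symm⟩
  rw [← hgood A hA x hx, ← erase_sdiff_distrib, erase_eq_of_notMem (by simp [hx])]

/-- The sets `A` with a common unmarked part `A \ K A = S` are determined by their marked sets,
which form an `(m + 1)`-uniform family whose shadow is no larger than the star of `S` in `ℬ`. -/
lemma mul_card_fiber_le (h : IsMarking n m K 𝒜 ℬ) (hm : m ≠ 0) {T : Finset α → Finset α}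
    (hgood : ∀ A ∈ 𝒜, ∀ x ∈ K A, (K A).erase x = T (A.erase x)) {θ : ℝ} (hθ0 : 0 ≤ θ)
    {S : Finset α} (hstar : (m ! : ℝ) * #{B ∈ ℬ | S ⊆ B} ≤ θ ^ m) :
    (m + 1 : ℝ) * #{A ∈ 𝒜 | A \ K A = S} ≤ θ * #{B ∈ ℬ | B \ T B = S} := by
  have hinj : Set.InjOn K ({A ∈ 𝒜 | A \ K A = S} : Finset (Finset α)) := by
    intro A hA A' hA' hK
    obtain ⟨⟨hA, hAS⟩, hA', hAS'⟩ := mem_filter.1 hA, mem_filter.1 hA'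
    rw [← sdiff_union_of_subset (h.subset A hA), ← sdiff_union_of_subset (h.subset A' hA'),
      hAS, hAS', hK]
  have hsized : (({A ∈ 𝒜 | A \ K A = S}.image K : Finset _) : Set (Finset α)).Sized (m + 1) := by
    intro G hG
    obtain ⟨A, hA, rfl⟩ := mem_image.1 hG
    exact h.card_eq A (mem_filter.1 hA).1
  have hshadow : #(∂ ({A ∈ 𝒜 | A \ K A = S}.image K)) ≤ #{B ∈ ℬ | B \ T B = S} :=
    (card_le_card (h.shadow_image_subset hgood S)).trans card_image_le
  have hfiber_star : #{B ∈ ℬ | B \ T B = S} ≤ #{B ∈ ℬ | S ⊆ B} :=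
    card_le_card <| monotone_filter_right _ fun B _ (hB : B \ T B = S) => hB ▸ sdiff_subset
  have hshadow_star : (m ! : ℝ) * #(∂ ({A ∈ 𝒜 | A \ K A = S}.image K)) ≤ θ ^ m :=
    (mul_le_mul_of_nonneg_left (mod_cast hshadow.trans hfiber_star) (by positivity)).trans hstar
  rw [← card_image_of_injOn hinj]
  exact (mul_card_le_mul_card_shadow hm hsized hθ0 hshadow_star).trans
    (mul_le_mul_of_nonneg_left (mod_cast hshadow) hθ0)

lemma mul_card_le_of_good (h : IsMarking n m K 𝒜 ℬ) (hm : m ≠ 0) {T : Finset α → Finset α}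
    (hgood : ∀ A ∈ 𝒜, ∀ x ∈ K A, (K A).erase x = T (A.erase x)) {θ : ℝ} (hθ0 : 0 ≤ θ)
    (hstar : ∀ S : Finset α, #S = n - m → (m ! : ℝ) * #{B ∈ ℬ | S ⊆ B} ≤ θ ^ m) :
    (m + 1 : ℝ) * #𝒜 ≤ θ * #ℬ := by
  have hcard_unmarked : ∀ S ∈ 𝒜.image fun A => A \ K A, #S = n - m := by
    refine forall_mem_image.2 fun A hA => ?_
    rw [card_sdiff_of_subset (h.subset A hA), h.sized_left hA, h.card_eq A hA,
      Nat.add_sub_add_right]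
  calc (m + 1 : ℝ) * #𝒜
      = ∑ S ∈ 𝒜.image fun A => A \ K A, (m + 1 : ℝ) * #{A ∈ 𝒜 | A \ K A = S} := by
        rw [card_eq_sum_card_image (fun A => A \ K A) 𝒜, Nat.cast_sum, mul_sum]
    _ ≤ ∑ S ∈ 𝒜.image fun A => A \ K A, θ * #{B ∈ ℬ | B \ T B = S} :=
        sum_le_sum fun S hS => h.mul_card_fiber_le hm hgood hθ0 <| hstar S (hcard_unmarked S hS)
    _ ≤ θ * #ℬ := by
        rw [← mul_sum, ← Nat.cast_sum, sum_card_fiberwise_eq_card_filter]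
        gcongr
        exact filter_subset _ _

theorem card_le_of_star_le (h : IsMarking n m K 𝒜 ℬ) (hm : m ≠ 0) (hmn : m ≤ n) {d θ : ℝ}
    (hd : m < d) (hθ0 : 0 ≤ θ)
    (hstar : ∀ S : Finset α, #S = n - m → (m ! : ℝ) * #{B ∈ ℬ | S ⊆ B} ≤ θ ^ m) :
    (#𝒜 : ℝ) ≤ (d + θ / (m + 1)) * #ℬ +
      ((m + 1) ^ 2 + m) * (#ℬ : ℝ) ^ 2 / ((d - m) / (m + 1) ^ 2) ^ m := by
  obtain ⟨𝒜', -, ℬ', hℬ', h', hdeg, hclean⟩ := h.exists_le_card_extensions d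
  obtain ⟨T, hT, hbad⟩ := h'.exists_mul_sum_card_badExtensions_le hmn fun B hB =>
    h'.pow_le_card_distSphere hd.le hdeg hB le_rfl
  have hd0 : 0 ≤ d := m.cast_nonneg.trans hd.le
  have hcardℬ : (#ℬ' : ℝ) ≤ #ℬ := mod_cast card_le_card hℬ'
  have hgood := (h'.mono_left (filter_subset _ _)).mul_card_le_of_good (T := T) hm
    (fun A hA => (mem_filter.1 hA).2) hθ0 fun S hS => le_trans (by gcongr) (hstar S hS)
  rw [mul_comm, ← le_div_iff₀ (by positivity), mul_div_right_comm] at hgood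
  have hpos : 0 < ((d - m) / ((m : ℝ) + 1) ^ 2) ^ m := by
    have := sub_pos.2 hd
    positivity
  rw [mul_comm, ← le_div_iff₀ hpos] at hbad
  have hsplit : (#𝒜' : ℝ) ≤ #{A ∈ 𝒜' | ∀ x ∈ K A, (K A).erase x = T (A.erase x)} +
      ∑ B ∈ ℬ', (#(badExtensions K 𝒜' B (T B)) : ℝ) :=
    mod_cast h'.card_le_add_sum_card_badExtensions hT
  calc (#𝒜 : ℝ) ≤ d * #ℬ + #𝒜' := by linarith [mul_nonneg hd0 (#ℬ').cast_nonneg (α := ℝ)]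
    _ ≤ d * #ℬ + (θ / (m + 1) * #ℬ' +
          ((m + 1) ^ 2 + m) * (#ℬ' : ℝ) ^ 2 / ((d - m) / (m + 1) ^ 2) ^ m) := by
        linarith
    _ ≤ d * #ℬ + (θ / (m + 1) * #ℬ +
          ((m + 1) ^ 2 + m) * (#ℬ : ℝ) ^ 2 / ((d - m) / (m + 1) ^ 2) ^ m) := by
        gcongr
    _ = _ := by ring

/-- The degree threshold `d = γ * t` makes the error term of `card_le_of_star_le` linear in
`#ℬ`. -/
lemma card_le_mul_pow (h : IsMarking n m K 𝒜 ℬ) (hm : m ≠ 0) (hmn : m ≤ n) {γ t θ : ℝ}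
    (hγ : 0 < γ) (ht : 2 * m < γ * t) (hθ0 : 0 ≤ θ) (hℬ : (#ℬ : ℝ) = t ^ m)
    (hstar : ∀ S : Finset α, #S = n - m → (m ! : ℝ) * #{B ∈ ℬ | S ⊆ B} ≤ θ ^ m) :
    (#𝒜 : ℝ) ≤
      (γ * t + θ / (m + 1) + ((m + 1) ^ 2 + m) * (2 * (m + 1) ^ 2 / γ) ^ m) * t ^ m := by
  have hm0 : (0 : ℝ) ≤ m := m.cast_nonneg
  have ht0 : 0 < t := pos_of_mul_pos_right (by linarith [hm0]) hγ.le
  refine (h.card_le_of_star_le (d := γ * t) hm hmn (by linarith) hθ0 hstar).trans ?_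
  rw [hℬ, add_mul (γ * t + θ / (m + 1))]
  gcongr
  calc ((m + 1) ^ 2 + m) * (t ^ m) ^ 2 / ((γ * t - m) / (m + 1) ^ 2) ^ m
      ≤ ((m + 1) ^ 2 + m) * (t ^ m) ^ 2 / (γ * t / 2 / (m + 1) ^ 2) ^ m := by
        gcongr
        linarith
    _ = ((m + 1) ^ 2 + m) * (2 * (m + 1) ^ 2 / γ) ^ m * t ^ m := by
        simp only [div_pow, mul_pow]
        field_simp

theorem exists_card_lt_mul_pow {q ρ : ℝ} (hm : m ≠ 0) (hq : 0 < q) (hqm : q ^ m = m !)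
    (hρ0 : 0 ≤ ρ) (hρ1 : ρ < 1) :
    ∃ η > 0, ∃ t₀ : ℝ, ∀ t ≥ t₀, ∀ (n : ℕ) (K : Finset α → Finset α) (𝒜 ℬ : Finset (Finset α)),
      m ≤ n → IsMarking n m K 𝒜 ℬ → (#ℬ : ℝ) = t ^ m →
      (∀ S : Finset α, #S = n - m → (#{B ∈ ℬ | S ⊆ B} : ℝ) ≤ (ρ * t) ^ m) →
      (#𝒜 : ℝ) < (q / (m + 1) - η) * t ^ (m + 1) := by
  have : 0 < 1 - ρ := sub_pos.2 hρ1
  set η : ℝ := q * (1 - ρ) / (4 * (m + 1)) with hη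
  set c : ℝ := ((m + 1) ^ 2 + m) * (2 * (m + 1) ^ 2 / η) ^ m
  have hη0 : 0 < η := by positivity
  have hc0 : 0 ≤ c := by positivity
  refine ⟨η, hη0, 2 * m / η + c / η + 1, fun t ht n K 𝒜 ℬ hmn h hℬ hstar => ?_⟩
  have htm : 2 * m / η < t := by linarith [div_nonneg hc0 hη0.le]
  have htc : c / η < t := by linarith [div_nonneg (by positivity : (0 : ℝ) ≤ 2 * m) hη0.le]
  have ht0 : 0 < t := (div_nonneg hc0 hη0.le).trans_lt htc
  rw [div_lt_iff₀' hη0] at htm htc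
  have hmain := h.card_le_mul_pow (θ := q * (ρ * t)) hm hmn hη0 htm (by positivity) hℬ
    fun S hS => by
      rw [mul_pow, hqm]
      gcongr
      exact hstar S hS
  have hsplit : q / (m + 1) = q * ρ / (m + 1) + 4 * η := by
    rw [hη]
    field_simp
    ring
  calc (#𝒜 : ℝ) ≤ (η * t + q * (ρ * t) / (m + 1) + c) * t ^ m := hmain
    _ < (η * t + q * (ρ * t) / (m + 1) + η * t + η * t) * t ^ m :=
        mul_lt_mul_of_pos_right (by linarith [mul_pos hη0 ht0]) (pow_pos ht0 m)
    _ = (q / (m + 1) - η) * t ^ (m + 1) := by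
        rw [hsplit]
        ring

end IsMarking

lemma eventually_mul_log_le_mul_rpow (C : ℝ) {η p : ℝ} (hη : 0 < η) (hp : 1 < p) :
    ∀ᶠ b : ℕ in atTop, C * b * Real.log b ≤ η * (b : ℝ) ^ p := by
  have hlog : (fun x => C * Real.log x) =o[atTop] fun x : ℝ => x ^ (p - 1) :=
    (isLittleO_log_rpow_atTop (sub_pos.2 hp)).const_mul_left C
  filter_upwards [tendsto_natCast_atTop_atTop.eventually (hlog.bound hη), eventually_gt_atTop 0]
    with b hb hb0
  have hb0' : (0 : ℝ) < b := Nat.cast_pos.2 hb0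
  rw [Real.norm_of_nonneg (by positivity : 0 ≤ (b : ℝ) ^ (p - 1))] at hb
  calc C * b * Real.log b = b * (C * Real.log b) := by ring
    _ ≤ b * (η * (b : ℝ) ^ (p - 1)) :=
        mul_le_mul_of_nonneg_left ((Real.le_norm_self _).trans hb) hb0'.le
    _ = η * (b : ℝ) ^ p := by
        rw [Real.rpow_sub_one hb0'.ne']
        field_simp

theorem stmt_13_general (k : ℕ) (hk : 2 ≤ k) (ε : ℝ) (hε : 0 < ε) :
    ∃ η > 0, ∃ b₀ : ℕ, ∀ r : ℕ, k ≤ r → ∀ 𝒜 ℬ : Finset (Finset α),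
      (𝒜 : Set (Finset α)).Sized r → (ℬ : Set (Finset α)).Sized (r - 1) →
      (∀ A ∈ 𝒜, k ≤ #{B ∈ ℬ | B ⊆ A}) → b₀ ≤ #ℬ →
      (((k - 1)! : ℝ) ^ (1 / ((k : ℝ) - 1)) / k - η) * (#ℬ : ℝ) ^ ((k : ℝ) / ((k : ℝ) - 1)) ≤ #𝒜 →
      ∃ S : Finset α, #S = r - k ∧ (1 - ε) * #ℬ ≤ (#{B ∈ ℬ | S ⊆ B} : ℝ) := by
  obtain ⟨m, rfl⟩ : ∃ m, k = m + 1 := ⟨k - 1, by omega⟩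
  have hm : m ≠ 0 := by omega
  have hroot {x : ℝ} (hx : 0 ≤ x) : (x ^ (1 / (m : ℝ))) ^ m = x := by
    rw [one_div, Real.rpow_inv_natCast_pow hx hm]
  simp only [Nat.add_sub_cancel, Nat.cast_add, Nat.cast_one, add_sub_cancel_right]
  set ρ : ℝ := (max 0 (1 - ε)) ^ (1 / (m : ℝ))
  have hρm : ρ ^ m = max 0 (1 - ε) := hroot (le_max_left _ _)
  have hρ1 : ρ < 1 := lt_of_pow_lt_pow_left₀ m zero_le_one <| by
    rw [hρm, one_pow]
    exact max_lt one_pos (by linarith)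
  obtain ⟨η, hη, t₀, hlt⟩ := IsMarking.exists_card_lt_mul_pow (α := α) hm
    (by positivity) (hroot m !.cast_nonneg) (by positivity : 0 ≤ ρ) hρ1
  obtain ⟨b₀, hb₀⟩ := eventually_atTop.1 <| ((tendsto_rpow_atTop
    (by positivity : 0 < 1 / (m : ℝ))).comp tendsto_natCast_atTop_atTop).eventually_ge_atTop t₀
  refine ⟨η, hη, b₀, fun r hr 𝒜 ℬ h𝒜 hℬ hvalid hb hcard => ?_⟩
  obtain ⟨n, rfl⟩ : ∃ n, r = n + 1 := ⟨r - 1, by omega⟩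
  obtain ⟨K, hK⟩ := exists_isMarking h𝒜 hℬ hvalid
  by_contra! hstar
  refine (hlt _ (hb₀ _ hb) n K 𝒜 ℬ (by omega) hK (hroot (#ℬ).cast_nonneg).symm
    fun S hS => ?_).not_ge ?_
  · rw [mul_pow, hρm, Function.comp_apply, hroot (#ℬ).cast_nonneg]
    refine (hstar S (by omega)).le.trans ?_
    gcongr
    exact le_max_right _ _
  · have hpow : ((#ℬ : ℝ) ^ (1 / (m : ℝ))) ^ (m + 1) = (#ℬ : ℝ) ^ (((m : ℝ) + 1) / m) := by
      rw [← Real.rpow_mul_natCast (#ℬ).cast_nonneg, Nat.cast_succ, one_div_mul_eq_div]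
    rwa [Function.comp_apply, hpow]

theorem stmt_13 (k : ℕ) (hk : 2 ≤ k) (C ε : ℝ) (hC : 0 < C) (hε : 0 < ε) :
    ∃ b₀ : ℕ, ∀ r : ℕ, k ≤ r → ∀ 𝒜 ℬ : Finset (Finset ℕ),
      ValidPair r k 𝒜 ℬ → b₀ ≤ ℬ.card →
      (ℬ.card : ℝ) ^ ((k : ℝ) / ((k : ℝ) - 1)) *
            (((k - 1).factorial : ℝ)) ^ (1 / ((k : ℝ) - 1)) / k -
          C * ℬ.card * Real.log ℬ.card ≤ (𝒜.card : ℝ) →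
      ∃ S : Finset ℕ, S.card = r - k ∧
        (1 - ε) * ℬ.card ≤ ((ℬ.filter (fun B => S ⊆ B)).card : ℝ) := by
  obtain ⟨η, hη, b₀, hstable⟩ := stmt_13_general (α := ℕ) k hk ε hε
  have hk' : (1 : ℝ) < k := by exact_mod_cast hk
  obtain ⟨b₁, hlog⟩ := eventually_atTop.1 <| eventually_mul_log_le_mul_rpow C hη <|
    (one_lt_div (sub_pos.2 hk')).2 (sub_one_lt (k : ℝ))
  refine ⟨max b₀ b₁, fun r hr 𝒜 ℬ ⟨h𝒜, hℬ, hvalid⟩ hb hcard =>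
    hstable r hr 𝒜 ℬ h𝒜 hℬ hvalid (le_of_max_le_left hb) ?_⟩
  rw [sub_mul, div_mul_eq_mul_div, mul_comm (((k - 1).factorial : ℝ) ^ _)]
  linarith [hlog _ (le_of_max_le_right hb)]
end
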